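/- Let Δ ≥ 3 be an integer and δ ∈ (0,1). Let (β,γ,λ) be reals with 0 ≤ β ≤ γ, γ > 0, βγ < 1 and λ > 0 (an antiferromagnetic 2-spin system), and suppose (β,γ,λ) is up-to-Δ unique with gap δ, i.e., for every integer 1 ≤ d < Δ and every R > 0 satisfying f_d(R) = R, where f_d(R) = λ·((βR+1)/(R+γ))^d, one has |f_d'(R)| < 1−δ. Then there exists a constant C = C(Δ,δ,β,γ,λ) such that for every finite simple graph G = (V,E) with n = |V| ≥ 2 vertices and maximum degree at most Δ, the Glauber dynamics for the Gibbs distribution of the 2-spin system on G — the distribution μ on σ : V → {0,1} with μ(σ) ∝ β^{m₁(σ)}·γ^{m₀(σ)}·λ^{n₁(σ)}, where m_s(σ) is the number of edges both of whose endpoints have spin s and n₁(σ) is the number of vertices with spin 1 — has mixing time T_mix(P_GL, 1/4) ≤ C·n·log n. -/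

import Mathlib

/-!
# Optimal mixing of antiferromagnetic two-spin systems up to tree uniqueness

The relative entropy with respect to the Gibbs distribution `q` shrinks by a factor `1 - 1/(Cn)` in
each step of the Glauber dynamics as soon as entropy tensorises approximately, i.e. the entropy of
every `p` is at most `C` times the sum over `v` of the entropy lost by forgetting the spin at `v`
(`mixing_of_tensor`). A point mass in the support has entropy `O(n)`, so Pinsker's inequality gives
mixing time `O(n log n)`.

**Tensorisation.** Let `kl p q S` be the relative entropy of the marginals on `S`. Spectral
independence together with marginal lower bounds controls the mixed second differences of
`S ↦ kl p q S` from below (`second_diff_sum`). Integrating this along random sets of growing density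
shows that forgetting a random `θ`-fraction of the vertices loses a constant fraction of the entropy
(`local_to_global`). For `θ` small compared with the maximum degree, the forgotten set splits into
small connected pieces which do not interact (`gap_le_conn`), and a connected set of size `k` occurs
with probability `θ ^ k`, against at most `Δ ^ (2 * k)` such sets at a vertex (`conn_count`). Hence even
the bound `gap_crude`, exponential in the size of the piece, suffices (`block_to_single`,
`approx_tensor`).

**Spectral independence.** It is enough to bound the total covariance `∑ u, |cov w r u|` of each
vertex `r` (`si_of_cov`). Deleting `r` turns its spin into pins at its neighbours, and the effect of
switching the pins one neighbour at a time telescopes (`rec_step`). With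
`h(x) = |d log F / d log x|`, `F(x) = (βx+1)/(x+γ)`, this recursion contracts in the potential whose
derivative is `√h`, provided `h(λ ∏ z) (∑ √H(z))² ≤ κ < 1` for all tuples of fewer than `Δ` messages
`z`, where `H(F(x)) = h(x)` (`Contr`, `good_all`, `full_root`).

**Contraction from uniqueness.** `H` is concave in `log z`, so all `d` messages may be taken equal
(`contr_step`), and it remains to bound `d² h(λ z^d) H(z)`. At an interior maximiser `z = F(x)` with
`f = λ z^d`, the fixed point `x̂` of `f_d` separates `x` from `f`, and the first-order condition together
with `d h(x̂) = |f_d'(x̂)| < 1` (`deriv_fix`) makes the value smaller than `1` (`crit_lt`, `alph_lt`).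
-/

open Finset

noncomputable section

variable {S : Type} [Fintype S] [DecidableEq S]

/-- Total variation distance between two (densities of) distributions on a finite set. -/
def tvDist (p μ : S → ℝ) : ℝ := (1 / 2) * ∑ x, |p x - μ x|

/-- Mixing time of a Markov chain with transition matrix `P` and stationary
distribution `μ`: the maximum over starting states `x` in the support of `μ` of the first
time `t` at which the distribution `P^t(x,·)` is within total variation distance `ε`
of `μ`. -/
def mixingTime (μ : S → ℝ) (P : Matrix S S ℝ) (ε : ℝ) : ℕ :=
  (@Finset.filter S (fun x => 0 < μ x) (Classical.decPred _) Finset.univ).sup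
    fun x => sInf {t : ℕ | tvDist (fun y => (P ^ t) x y) μ ≤ ε}

variable {V : Type} [Fintype V] [DecidableEq V]

/-- Glauber dynamics transition matrix for a distribution `μ` on `V → q`:
pick a uniformly random vertex `v`, keep the configuration off `v`, and resample the spin at
`v` from the conditional distribution of `μ` at `v` given the configuration off `v`. -/
def glauberMatrix {q : Type} [Fintype q] [DecidableEq q] (μ : (V → q) → ℝ) :
    Matrix (V → q) (V → q) ℝ :=
  Matrix.of fun σ σ' =>
    (Fintype.card V : ℝ)⁻¹ *
      ∑ v : V, if ∀ u, u ≠ v → σ' u = σ u then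
        μ σ' / ∑ j : q, μ (Function.update σ v j) else 0

/-- Number of edges of `G` both of whose endpoints receive spin `s` under `σ`
(each unordered edge is counted twice as an ordered pair, whence the division by `2`). -/
def monoEdges (G : SimpleGraph V) [DecidableRel G.Adj] (σ : V → Bool) (s : Bool) : ℕ :=
  (Finset.univ.filter fun p : V × V => G.Adj p.1 p.2 ∧ σ p.1 = s ∧ σ p.2 = s).card / 2

/-- Number of vertices receiving spin `1` (`true`). -/
def numOnes (σ : V → Bool) : ℕ := (Finset.univ.filter fun v => σ v = true).card

/-- Weight of a configuration in the `(β,γ,λ)` two-spin system: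
`β^{m₁(σ)}·γ^{m₀(σ)}·λ^{n₁(σ)}`. -/
def twoSpinWeight (G : SimpleGraph V) [DecidableRel G.Adj] (β γ lam : ℝ)
    (σ : V → Bool) : ℝ :=
  β ^ monoEdges G σ true * γ ^ monoEdges G σ false * lam ^ numOnes σ

/-- Gibbs distribution of the `(β,γ,λ)` two-spin system on `G`. -/
def twoSpinGibbs (G : SimpleGraph V) [DecidableRel G.Adj] (β γ lam : ℝ)
    (σ : V → Bool) : ℝ :=
  twoSpinWeight G β γ lam σ / ∑ σ' : V → Bool, twoSpinWeight G β γ lam σ'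

end

/-! ### Marginals and relative entropy -/

namespace TwoSpin

set_option linter.unusedSectionVars false

variable {V : Type} [Fintype V] [DecidableEq V]

/-- Marginal of the weight `p` on the coordinates in `S`, as a function of full configurations. -/
noncomputable def mg (p : (V → Bool) → ℝ) (S : Finset V) (σ : V → Bool) : ℝ :=
  ∑ σ', if ∀ u ∈ S, σ' u = σ u then p σ' else 0

/-- Density of the marginal of `p` on `S` with respect to that of `q`; it takes the junk value `0`
where the marginal of `q` vanishes. -/
noncomputable def dn (p q : (V → Bool) → ℝ) (S : Finset V) (σ : V → Bool) : ℝ :=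
  mg p S σ / mg q S σ

/-- Relative entropy of the marginal of `p` on `S` with respect to the marginal of `q` on `S`. -/
noncomputable def kl (p q : (V → Bool) → ℝ) (S : Finset V) : ℝ :=
  ∑ σ, p σ * Real.log (dn p q S σ)

/-- `X` depends only on the coordinates in `S`. -/
def Meas (S : Finset V) (X : (V → Bool) → ℝ) : Prop :=
  ∀ σ τ : V → Bool, (∀ u ∈ S, σ u = τ u) → X σ = X τ

lemma Meas.mono {S T : Finset V} {X : (V → Bool) → ℝ} (h : Meas S X) (hST : S ⊆ T) : Meas T X :=
  fun σ τ hs => h σ τ fun u hu => hs u (hST hu)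

lemma Meas.mul {S : Finset V} {X Y : (V → Bool) → ℝ} (h : Meas S X) (h' : Meas S Y) :
    Meas S (fun σ => X σ * Y σ) := fun σ τ hs => by
  simp only [h σ τ hs, h' σ τ hs]

lemma Meas.div {S : Finset V} {X Y : (V → Bool) → ℝ} (h : Meas S X) (h' : Meas S Y) :
    Meas S (fun σ => X σ / Y σ) := fun σ τ hs => by
  simp only [h σ τ hs, h' σ τ hs]

lemma mg_meas (p : (V → Bool) → ℝ) (S : Finset V) : Meas S (mg p S) := by
  intro σ τ h
  unfold mg
  refine Finset.sum_congr rfl fun σ' _ => ?_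
  have : (∀ u ∈ S, σ' u = σ u) ↔ (∀ u ∈ S, σ' u = τ u) :=
    forall₂_congr fun u hu => by rw [h u hu]
  simp only [this]

lemma dn_meas (p q : (V → Bool) → ℝ) (S : Finset V) : Meas S (dn p q S) :=
  (mg_meas p S).div (mg_meas q S)

lemma mg_univ (p : (V → Bool) → ℝ) (σ : V → Bool) : mg p univ σ = p σ := by
  unfold mg
  have : ∀ σ' : V → Bool, (∀ u ∈ (univ : Finset V), σ' u = σ u) ↔ σ' = σ :=
    fun σ' => by simp [funext_iff]
  simp only [this]
  simp

lemma mg_empty (p : (V → Bool) → ℝ) (σ : V → Bool) : mg p ∅ σ = ∑ σ', p σ' := by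
  simp [mg]

lemma mg_nonneg {p : (V → Bool) → ℝ} (hp : ∀ σ, 0 ≤ p σ) (S : Finset V) (σ : V → Bool) :
    0 ≤ mg p S σ :=
  Finset.sum_nonneg fun σ' _ => by split_ifs <;> simp [hp]

lemma mg_anti {p : (V → Bool) → ℝ} (hp : ∀ σ, 0 ≤ p σ) {S T : Finset V} (h : S ⊆ T)
    (σ : V → Bool) : mg p T σ ≤ mg p S σ := by
  refine Finset.sum_le_sum fun σ' _ => ?_
  split_ifs with h1 h2 h2
  · exact le_rfl
  · exact absurd (fun u hu => h1 u (h hu)) h2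
  · exact hp _
  · exact le_rfl

lemma le_mg {p : (V → Bool) → ℝ} (hp : ∀ σ, 0 ≤ p σ) (S : Finset V) (σ : V → Bool) :
    p σ ≤ mg p S σ := by
  rw [← mg_univ p σ]; exact mg_anti hp (subset_univ _) σ

lemma dn_nonneg {p q : (V → Bool) → ℝ} (hp : ∀ σ, 0 ≤ p σ) (hq : ∀ σ, 0 ≤ q σ)
    (S : Finset V) (σ : V → Bool) : 0 ≤ dn p q S σ :=
  div_nonneg (mg_nonneg hp S σ) (mg_nonneg hq S σ)

/-- Averaging over the fibres of the restriction to `S` is self-adjoint. -/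
lemma sum_mul_mg (p X : (V → Bool) → ℝ) (S : Finset V) :
    ∑ σ, p σ * mg X S σ = ∑ σ, mg p S σ * X σ := by
  simp only [mg, Finset.mul_sum, Finset.sum_mul]
  rw [Finset.sum_comm]
  refine Finset.sum_congr rfl fun σ _ => Finset.sum_congr rfl fun τ _ => ?_
  have : (∀ u ∈ S, σ u = τ u) ↔ (∀ u ∈ S, τ u = σ u) :=
    forall₂_congr fun u _ => eq_comm
  simp only [this]
  split_ifs <;> simp

lemma mg_mul_meas (p : (V → Bool) → ℝ) {X : (V → Bool) → ℝ} {S : Finset V} (hX : Meas S X)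
    (σ : V → Bool) : mg (fun σ => p σ * X σ) S σ = mg p S σ * X σ := by
  simp only [mg, Finset.sum_mul]
  refine Finset.sum_congr rfl fun τ _ => ?_
  split_ifs with h
  · rw [hX τ σ h]
  · simp

/-- Change of measure for observables that depend only on the coordinates in `S`. -/
lemma sum_meas {p q : (V → Bool) → ℝ} (hq : ∀ σ, 0 ≤ q σ)
    (hac : ∀ σ, q σ = 0 → p σ = 0) {S : Finset V} {X : (V → Bool) → ℝ} (hX : Meas S X) :
    ∑ σ, p σ * X σ = ∑ σ, q σ * (dn p q S σ * X σ) := by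
  have hY : Meas S (fun σ => X σ / mg q S σ) := hX.div (mg_meas q S)
  have h1 : ∑ σ, q σ * (dn p q S σ * X σ)
      = ∑ σ, (q σ * (X σ / mg q S σ)) * mg p S σ := by
    refine Finset.sum_congr rfl fun σ _ => ?_
    unfold dn; ring
  rw [h1, sum_mul_mg]
  refine Finset.sum_congr rfl fun σ _ => ?_
  rw [mg_mul_meas q hY]
  by_cases h : mg q S σ = 0
  · have : q σ = 0 := le_antisymm (h ▸ le_mg hq S σ) (hq σ)
    rw [hac σ this]; simp
  · field_simp

lemma mg_dn {p q : (V → Bool) → ℝ} (hq : ∀ σ, 0 ≤ q σ)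
    (hac : ∀ σ, q σ = 0 → p σ = 0) {S T : Finset V} (hST : S ⊆ T) (σ₀ : V → Bool) :
    mg (fun σ => q σ * dn p q T σ) S σ₀ = mg p S σ₀ := by
  have hX : Meas T (fun σ : V → Bool => if ∀ u ∈ S, σ u = σ₀ u then (1 : ℝ) else 0) := by
    intro σ τ h
    have : (∀ u ∈ S, σ u = σ₀ u) ↔ (∀ u ∈ S, τ u = σ₀ u) :=
      forall₂_congr fun u hu => by rw [h u (hST hu)]
    simp only [this]
  have := sum_meas hq hac hX
  unfold mg
  convert this.symm using 2 <;> (split_ifs <;> simp [dn])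
  
lemma sum_dn {p q : (V → Bool) → ℝ} (hq : ∀ σ, 0 ≤ q σ)
    (hac : ∀ σ, q σ = 0 → p σ = 0) (T : Finset V) :
    ∑ σ, q σ * dn p q T σ = ∑ σ, p σ := by
  have := mg_dn hq hac (empty_subset T) (fun _ => true)
  simpa [mg_empty] using this

/-- `p` is a probability vector that is absolutely continuous with respect to the probability
vector `q`. -/
structure AC (p q : (V → Bool) → ℝ) : Prop where
  p0 : ∀ σ, 0 ≤ p σ
  q0 : ∀ σ, 0 ≤ q σ
  p1 : ∑ σ, p σ = 1
  q1 : ∑ σ, q σ = 1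
  ac : ∀ σ, q σ = 0 → p σ = 0

lemma AC.qpos {p q : (V → Bool) → ℝ} (h : AC p q) {σ : V → Bool} (hσ : p σ ≠ 0) : 0 < q σ :=
  lt_of_le_of_ne (h.q0 σ) fun h0 => hσ (h.ac σ h0.symm)

lemma AC.dn_pos {p q : (V → Bool) → ℝ} (h : AC p q) {σ : V → Bool} (hσ : p σ ≠ 0)
    (S : Finset V) : 0 < dn p q S σ :=
  div_pos (lt_of_lt_of_le (lt_of_le_of_ne (h.p0 σ) hσ.symm) (le_mg h.p0 S σ))
    (lt_of_lt_of_le (h.qpos hσ) (le_mg h.q0 S σ))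

/-- If the coarse density vanishes, so does every finer one. -/
lemma AC.dn_zero {p q : (V → Bool) → ℝ} (h : AC p q) {S T : Finset V} (hST : S ⊆ T)
    {σ : V → Bool} (hσ : dn p q S σ = 0) : dn p q T σ = 0 := by
  unfold dn at *
  rcases div_eq_zero_iff.1 hσ with h1 | h1
  · rw [le_antisymm (h1 ▸ mg_anti h.p0 hST σ) (mg_nonneg h.p0 T σ)]; simp
  · rw [le_antisymm (h1 ▸ mg_anti h.q0 hST σ) (mg_nonneg h.q0 T σ)]; simp

lemma kl_empty {p q : (V → Bool) → ℝ} (h : AC p q) : kl p q ∅ = 0 := by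
  simp [kl, dn, mg_empty, h.p1, h.q1]

lemma kl_mono {p q : (V → Bool) → ℝ} (h : AC p q) {S T : Finset V} (hST : S ⊆ T) :
    kl p q S ≤ kl p q T := by
  have key : ∀ σ, p σ - p σ * (dn p q S σ / dn p q T σ) ≤
      p σ * Real.log (dn p q T σ) - p σ * Real.log (dn p q S σ) := by
    intro σ
    by_cases hσ : p σ = 0
    · simp [hσ]
    have h1 := h.dn_pos hσ S
    have h2 := h.dn_pos hσ T
    have h3 := Real.one_sub_inv_le_log_of_pos (div_pos h2 h1)
    rw [Real.log_div h2.ne' h1.ne', inv_div] at h3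
    nlinarith [h.p0 σ, mul_le_mul_of_nonneg_left h3 (h.p0 σ)]
  have hX : Meas T (fun σ => dn p q S σ / dn p q T σ) :=
    ((dn_meas p q S).mono hST).div (dn_meas p q T)
  have h2 : ∑ σ, p σ * (dn p q S σ / dn p q T σ) ≤ 1 := by
    rw [sum_meas h.q0 h.ac hX, ← h.p1, ← sum_dn h.q0 h.ac S]
    refine Finset.sum_le_sum fun σ _ => mul_le_mul_of_nonneg_left ?_ (h.q0 σ)
    by_cases h0 : dn p q T σ = 0
    · rw [h0]; simp [dn_nonneg h.p0 h.q0]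
    · exact le_of_eq (by field_simp)
  have := Finset.sum_le_sum fun σ (_ : σ ∈ univ) => key σ
  rw [Finset.sum_sub_distrib, Finset.sum_sub_distrib, h.p1] at this
  unfold kl; linarith

/-- Lower bound for the mixed second difference of the marginal entropies. -/
lemma kl_second_diff {p q : (V → Bool) → ℝ} (h : AC p q) {S T₁ T₂ T : Finset V}
    (h1 : T₁ ⊆ T) (h2 : T₂ ⊆ T) (hS : S ⊆ T) :
    1 - ∑ σ, q σ * (dn p q T₁ σ * dn p q T₂ σ / dn p q S σ) ≤
      kl p q T - kl p q T₁ - kl p q T₂ + kl p q S := by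
  have key : ∀ σ, p σ - p σ * (dn p q T₁ σ * dn p q T₂ σ / dn p q S σ / dn p q T σ) ≤
      p σ * Real.log (dn p q T σ) - p σ * Real.log (dn p q T₁ σ) - p σ * Real.log (dn p q T₂ σ)
       + p σ * Real.log (dn p q S σ) := by
    intro σ
    by_cases hσ : p σ = 0
    · simp [hσ]
    have a1 := h.dn_pos hσ T₁
    have a2 := h.dn_pos hσ T₂
    have a3 := h.dn_pos hσ S
    have a4 := h.dn_pos hσ T
    have h3 := Real.one_sub_inv_le_log_of_pos
      (div_pos (mul_pos a4 a3) (mul_pos a1 a2))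
    rw [Real.log_div (by positivity) (by positivity), Real.log_mul a4.ne' a3.ne',
      Real.log_mul a1.ne' a2.ne', inv_div] at h3
    have h4 : dn p q T₁ σ * dn p q T₂ σ / dn p q S σ / dn p q T σ =
       dn p q T₁ σ * dn p q T₂ σ / (dn p q T σ * dn p q S σ) := by
      rw [div_div, mul_comm (dn p q S σ)]
    rw [h4]
    nlinarith [h.p0 σ, mul_le_mul_of_nonneg_left h3 (h.p0 σ)]
  have hX : Meas T (fun σ => dn p q T₁ σ * dn p q T₂ σ / dn p q S σ / dn p q T σ) :=
    ((((dn_meas p q T₁).mono h1).mul ((dn_meas p q T₂).mono h2)).div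
      ((dn_meas p q S).mono hS)).div (dn_meas p q T)
  have h2 : ∑ σ, p σ * (dn p q T₁ σ * dn p q T₂ σ / dn p q S σ / dn p q T σ) ≤
      ∑ σ, q σ * (dn p q T₁ σ * dn p q T₂ σ / dn p q S σ) := by
    rw [sum_meas h.q0 h.ac hX]
    refine Finset.sum_le_sum fun σ _ => mul_le_mul_of_nonneg_left ?_ (h.q0 σ)
    have hn := dn_nonneg h.p0 h.q0
    by_cases h0 : dn p q T σ = 0
    · rw [h0]; simp only [zero_mul]
      exact div_nonneg (mul_nonneg (hn _ _) (hn _ _)) (hn _ _)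
    · exact le_of_eq (by field_simp)
  have := Finset.sum_le_sum fun σ (_ : σ ∈ univ) => key σ
  rw [Finset.sum_add_distrib, Finset.sum_sub_distrib, Finset.sum_sub_distrib,
    Finset.sum_sub_distrib, h.p1] at this
  unfold kl; linarith

/-- Product formula for sums over two independent blocks of coordinates. -/
lemma mg_mul_mg {T₁ T₂ : Finset V} (hT : T₁ ∪ T₂ = univ) {a b : (V → Bool) → ℝ}
    (ha : Meas T₁ a) (hb : Meas T₂ b) (σ : V → Bool) :
    mg b T₁ σ * mg a T₂ σ = mg (fun σ => a σ * b σ) (T₁ ∩ T₂) σ := by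
  have hmem : ∀ u, u ∈ T₁ ∨ u ∈ T₂ := fun u => by
    rw [← mem_union, hT]; exact mem_univ u
  unfold mg
  simp only [← Finset.sum_filter]
  rw [Finset.sum_mul_sum, ← Finset.sum_product']
  refine Finset.sum_bij' (fun x _ => fun u => if u ∈ T₁ then x.2 u else x.1 u)
    (fun τ _ => (fun u => if u ∈ T₁ then σ u else τ u, fun u => if u ∈ T₂ then σ u else τ u))
    ?_ ?_ ?_ ?_ ?_
  · rintro ⟨x, y⟩ h
    simp only [mem_product, mem_filter, mem_univ, true_and] at h ⊢
    intro u hu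
    rw [mem_inter] at hu
    simp [hu.1, h.2 u hu.2]
  · intro τ h
    simp only [mem_product, mem_filter, mem_univ, true_and] at h ⊢
    exact ⟨fun u hu => by simp [hu], fun u hu => by simp [hu]⟩
  · rintro ⟨x, y⟩ h
    simp only [mem_product, mem_filter, mem_univ, true_and] at h ⊢
    ext u
    · by_cases hu : u ∈ T₁ <;> simp [hu, h.1]
    · by_cases hu : u ∈ T₂
      · simp [hu, h.2]
      · have := (hmem u).resolve_right hu
        simp [hu, this]
  · intro τ h
    simp only [mem_filter, mem_univ, true_and] at h
    ext u
    by_cases hu : u ∈ T₁ <;> by_cases hv : u ∈ T₂ <;> simp [hu, hv]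
    exact (h u (mem_inter.2 ⟨hu, hv⟩)).symm
  · rintro ⟨x, y⟩ h
    simp only [mem_product, mem_filter, mem_univ, true_and] at h ⊢
    rw [mul_comm]
    congr 1
    · exact ha _ _ fun u hu => by simp [hu]
    · refine hb _ _ fun u hu => ?_
      by_cases hv : u ∈ T₁
      · simp [hv, h.1 u hv, h.2 u hu]
      · simp [hv]

/-- Conditionally independent blocks: entropy is subadditive (tensorization). -/
lemma kl_tensor {p q : (V → Bool) → ℝ} (h : AC p q) {T₁ T₂ : Finset V} (hT : T₁ ∪ T₂ = univ)
    {a b : (V → Bool) → ℝ} (ha : Meas T₁ a) (hb : Meas T₂ b) (hab : ∀ σ, q σ = a σ * b σ) :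
    kl p q T₁ + kl p q T₂ ≤ kl p q univ + kl p q (T₁ ∩ T₂) := by
  set S := T₁ ∩ T₂ with hS
  have hS1 : S ⊆ T₁ := inter_subset_left
  have hS2 : S ⊆ T₂ := inter_subset_right
  have hD := kl_second_diff h (subset_univ T₁) (subset_univ T₂) (subset_univ S)
  suffices ∑ σ, q σ * (dn p q T₁ σ * dn p q T₂ σ / dn p q S σ) ≤ 1 by linarith
  set f₁ := dn p q T₁
  set f₂ := dn p q T₂
  have hf1 : Meas T₁ f₁ := dn_meas p q T₁
  have hf2 : Meas T₂ f₂ := dn_meas p q T₂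
  -- conditional independence of `f₁` and `f₂` given the coordinates in `S`
  have hci : ∀ σ, mg (fun σ => q σ * (f₁ σ * f₂ σ)) S σ * mg q S σ = mg p S σ * mg p S σ := by
    intro σ
    have e0 : mg q S σ = mg b T₁ σ * mg a T₂ σ := by
      rw [mg_mul_mg hT ha hb]; congr 1; funext σ; exact hab σ
    have e1 : mg p S σ = mg b T₁ σ * mg (fun σ => a σ * f₁ σ) T₂ σ := by
      rw [mg_mul_mg hT (ha.mul hf1) hb, ← mg_dn h.q0 h.ac hS1]
      congr 1; funext σ; rw [hab σ]; ring
    have e2 : mg p S σ = mg (fun σ => b σ * f₂ σ) T₁ σ * mg a T₂ σ := by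
      rw [mg_mul_mg hT ha (hb.mul hf2), ← mg_dn h.q0 h.ac hS2]
      congr 1; funext σ; rw [hab σ]; ring
    have e3 : mg (fun σ => q σ * (f₁ σ * f₂ σ)) S σ =
        mg (fun σ => b σ * f₂ σ) T₁ σ * mg (fun σ => a σ * f₁ σ) T₂ σ := by
      rw [mg_mul_mg hT (ha.mul hf1) (hb.mul hf2)]
      congr 1; funext σ; rw [hab σ]; ring
    calc _ = (mg (fun σ => b σ * f₂ σ) T₁ σ * mg a T₂ σ) *
          (mg b T₁ σ * mg (fun σ => a σ * f₁ σ) T₂ σ) := by rw [e3, e0]; ring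
      _ = _ := by rw [← e1, ← e2]
  have hac' : ∀ σ, q σ = 0 → q σ * (f₁ σ * f₂ σ) = 0 := fun σ h => by rw [h]; simp
  have hY : Meas S (fun σ => (dn p q S σ)⁻¹) := fun σ τ hs => by
    simp only [dn_meas p q S σ τ hs]
  have e : ∑ σ, q σ * (f₁ σ * f₂ σ / dn p q S σ) =
      ∑ σ, (q σ * (f₁ σ * f₂ σ)) * (dn p q S σ)⁻¹ :=
    Finset.sum_congr rfl fun σ _ => by rw [div_eq_mul_inv]; ring
  rw [e, sum_meas h.q0 hac' hY, ← h.p1, ← sum_dn h.q0 h.ac S]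
  refine Finset.sum_le_sum fun σ _ => mul_le_mul_of_nonneg_left ?_ (h.q0 σ)
  have hdn : dn (fun σ => q σ * (f₁ σ * f₂ σ)) q S σ = dn p q S σ * dn p q S σ := by
    unfold dn
    by_cases h0 : mg q S σ = 0
    · rw [h0]; simp
    · have := hci σ
      rw [div_mul_div_comm, div_eq_div_iff h0 (mul_ne_zero h0 h0), ← mul_assoc, this]
  rw [hdn]
  by_cases h0 : dn p q S σ = 0
  · rw [h0]; simp
  · exact le_of_eq (by field_simp)

end TwoSpin

/-! ### Spectral independence and second differences of entropy -/

namespace TwoSpin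
set_option linter.unusedSectionVars false
variable {V : Type} [Fintype V] [DecidableEq V]

/-- `η`-spectral independence under every pinning of a set `S` to `σ`: for single-site functions
with conditional mean zero, the off-diagonal part of the covariance form is at most `η` times its
diagonal. Both sides are left unnormalised, which makes pinnings of probability zero harmless. -/
def SI (q : (V → Bool) → ℝ) (η : ℝ) : Prop :=
  ∀ (S : Finset V) (σ : V → Bool) (x : V → Bool → ℝ),
    (∀ u ∉ S, mg (fun τ => q τ * x u (τ u)) S σ = 0) →
    ∑ u ∈ Sᶜ, ∑ v ∈ Sᶜ.erase u, mg (fun τ => q τ * (x u (τ u) * x v (τ v))) S σ ≤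
      η * ∑ u ∈ Sᶜ, mg (fun τ => q τ * (x u (τ u)) ^ 2) S σ

/-- Marginal boundedness: under any pinning, the conditional probability at `v` of a spin that can
occur is at least `b`. -/
def MB (q : (V → Bool) → ℝ) (b : ℝ) : Prop :=
  ∀ (S : Finset V) (v : V) (σ : V → Bool), 0 < q σ → b * mg q S σ ≤ mg q (insert v S) σ

lemma phi_ge (t : ℝ) (ht : 0 ≤ t) : (√t - 1) ^ 2 ≤ t * Real.log t - t + 1 := by
  rcases ht.eq_or_lt with rfl | h
  · simp
  have hs := Real.sqrt_pos.2 h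
  have h1 := Real.one_sub_inv_le_log_of_pos hs
  rw [Real.log_sqrt h.le] at h1
  have h2 : √t * √t = t := Real.mul_self_sqrt h.le
  have h3 : t * (√t)⁻¹ = √t := by
    nth_rewrite 1 [← h2]; field_simp
  nlinarith [mul_le_mul_of_nonneg_left h1 h.le]

lemma sq_le_phi {t B : ℝ} (ht : 0 ≤ t) (hB : 1 ≤ B) (h : t ≤ B) :
    (t - 1) ^ 2 ≤ 4 * B * (t * Real.log t - t + 1) := by
  have h1 := phi_ge t ht
  have h2 : (t - 1) ^ 2 = (√t - 1) ^ 2 * (√t + 1) ^ 2 := by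
    rw [← mul_pow]; congr 1
    have := Real.mul_self_sqrt ht
    linarith
  have h3 : (√t + 1) ^ 2 ≤ 4 * B := by
    have h4 : √t ≤ √B := Real.sqrt_le_sqrt h
    have h5 : 1 ≤ √B := Real.one_le_sqrt.2 hB
    have h6 := Real.mul_self_sqrt (zero_le_one.trans hB)
    have := Real.sqrt_nonneg t
    nlinarith
  rw [h2, mul_comm]
  exact mul_le_mul h3 h1 (sq_nonneg _) (by linarith)

/-- Entropy increments as integrals of a non-negative function against `q`. -/
lemma kl_diff_eq {p q : (V → Bool) → ℝ} (h : AC p q) {S T : Finset V} (hST : S ⊆ T) :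
    kl p q T - kl p q S = ∑ σ, q σ * (dn p q T σ * (Real.log (dn p q T σ) - Real.log (dn p q S σ))
      - dn p q T σ + dn p q S σ) := by
  have hX : Meas T (fun σ => Real.log (dn p q T σ) - Real.log (dn p q S σ)) := fun σ τ hs => by
    simp only [dn_meas p q T σ τ hs, (dn_meas p q S).mono hST σ τ hs]
  have h1 : kl p q T - kl p q S =
      ∑ σ, p σ * (Real.log (dn p q T σ) - Real.log (dn p q S σ)) := by
    unfold kl; rw [← Finset.sum_sub_distrib]
    exact Finset.sum_congr rfl fun σ _ => by ring
  rw [h1, sum_meas h.q0 h.ac hX]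
  have h2 := sum_dn h.q0 h.ac S
  have h3 := sum_dn h.q0 h.ac T
  have : ∀ σ, q σ * (dn p q T σ * (Real.log (dn p q T σ) - Real.log (dn p q S σ))
      - dn p q T σ + dn p q S σ) = q σ * (dn p q T σ * (Real.log (dn p q T σ)
      - Real.log (dn p q S σ))) - q σ * dn p q T σ + q σ * dn p q S σ := fun σ => by ring
  simp only [this]
  rw [Finset.sum_add_distrib, Finset.sum_sub_distrib, h2, h3]; ring

/-- The `χ²`-increment is controlled by the entropy increment, because marginal boundedness caps
the ratio of consecutive densities at `1 / b`. -/
lemma chi_le_kl {p q : (V → Bool) → ℝ} (h : AC p q) {b : ℝ} (hb : 0 < b) (hb1 : b ≤ 1)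
    (hMB : MB q b) (S : Finset V) (u : V) :
    ∑ σ, q σ * ((dn p q (insert u S) σ - dn p q S σ) ^ 2 / dn p q S σ) ≤
      4 / b * (kl p q (insert u S) - kl p q S) := by
  rw [kl_diff_eq h (subset_insert u S), Finset.mul_sum]
  refine Finset.sum_le_sum fun σ _ => ?_
  rcases (h.q0 σ).eq_or_lt with h0 | h0
  · rw [← h0]; simp
  rw [mul_left_comm]
  refine mul_le_mul_of_nonneg_left ?_ h0.le
  set f := dn p q (insert u S) σ with hf
  set g := dn p q S σ with hg
  have hg0 : 0 ≤ g := dn_nonneg h.p0 h.q0 S σ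
  have hf0 : 0 ≤ f := dn_nonneg h.p0 h.q0 _ σ
  rcases hg0.eq_or_lt with h1 | h1
  · have : f = 0 := h.dn_zero (subset_insert u S) h1.symm
    rw [this, ← h1]; simp
  have hqS : 0 < mg q S σ := h0.trans_le (le_mg h.q0 S σ)
  have hqT : 0 < mg q (insert u S) σ := h0.trans_le (le_mg h.q0 _ σ)
  have hfg : f ≤ 1 / b * g := by
    rw [hf, hg]; unfold dn
    rw [div_le_iff₀ hqT]
    have := hMB S u σ h0
    have h3 := mg_anti h.p0 (subset_insert u S) σ
    have h4 := mg_nonneg h.p0 S σ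
    calc _ ≤ mg p S σ := h3
      _ = 1 / b * (mg p S σ / mg q S σ) * (b * mg q S σ) := by field_simp
      _ ≤ _ := mul_le_mul_of_nonneg_left this (by positivity)
  have key := sq_le_phi (t := f / g) (B := 1 / b) (div_nonneg hf0 hg0)
    (by rw [le_div_iff₀ hb]; linarith) (by rw [div_le_iff₀ h1]; exact hfg)
  have e1 : (f - g) ^ 2 / g = g * (f / g - 1) ^ 2 := by field_simp
  have e2 : f * (Real.log f - Real.log g) - f + g =
      g * (f / g * Real.log (f / g) - f / g + 1) := by
    rcases hf0.eq_or_lt with h2 | h2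
    · rw [← h2]; simp
    · rw [Real.log_div h2.ne' h1.ne']; field_simp
  rw [e1, e2]
  calc _ ≤ g * (4 * (1 / b) * (f / g * Real.log (f / g) - f / g + 1)) :=
        mul_le_mul_of_nonneg_left key hg0
    _ = _ := by ring

/-- Spectral independence bounds the mixed second differences from below. -/
lemma second_diff_sum {p q : (V → Bool) → ℝ} (h : AC p q) {b η : ℝ} (hb : 0 < b) (hb1 : b ≤ 1)
    (hη : 0 ≤ η) (hMB : MB q b) (hSI : SI q η) (S : Finset V) :
    -(η * (4 / b)) * ∑ u ∈ Sᶜ, (kl p q (insert u S) - kl p q S) ≤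
      ∑ u ∈ Sᶜ, ∑ v ∈ Sᶜ.erase u, (kl p q (insert v (insert u S)) - kl p q (insert u S)
        - kl p q (insert v S) + kl p q S) := by
  set g := dn p q S with hg
  set x : V → (V → Bool) → ℝ := fun u σ => dn p q (insert u S) σ - g σ with hx
  have hgm : Meas S g := dn_meas p q S
  have hgi : Meas S (fun σ => (g σ)⁻¹) := fun σ τ hs => by simp only [hgm σ τ hs]
  have hg0 : ∀ σ, 0 ≤ g σ := dn_nonneg h.p0 h.q0 S
  have sgf : ∀ u, ∑ σ, q σ * dn p q (insert u S) σ = 1 := fun u => by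
    rw [sum_dn h.q0 h.ac, h.p1]
  -- single second difference
  have h1 : ∀ u v, -∑ σ, (q σ * (x u σ * x v σ)) * (g σ)⁻¹ ≤
      kl p q (insert v (insert u S)) - kl p q (insert u S) - kl p q (insert v S) + kl p q S := by
    intro u v
    refine le_trans (le_of_eq ?_) (kl_second_diff h (S := S) (T₁ := insert u S) (T₂ := insert v S)
      (subset_insert _ _) (insert_subset_insert _ (subset_insert _ _))
      ((subset_insert _ _).trans (subset_insert _ _)))
    have e : ∀ σ, (q σ * (x u σ * x v σ)) * (g σ)⁻¹ =
        q σ * (dn p q (insert u S) σ * dn p q (insert v S) σ / g σ)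
        - q σ * dn p q (insert u S) σ - q σ * dn p q (insert v S) σ + q σ * g σ := by
      intro σ
      by_cases h0 : g σ = 0
      · have h2 := h.dn_zero (subset_insert u S) h0
        have h3 := h.dn_zero (subset_insert v S) h0
        simp [hx, h0, h2, h3]
      · simp only [hx]; field_simp; ring
    simp only [e]
    rw [Finset.sum_add_distrib, Finset.sum_sub_distrib, Finset.sum_sub_distrib, sgf, sgf, hg,
      sum_dn h.q0 h.ac, h.p1]
    ring
  -- conditioning on the coordinates in `S`
  have hac : ∀ y : (V → Bool) → ℝ, ∀ σ, q σ = 0 → q σ * y σ = 0 := fun y σ h0 => by simp [h0]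
  have h2 : ∀ y : (V → Bool) → ℝ, ∑ σ, (q σ * y σ) * (g σ)⁻¹ =
      ∑ σ, q σ * (g σ)⁻¹ / mg q S σ * mg (fun τ => q τ * y τ) S σ := by
    intro y
    rw [sum_meas h.q0 (hac y) hgi]
    refine Finset.sum_congr rfl fun σ _ => ?_
    unfold dn; ring
  have hloc : ∀ σ, ∑ u ∈ Sᶜ, ∑ v ∈ Sᶜ.erase u, mg (fun τ => q τ * (x u τ * x v τ)) S σ ≤
      η * ∑ u ∈ Sᶜ, mg (fun τ => q τ * (x u τ) ^ 2) S σ := by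
    intro σ
    set y : V → Bool → ℝ := fun u i => dn p q (insert u S) (Function.update σ u i) - g σ
    have hy : ∀ u ∉ S, ∀ τ : V → Bool, (∀ w ∈ S, τ w = σ w) → y u (τ u) = x u τ := by
      intro u hu τ hτ
      simp only [y, hx]
      rw [hgm σ τ fun w hw => (hτ w hw).symm]
      congr 1
      refine dn_meas p q _ _ _ fun w hw => ?_
      rcases mem_insert.1 hw with rfl | hwS
      · simp
      · rw [Function.update_of_ne (by rintro rfl; exact hu hwS), hτ w hwS]
    have e1 : ∀ u ∉ S, mg (fun τ => q τ * y u (τ u)) S σ = mg (fun τ => q τ * x u τ) S σ := by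
      intro u hu
      refine Finset.sum_congr rfl fun τ _ => ?_
      split_ifs with hτ
      · beta_reduce; rw [hy u hu τ hτ]
      · rfl
    have := hSI S σ y (fun u hu => by
      rw [e1 u hu]
      have e2 : mg (fun τ => q τ * x u τ) S σ =
          mg (fun τ => q τ * dn p q (insert u S) τ) S σ - mg (fun τ => q τ * g τ) S σ := by
        unfold mg
        rw [← Finset.sum_sub_distrib]
        refine Finset.sum_congr rfl fun τ _ => ?_
        simp only [hx]; split_ifs <;> ring
      rw [e2, mg_dn h.q0 h.ac (subset_insert u S), hg, mg_dn h.q0 h.ac subset_rfl, sub_self])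
    convert this using 1
    · refine Finset.sum_congr rfl fun u hu => Finset.sum_congr rfl fun v hv => ?_
      refine Finset.sum_congr rfl fun τ _ => ?_
      split_ifs with hτ
      · beta_reduce; rw [hy u (mem_compl.1 hu) τ hτ, hy v (mem_compl.1 (mem_of_mem_erase hv)) τ hτ]
      · rfl
    · congr 1
      refine Finset.sum_congr rfl fun u hu => Finset.sum_congr rfl fun τ _ => ?_
      split_ifs with hτ
      · beta_reduce; rw [hy u (mem_compl.1 hu) τ hτ]
      · rfl
  have h3 : ∑ u ∈ Sᶜ, ∑ v ∈ Sᶜ.erase u, ∑ σ, (q σ * (x u σ * x v σ)) * (g σ)⁻¹ ≤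
      η * ∑ u ∈ Sᶜ, ∑ σ, (q σ * (x u σ) ^ 2) * (g σ)⁻¹ := by
    simp only [fun u v => h2 (fun σ => x u σ * x v σ), fun u => h2 (fun σ => x u σ ^ 2)]
    have : ∀ u ∈ Sᶜ, ∑ v ∈ Sᶜ.erase u, ∑ σ, q σ * (g σ)⁻¹ / mg q S σ *
        mg (fun τ => q τ * (x u τ * x v τ)) S σ = ∑ σ, ∑ v ∈ Sᶜ.erase u,
        q σ * (g σ)⁻¹ / mg q S σ * mg (fun τ => q τ * (x u τ * x v τ)) S σ :=
      fun u _ => Finset.sum_comm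
    rw [Finset.sum_congr rfl this, Finset.sum_comm, Finset.sum_comm (s := Sᶜ) (t := univ),
      Finset.mul_sum]
    refine Finset.sum_le_sum fun σ _ => ?_
    simp only [← Finset.mul_sum]
    rw [mul_left_comm]
    exact mul_le_mul_of_nonneg_left (hloc σ)
      (div_nonneg (mul_nonneg (h.q0 σ) (inv_nonneg.2 (hg0 σ))) (mg_nonneg h.q0 S σ))
  have h4 : ∀ u, ∑ σ, (q σ * (x u σ) ^ 2) * (g σ)⁻¹ ≤
      4 / b * (kl p q (insert u S) - kl p q S) := by
    intro u
    refine le_trans (le_of_eq ?_) (chi_le_kl h hb hb1 hMB S u)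
    exact Finset.sum_congr rfl fun σ _ => by rw [div_eq_mul_inv, mul_assoc]
  have h5 := Finset.sum_le_sum fun u (_ : u ∈ Sᶜ) => Finset.sum_le_sum
    fun v (_ : v ∈ Sᶜ.erase u) => h1 u v
  have h6 := mul_le_mul_of_nonneg_left (Finset.sum_le_sum fun u (_ : u ∈ Sᶜ) => h4 u) hη
  rw [← Finset.mul_sum, ← mul_assoc] at h6
  simp only [Finset.sum_neg_distrib] at h5
  linarith

end TwoSpin

/-! ### Random subsets: from local to global entropy loss -/

namespace TwoSpin
set_option linter.unusedSectionVars false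
variable {V : Type} [Fintype V] [DecidableEq V]

/-- Probability of `S` when each vertex is included independently with probability `p`. -/
noncomputable def bw (p : ℝ) (S : Finset V) : ℝ := ∏ v, if v ∈ S then p else 1 - p

/-- Expectation of `F` at a random set containing each vertex independently with probability `p`. -/
noncomputable def Eb (p : ℝ) (F : Finset V → ℝ) : ℝ := ∑ S, bw p S * F S

/-- Sum of all one-point increments of the set function `F` at `S`. -/
def dF (F : Finset V → ℝ) (S : Finset V) : ℝ := ∑ u ∈ Sᶜ, (F (insert u S) - F S)

lemma bw_nonneg {p : ℝ} (h0 : 0 ≤ p) (h1 : p ≤ 1) (S : Finset V) : 0 ≤ bw p S :=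
  Finset.prod_nonneg fun v _ => by split_ifs <;> linarith

lemma sum_split (u : V) (F : Finset V → ℝ) :
    ∑ S, F S = ∑ S ∈ (univ.erase u).powerset, (F S + F (insert u S)) := by
  rw [Finset.sum_add_distrib, ← Finset.sum_powerset_insert (notMem_erase u univ),
    insert_erase (mem_univ u), powerset_univ]

lemma bw_eq {p : ℝ} {u : V} {S : Finset V} :
    bw p S = (if u ∈ S then p else 1 - p) * ∏ v ∈ univ.erase u, if v ∈ S then p else 1 - p :=
  (Finset.mul_prod_erase univ _ (mem_univ u)).symm

lemma Eb_dF (p : ℝ) (F : Finset V → ℝ) :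
    Eb p (dF F) = (1 - p) * ∑ u, ∑ S ∈ (univ.erase u).powerset,
      (∏ v ∈ univ.erase u, if v ∈ S then p else 1 - p) * (F (insert u S) - F S) := by
  unfold Eb dF
  simp only [Finset.mul_sum]
  rw [Finset.sum_comm' (t' := univ) (s' := fun u => (univ.erase u).powerset)]
  · refine Finset.sum_congr rfl fun u _ => Finset.sum_congr rfl fun S hS => ?_
    have hu : u ∉ S := fun h => by simpa using mem_powerset.1 hS h
    rw [bw_eq (u := u), if_neg hu, mul_assoc]
  · intro S u
    simp only [mem_univ, true_and, mem_compl, mem_powerset, and_true]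
    exact ⟨fun h x hx => mem_erase.2 ⟨by rintro rfl; exact h hx, mem_univ x⟩,
      fun h hu => by simpa using h hu⟩

/-- Russo's formula, with the derivative expressed through the missing vertices; the factor
`1 / (1 - p)` is the rate at which a missing vertex appears. -/
lemma Eb_hasDeriv {p : ℝ} (hp : p < 1) (F : Finset V → ℝ) :
    HasDerivAt (fun p => Eb p F) (Eb p (dF F) / (1 - p)) p := by
  have h1 : ∀ S : Finset V, HasDerivAt (fun p => bw p S)
      (∑ u, (∏ v ∈ univ.erase u, if v ∈ S then p else 1 - p) • (if u ∈ S then (1 : ℝ) else -1)) p := by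
    intro S
    unfold bw
    refine HasDerivAt.fun_finsetProd fun v _ => ?_
    by_cases hv : v ∈ S
    · simp only [hv, if_true]; exact hasDerivAt_id p
    · simp only [hv, if_false]; exact (hasDerivAt_id p).const_sub 1
  have h2 : HasDerivAt (fun p => Eb p F) (∑ S, (∑ u, (∏ v ∈ univ.erase u,
      if v ∈ S then p else 1 - p) • (if u ∈ S then (1 : ℝ) else -1)) * F S) p := by
    unfold Eb
    exact HasDerivAt.fun_sum fun S _ => (h1 S).mul_const (F S)
  convert h2 using 1
  rw [Eb_dF, mul_div_cancel_left₀ _ (by linarith)]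
  simp only [Finset.sum_mul]
  rw [Finset.sum_comm (s := univ) (t := univ) (f := fun (S : Finset V) (u : V) => _)]
  refine Finset.sum_congr rfl fun u _ => ?_
  rw [sum_split u]
  refine Finset.sum_congr rfl fun S hS => ?_
  have hu : u ∉ S := fun h => by simpa using mem_powerset.1 hS h
  have : ∏ v ∈ univ.erase u, (if v ∈ insert u S then p else 1 - p) =
      ∏ v ∈ univ.erase u, if v ∈ S then p else 1 - p := by
    refine Finset.prod_congr rfl fun v hv => ?_
    simp [(mem_erase.1 hv).1]
  rw [this]
  simp [hu]
  ring

lemma dF_dF (F : Finset V → ℝ) (S : Finset V) :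
    dF (dF F) S = ∑ u ∈ Sᶜ, ∑ v ∈ Sᶜ.erase u,
      (F (insert v (insert u S)) - F (insert u S) - F (insert v S) + F S) - dF F S := by
  conv_lhs => unfold dF
  conv_rhs => enter [2]; unfold dF
  rw [← Finset.sum_sub_distrib]
  refine Finset.sum_congr rfl fun u hu => ?_
  have h1 : (insert u S)ᶜ = Sᶜ.erase u := by ext; simp
  rw [h1, ← Finset.add_sum_erase _ _ hu]
  have : ∀ v, F (insert v (insert u S)) - F (insert u S) - F (insert v S) + F S =
    (F (insert v (insert u S)) - F (insert u S)) - (F (insert v S) - F S) := fun v => by ring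
  simp only [this, Finset.sum_sub_distrib]; ring

lemma Eb_mono {p : ℝ} (h0 : 0 ≤ p) (h1 : p ≤ 1) {F G : Finset V → ℝ} (h : ∀ S, F S ≤ G S) :
    Eb p F ≤ Eb p G :=
  Finset.sum_le_sum fun S _ => mul_le_mul_of_nonneg_left (h S) (bw_nonneg h0 h1 S)

lemma Eb_mul (p c : ℝ) (F : Finset V → ℝ) : Eb p (fun S => c * F S) = c * Eb p F := by
  unfold Eb; rw [Finset.mul_sum]; exact Finset.sum_congr rfl fun _ _ => by ring

lemma bw_one (S : Finset V) : bw 1 S = if S = univ then 1 else 0 := by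
  unfold bw
  split_ifs with h
  · simp [h]
  · obtain ⟨v, hv⟩ : ∃ v, v ∉ S := by
      by_contra! hc; exact h (eq_univ_iff_forall.2 hc)
    exact Finset.prod_eq_zero (mem_univ v) (by simp [hv])

lemma bw_zero (S : Finset V) : bw 0 S = if S = ∅ then 1 else 0 := by
  unfold bw
  split_ifs with h
  · simp [h]
  · obtain ⟨v, hv⟩ := nonempty_iff_ne_empty.2 h
    exact Finset.prod_eq_zero (mem_univ v) (by simp [hv])

lemma Eb_one (F : Finset V → ℝ) : Eb 1 F = F univ := by simp [Eb, bw_one]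
lemma Eb_zero (F : Finset V → ℝ) : Eb 0 F = F ∅ := by simp [Eb, bw_zero]

lemma bw_sum (p : ℝ) : ∑ S : Finset V, bw p S = 1 := by
  have := Finset.prod_add (fun _ : V => p) (fun _ => 1 - p) univ
  simp only [add_sub_cancel, Finset.prod_const_one, powerset_univ] at this
  rw [this]
  refine Finset.sum_congr rfl fun S _ => ?_
  unfold bw
  rw [Finset.prod_ite]
  simp [Finset.filter_notMem_eq_sdiff]

lemma Eb_cont (F : Finset V → ℝ) : Continuous (fun p => Eb p F) := by
  unfold Eb bw
  refine continuous_finsetSum _ fun S _ => Continuous.mul ?_ continuous_const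
  refine continuous_finsetProd _ fun v _ => ?_
  split_ifs <;> fun_prop

/-- A non-decreasing set function whose mixed second differences are bounded below keeps a constant
fraction of its total growth in the last `θ` fraction of the sampling time. -/
lemma local_to_global {F : Finset V → ℝ} (hmono : ∀ u S, F S ≤ F (insert u S)) (M : ℕ)
    (hdd : ∀ S, -((M : ℝ) + 1) * dF F S ≤ dF (dF F) S) {θ : ℝ} (h0 : 0 < θ) (h1 : θ < 1) :
    F univ - F ∅ ≤ (1 + (2 / θ) ^ (M + 1)) * (F univ - Eb (1 - θ) F) := by
  have hd0 : ∀ S, 0 ≤ dF F S := fun S => Finset.sum_nonneg fun u _ => sub_nonneg.2 (hmono u S)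
  set H := fun p => Eb p F with hH
  set g := fun p => Eb p (dF F) with hg
  have hgd : ∀ p < 1, HasDerivAt g (Eb p (dF (dF F)) / (1 - p)) p := fun p hp => Eb_hasDeriv hp _
  have hHd : ∀ p < 1, HasDerivAt H (g p / (1 - p)) p := fun p hp => Eb_hasDeriv hp _
  have hg0 : ∀ p, 0 ≤ p → p ≤ 1 → 0 ≤ g p := fun p hp hp1 =>
    Finset.sum_nonneg fun S _ => mul_nonneg (bw_nonneg hp hp1 S) (hd0 S)
  -- the hypothesis on second differences says exactly that this quotient is non-decreasing
  set G := fun p : ℝ => g p / (1 - p) ^ (M + 1) with hG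
  have hGd : ∀ p < 1, HasDerivAt G ((Eb p (dF (dF F)) / (1 - p) * (1 - p) ^ (M + 1) -
      g p * (((M + 1 : ℕ) : ℝ) * (1 - p) ^ M * (-1))) / ((1 - p) ^ (M + 1)) ^ 2) p := by
    intro p hp
    have h2 : HasDerivAt (fun p : ℝ => (1 - p) ^ (M + 1))
        (((M + 1 : ℕ) : ℝ) * (1 - p) ^ M * (-1)) p := by
      simpa using ((hasDerivAt_id p).const_sub 1).fun_pow (M + 1)
    exact (hgd p hp).fun_div h2 (pow_pos (by linarith) _).ne'
  have hGmono : MonotoneOn G (Set.Ico 0 1) := by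
    refine monotoneOn_of_deriv_nonneg (convex_Ico 0 1)
      (fun p hp => (hGd p hp.2).continuousAt.continuousWithinAt)
      (fun p hp => (hGd p (interior_subset hp).2).differentiableAt.differentiableWithinAt) ?_
    intro p hp
    have hp := interior_subset hp
    have hp1 : 0 < 1 - p := by linarith [hp.2]
    rw [(hGd p hp.2).deriv]
    refine div_nonneg ?_ (by positivity)
    have h3 : -((M : ℝ) + 1) * g p ≤ Eb p (dF (dF F)) := by
      rw [hg, ← Eb_mul]; exact Eb_mono hp.1 hp.2.le hdd
    have h4 : Eb p (dF (dF F)) / (1 - p) * (1 - p) ^ (M + 1) = Eb p (dF (dF F)) * (1 - p) ^ M := by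
      rw [pow_succ]; field_simp
    rw [h4]
    push_cast
    nlinarith [mul_le_mul_of_nonneg_right h3 (pow_pos hp1 M).le]
  have hHG : ∀ p < 1, g p / (1 - p) = G p * (1 - p) ^ M := by
    intro p hp
    have hp1 : 0 < 1 - p := by linarith
    simp only [hG]; rw [pow_succ]; field_simp
  have hcont : ∀ s : Set ℝ, ContinuousOn H s := fun s => (Eb_cont F).continuousOn
  set G0 := G (1 - θ) with hG0
  have hG0p : 0 ≤ G0 := div_nonneg (hg0 _ (by linarith) (by linarith)) (pow_nonneg (by linarith) _)
  have hGn : ∀ p, 0 ≤ p → p < 1 → 0 ≤ G p := fun p hp hp1 =>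
    div_nonneg (hg0 _ hp hp1.le) (pow_nonneg (by linarith) _)
  have a1 : H (1 - θ) - H 0 ≤ G0 * (1 - θ - 0) := by
    refine (convex_Icc 0 (1 - θ)).image_sub_le_mul_sub_of_deriv_le (hcont _)
      (fun p hp => (hHd p (by linarith [(interior_subset hp).2])).differentiableAt.differentiableWithinAt)
      ?_ 0 ⟨le_rfl, by linarith⟩ (1 - θ) ⟨by linarith, le_rfl⟩ (by linarith)
    intro p hp
    have hp := interior_subset hp
    rw [(hHd p (by linarith [hp.2])).deriv, hHG p (by linarith [hp.2])]
    have : G p ≤ G0 := hGmono ⟨hp.1, by linarith [hp.2]⟩ ⟨by linarith, by linarith⟩ hp.2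
    calc _ ≤ G p * 1 := mul_le_mul_of_nonneg_left
          (pow_le_one₀ (by linarith [hp.2]) (by linarith [hp.1]))
          (hGn p hp.1 (by linarith [hp.2]))
      _ ≤ _ := by linarith
  -- the window stops at `1 - θ / 2` because `H' = G (1 - p) ^ M` degenerates at `p = 1`
  have a2 : G0 * (θ / 2) ^ M * (1 - θ / 2 - (1 - θ)) ≤ H (1 - θ / 2) - H (1 - θ) := by
    refine (convex_Icc (1 - θ) (1 - θ / 2)).mul_sub_le_image_sub_of_le_deriv (hcont _)
      (fun p hp => (hHd p (by linarith [(interior_subset hp).2])).differentiableAt.differentiableWithinAt)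
      ?_ (1 - θ) ⟨le_rfl, by linarith⟩ (1 - θ / 2) ⟨by linarith, le_rfl⟩ (by linarith)
    intro p hp
    have hp := interior_subset hp
    rw [(hHd p (by linarith [hp.2])).deriv, hHG p (by linarith [hp.2])]
    have : G0 ≤ G p := hGmono ⟨by linarith, by linarith⟩ ⟨by linarith [hp.1], by linarith [hp.2]⟩ hp.1
    exact mul_le_mul this (pow_le_pow_left₀ (by linarith) (by linarith [hp.2]) _)
      (by positivity) (hGn p (by linarith [hp.1]) (by linarith [hp.2]))
  have a3 : H (1 - θ / 2) ≤ H 1 := by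
    refine monotoneOn_of_deriv_nonneg (convex_Icc 0 1) (hcont _)
      (fun p hp => ?_) ?_ ⟨by linarith, by linarith⟩ ⟨by linarith, le_rfl⟩ (by linarith)
    · rw [interior_Icc] at hp
      exact (hHd p hp.2).differentiableAt.differentiableWithinAt
    · intro p hp
      rw [interior_Icc] at hp
      rw [(hHd p hp.2).deriv]
      exact div_nonneg (hg0 p hp.1.le hp.2.le) (by linarith [hp.2])
  have e1 : H 1 = F univ := Eb_one F
  have e0 : H 0 = F ∅ := Eb_zero F
  have a4 : G0 ≤ (2 / θ) ^ (M + 1) * (H 1 - H (1 - θ)) := by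
    have : G0 * (θ / 2) ^ (M + 1) ≤ H 1 - H (1 - θ) := by
      rw [pow_succ]; nlinarith
    calc G0 = (2 / θ) ^ (M + 1) * (G0 * (θ / 2) ^ (M + 1)) := by
          have : (2 / θ) ^ (M + 1) * (θ / 2) ^ (M + 1) = 1 := by
            rw [← mul_pow, div_mul_div_comm, mul_comm, div_self (by positivity), one_pow]
          rw [mul_left_comm, this, mul_one]
      _ ≤ _ := mul_le_mul_of_nonneg_left this (by positivity)
  have a5 : G0 * (1 - θ - 0) ≤ G0 := by nlinarith
  rw [← e1, ← e0]
  have e2 : Eb (1 - θ) F = H (1 - θ) := rfl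
  rw [e2]; linarith

end TwoSpin

/-! ### A crude entropy bound for blocks -/

namespace TwoSpin
set_option linter.unusedSectionVars false
variable {V : Type} [Fintype V] [DecidableEq V]

/-- Entropy lost when the coordinates in `C` are forgotten. -/
noncomputable def gap (p q : (V → Bool) → ℝ) (C : Finset V) : ℝ := kl p q univ - kl p q Cᶜ

lemma gap_nonneg {p q : (V → Bool) → ℝ} (h : AC p q) (C : Finset V) : 0 ≤ gap p q C :=
  sub_nonneg.2 (kl_mono h (subset_univ _))

lemma gap_empty (p q : (V → Bool) → ℝ) : gap p q ∅ = 0 := by simp [gap]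

/-- Setting a spin to `0` keeps a configuration in the support. -/
def ZP (q : (V → Bool) → ℝ) : Prop := ∀ σ v, 0 < q σ → 0 < q (Function.update σ v false)

/-- The configuration equal to `0` on `C` and to `σ` elsewhere. -/
def zr (C : Finset V) (σ : V → Bool) : V → Bool := fun u => if u ∈ C then false else σ u

lemma zr_insert (v : V) (C : Finset V) (σ : V → Bool) :
    zr (insert v C) σ = zr C (Function.update σ v false) := by
  ext u; by_cases h : u = v
  · subst h; simp [zr]
  · simp [zr, h]

lemma zr_empty (σ : V → Bool) : zr ∅ σ = σ := by ext u; simp [zr]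

lemma zr_single (v : V) (σ : V → Bool) : zr {v} σ = Function.update σ v false := by
  ext u; by_cases h : u = v
  · subst h; simp [zr]
  · simp [zr, h]

lemma zr_pos {q : (V → Bool) → ℝ} (hz : ZP q) (C : Finset V) {σ : V → Bool} (hσ : 0 < q σ) :
    0 < q (zr C σ) := by
  induction C using Finset.induction_on generalizing σ with
  | empty => rwa [zr_empty]
  | insert v C hv ih => rw [zr_insert]; exact ih (hz σ v hσ)

/-- Revealing the vertices of `C` one at a time costs a factor `b` each. -/
lemma mb_iter {q : (V → Bool) → ℝ} {b : ℝ} (hb : 0 < b) (hMB : MB q b) (C : Finset V)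
    {σ : V → Bool} (hσ : 0 < q σ) : b ^ C.card * mg q Cᶜ σ ≤ q σ := by
  induction C using Finset.induction_on with
  | empty => simp [mg_univ]
  | insert v C hv ih =>
    refine le_trans ?_ ih
    rw [card_insert_of_notMem hv, pow_succ, mul_assoc]
    refine mul_le_mul_of_nonneg_left ?_ (by positivity)
    have h1 : Cᶜ = insert v (insert v C)ᶜ := by
      ext u; by_cases h : u = v
      · subst h; simp [hv]
      · simp [h]
    rw [h1]; exact hMB _ _ _ hσ

lemma q_mul_dn {p q : (V → Bool) → ℝ} (h : AC p q) (σ : V → Bool) :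
    q σ * dn p q univ σ = p σ := by
  unfold dn; rw [mg_univ, mg_univ]
  by_cases h0 : q σ = 0
  · simp [h0, h.ac σ h0]
  · field_simp

lemma dn_univ_le {p q : (V → Bool) → ℝ} (h : AC p q) {b : ℝ} (hb : 0 < b) (hMB : MB q b)
    (C : Finset V) {σ : V → Bool} (hσ : 0 < q σ) :
    dn p q univ σ ≤ dn p q Cᶜ σ / b ^ C.card := by
  have h1 := mb_iter hb hMB C hσ
  have h2 : 0 < mg q Cᶜ σ := hσ.trans_le (le_mg h.q0 _ σ)
  have h3 := le_mg h.p0 Cᶜ σ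
  unfold dn
  rw [mg_univ, mg_univ, div_div, div_le_div_iff₀ hσ (by positivity), mul_comm (mg q _ _)]
  exact mul_le_mul h3 h1 (by positivity) (mg_nonneg h.p0 _ _)

/-- Entropy is bounded by the `χ²`-divergence, conditionally on the spins outside `C`. -/
lemma gap_le_chi {p q : (V → Bool) → ℝ} (h : AC p q) (C : Finset V) :
    gap p q C ≤ ∑ σ, q σ * ((dn p q univ σ - dn p q Cᶜ σ) ^ 2 / dn p q Cᶜ σ) := by
  unfold gap
  rw [kl_diff_eq h (subset_univ _)]
  refine Finset.sum_le_sum fun σ _ => mul_le_mul_of_nonneg_left ?_ (h.q0 σ)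
  have hf0 : 0 ≤ dn p q univ σ := dn_nonneg h.p0 h.q0 _ σ
  have hg0 : 0 ≤ dn p q Cᶜ σ := dn_nonneg h.p0 h.q0 _ σ
  set f := dn p q univ σ with hf
  set g := dn p q Cᶜ σ with hg
  rcases hg0.eq_or_lt with h1 | h1
  · have : f = 0 := h.dn_zero (subset_univ _) h1.symm
    rw [this, ← h1]; simp
  rcases hf0.eq_or_lt with h2 | h2
  · rw [← h2]
    have : (0 - g) ^ 2 / g = g := by field_simp; ring
    rw [this]; simp
  rw [← Real.log_div h2.ne' h1.ne']
  have h3 := mul_le_mul_of_nonneg_left (Real.log_le_sub_one_of_pos (div_pos h2 h1)) hf0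
  have h4 : (f - g) ^ 2 / g = f * (f / g - 1) - f + g := by field_simp; ring
  linarith

/-- The conditional mean may be replaced by any other function of the remaining coordinates. -/
lemma chi_le_center {p q : (V → Bool) → ℝ} (h : AC p q) (S : Finset V) {c : (V → Bool) → ℝ}
    (hc : Meas S c) :
    ∑ σ, q σ * ((dn p q univ σ - dn p q S σ) ^ 2 / dn p q S σ) ≤
      ∑ σ, q σ * ((dn p q univ σ - c σ) ^ 2 / dn p q S σ) := by
  set f := dn p q univ
  set g := dn p q S with hg
  have hX : Meas S (fun σ => (g σ - c σ) / g σ) := fun σ τ hs => by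
    simp only [hc σ τ hs, hg, dn_meas p q S σ τ hs]
  have h1 : ∑ σ, q σ * (f σ * ((g σ - c σ) / g σ)) = ∑ σ, q σ * (g σ * ((g σ - c σ) / g σ)) := by
    rw [← sum_meas h.q0 h.ac hX]
    exact Finset.sum_congr rfl fun σ _ => by rw [← mul_assoc, q_mul_dn h]
  have h2 : ∀ σ, q σ * ((f σ - c σ) ^ 2 / g σ) = q σ * ((f σ - g σ) ^ 2 / g σ) +
      2 * (q σ * (f σ * ((g σ - c σ) / g σ)) - q σ * (g σ * ((g σ - c σ) / g σ)))
      + q σ * ((g σ - c σ) ^ 2 / g σ) := fun σ => by ring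
  simp only [h2]
  rw [Finset.sum_add_distrib, Finset.sum_add_distrib, ← Finset.mul_sum, Finset.sum_sub_distrib,
    h1, sub_self, mul_zero, add_zero]
  have : 0 ≤ ∑ σ, q σ * ((g σ - c σ) ^ 2 / g σ) := Finset.sum_nonneg fun σ _ =>
    mul_nonneg (h.q0 σ) (div_nonneg (sq_nonneg _) (dn_nonneg h.p0 h.q0 _ _))
  linarith

/-- Energy of `√(dp/dq)` under zeroing the spins in `C`. -/
noncomputable def en (p q : (V → Bool) → ℝ) (C : Finset V) : ℝ :=
  ∑ σ, q σ * (√(dn p q univ σ) - √(dn p q univ (zr C σ))) ^ 2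

/-- In the conditional `χ²`-divergence the mean is replaced by the density at the zeroed
configuration, and `(f - g)² = (√f - √g)² (√f + √g)²` passes to square roots. -/
lemma gap_le_en {p q : (V → Bool) → ℝ} (h : AC p q) {b : ℝ} (hb : 0 < b) (hMB : MB q b)
    (hz : ZP q) (C : Finset V) : gap p q C ≤ 4 / b ^ C.card * en p q C := by
  have hc : Meas Cᶜ (fun σ => dn p q univ (zr C σ)) := by
    intro σ τ hs
    have : zr C σ = zr C τ := by
      ext u; by_cases hu : u ∈ C
      · simp [zr, hu]
      · simp [zr, hu, hs u (by simpa using hu)]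
    simp only [this]
  refine (gap_le_chi h C).trans ((chi_le_center h _ hc).trans ?_)
  unfold en; rw [Finset.mul_sum]
  refine Finset.sum_le_sum fun σ _ => ?_
  rcases (h.q0 σ).eq_or_lt with h0 | h0
  · rw [← h0]; simp
  rw [mul_left_comm]
  refine mul_le_mul_of_nonneg_left ?_ h0.le
  have a1 := dn_univ_le h hb hMB C h0
  have a2 := dn_univ_le h hb hMB C (zr_pos hz C h0)
  have a3 : dn p q Cᶜ (zr C σ) = dn p q Cᶜ σ :=
    dn_meas p q _ _ _ fun u hu => by simp [zr, mem_compl.1 hu]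
  rw [a3] at a2
  have hf := dn_nonneg h.p0 h.q0 univ σ
  have hf' := dn_nonneg h.p0 h.q0 univ (zr C σ)
  have hg0 := dn_nonneg h.p0 h.q0 Cᶜ σ
  set f := dn p q univ σ
  set f' := dn p q univ (zr C σ)
  set g := dn p q Cᶜ σ
  have hbk : 0 < b ^ C.card := by positivity
  rcases hg0.eq_or_lt with h1 | h1
  · rw [← h1]; simp; positivity
  rw [div_le_iff₀ h1]
  have e1 : (f - f') ^ 2 = (√f - √f') ^ 2 * (√f + √f') ^ 2 := by
    rw [← mul_pow]; congr 1
    nlinarith [Real.mul_self_sqrt hf, Real.mul_self_sqrt hf']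
  have e2 : (√f + √f') ^ 2 ≤ 4 * (g / b ^ C.card) := by
    nlinarith [Real.mul_self_sqrt hf, Real.mul_self_sqrt hf', sq_nonneg (√f - √f')]
  rw [e1]
  calc _ ≤ (√f - √f') ^ 2 * (4 * (g / b ^ C.card)) := mul_le_mul_of_nonneg_left e2 (sq_nonneg _)
    _ = _ := by ring

/-- Averages after zeroing one spin are at most a constant times the original averages. -/
lemma sum_zero_le {q : (V → Bool) → ℝ} (hq : ∀ σ, 0 ≤ q σ) {b : ℝ} (hb : 0 < b) (hMB : MB q b)
    (hz : ZP q) (v : V) {X : (V → Bool) → ℝ} (hX : ∀ σ, 0 ≤ X σ) :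
    ∑ σ, q σ * X (Function.update σ v false) ≤ 2 / b * ∑ σ, q σ * X σ := by
  set z : (V → Bool) → (V → Bool) := fun σ => Function.update σ v false with hzd
  have h1 : ∀ σ, q σ ≤ 1 / b * q (z σ) := by
    intro σ
    rcases (hq σ).eq_or_lt with h0 | h0
    · rw [← h0]; exact mul_nonneg (by positivity) (hq _)
    have h2 := mb_iter hb hMB {v} (hz σ v h0)
    have h3 : q σ ≤ mg q {v}ᶜ (z σ) := by
      refine (le_mg hq {v}ᶜ σ).trans (le_of_eq (mg_meas q _ _ _ fun u hu => ?_))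
      simp only [mem_compl, mem_singleton] at hu
      simp [hzd, hu]
    simp only [card_singleton, pow_one] at h2
    rw [one_div, ← div_eq_inv_mul, le_div_iff₀ hb]
    nlinarith
  set fl : (V → Bool) → (V → Bool) := fun σ => Function.update σ v (!σ v) with hfl
  have hinv : Function.Involutive fl := fun σ => by simp [hfl]
  have h2 : ∀ σ, q (z σ) * X (z σ) ≤ q σ * X σ + q (fl σ) * X (fl σ) := by
    intro σ
    cases hv : σ v
    · have : z σ = σ := by simp [hzd, ← hv]
      rw [this]; linarith [mul_nonneg (hq (fl σ)) (hX (fl σ))]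
    · have : z σ = fl σ := by simp [hzd, hfl, hv]
      rw [this]; linarith [mul_nonneg (hq σ) (hX σ)]
  calc ∑ σ, q σ * X (z σ) ≤ ∑ σ, 1 / b * (q (z σ) * X (z σ)) :=
        Finset.sum_le_sum fun σ _ => by
          rw [← mul_assoc]; exact mul_le_mul_of_nonneg_right (h1 σ) (hX _)
    _ ≤ 1 / b * ∑ σ, (q σ * X σ + q (fl σ) * X (fl σ)) := by
        rw [← Finset.mul_sum]
        exact mul_le_mul_of_nonneg_left (Finset.sum_le_sum fun σ _ => h2 σ) (by positivity)
    _ = _ := by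
        rw [Finset.sum_add_distrib]
        have := Equiv.sum_comp hinv.toPerm (fun σ => q σ * X σ)
        simp only [Function.Involutive.coe_toPerm] at this
        rw [this]; ring

/-- For one vertex the energy is comparable with the entropy loss, since the spin `0` keeps
conditional probability at least `b`. -/
lemma en_single {p q : (V → Bool) → ℝ} (h : AC p q) {b : ℝ} (hb : 0 < b) (hb1 : b ≤ 1)
    (hMB : MB q b) (hz : ZP q) (v : V) : en p q {v} ≤ 6 / b * gap p q {v} := by
  set f := dn p q univ
  set g := dn p q {v}ᶜ with hg
  have hgz : ∀ σ, g (Function.update σ v false) = g σ := fun σ =>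
    dn_meas p q _ _ _ fun u hu => by
      simp only [mem_compl, mem_singleton] at hu; simp [hu]
  have h1 : ∑ σ, q σ * (√(f σ) - √(g σ)) ^ 2 ≤ gap p q {v} := by
    unfold gap
    rw [kl_diff_eq h (subset_univ _)]
    refine Finset.sum_le_sum fun σ _ => mul_le_mul_of_nonneg_left ?_ (h.q0 σ)
    have hf0 : 0 ≤ f σ := dn_nonneg h.p0 h.q0 _ σ
    have hg0 : 0 ≤ g σ := dn_nonneg h.p0 h.q0 _ σ
    change _ ≤ f σ * (Real.log (f σ) - Real.log (g σ)) - f σ + g σ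
    rcases hg0.eq_or_lt with h1 | h1
    · have : f σ = 0 := h.dn_zero (subset_univ _) h1.symm
      rw [this, ← h1]; simp
    have key := phi_ge (f σ / g σ) (div_nonneg hf0 hg0)
    have e1 : (√(f σ) - √(g σ)) ^ 2 = g σ * (√(f σ / g σ) - 1) ^ 2 := by
      rw [Real.sqrt_div hf0]
      have h2 := Real.sqrt_pos.2 h1
      nth_rewrite 2 [← Real.mul_self_sqrt hg0]
      field_simp
    have e2 : f σ * (Real.log (f σ) - Real.log (g σ)) - f σ + g σ =
        g σ * (f σ / g σ * Real.log (f σ / g σ) - f σ / g σ + 1) := by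
      rcases hf0.eq_or_lt with h2 | h2
      · rw [← h2]; simp
      · rw [Real.log_div h2.ne' h1.ne']; field_simp
    rw [e1, e2]
    exact mul_le_mul_of_nonneg_left key hg0
  have h2 := sum_zero_le h.q0 hb hMB hz v (X := fun σ => (√(f σ) - √(g σ)) ^ 2)
    (fun σ => sq_nonneg _)
  have h3 : en p q {v} ≤ 2 * ∑ σ, q σ * (√(f σ) - √(g σ)) ^ 2 +
      2 * ∑ σ, q σ * (√(f (Function.update σ v false)) - √(g (Function.update σ v false))) ^ 2 := by
    unfold en
    rw [Finset.mul_sum, Finset.mul_sum, ← Finset.sum_add_distrib]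
    refine Finset.sum_le_sum fun σ _ => ?_
    rw [zr_single, hgz]
    have := h.q0 σ
    nlinarith [mul_nonneg this (sq_nonneg ((√(f σ) - √(g σ)) +
      (√(f (Function.update σ v false)) - √(g σ))))]
  have h4 : 0 ≤ ∑ σ, q σ * (√(f σ) - √(g σ)) ^ 2 :=
    Finset.sum_nonneg fun σ _ => mul_nonneg (h.q0 σ) (sq_nonneg _)
  have h5 : 2 + 2 * (2 / b) ≤ 6 / b := by
    rw [← sub_nonneg]
    have : 6 / b - (2 + 2 * (2 / b)) = 2 * (1 - b) / b := by field_simp; ring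
    rw [this]; exact div_nonneg (by linarith) hb.le
  have h6 : 0 ≤ 6 / b := by positivity
  calc en p q {v} ≤ (2 + 2 * (2 / b)) * ∑ σ, q σ * (√(f σ) - √(g σ)) ^ 2 := by linarith
    _ ≤ 6 / b * ∑ σ, q σ * (√(f σ) - √(g σ)) ^ 2 := mul_le_mul_of_nonneg_right h5 h4
    _ ≤ _ := mul_le_mul_of_nonneg_left h1 h6

/-- The spins in `C` are zeroed one after another; every further vertex costs a constant factor. -/
lemma en_le {p q : (V → Bool) → ℝ} (h : AC p q) {b : ℝ} (hb : 0 < b) (hb1 : b ≤ 1)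
    (hMB : MB q b) (hz : ZP q) (C : Finset V) :
    en p q C ≤ (12 / b) ^ C.card * ∑ v ∈ C, gap p q {v} := by
  induction C using Finset.induction_on with
  | empty => simp [en, zr_empty]
  | insert v C hv ih =>
    have h1 := en_single h hb hb1 hMB hz v
    have h2 := sum_zero_le h.q0 hb hMB hz v
      (X := fun σ => (√(dn p q univ σ) - √(dn p q univ (zr C σ))) ^ 2) (fun σ => sq_nonneg _)
    have h3 : en p q (insert v C) ≤ 2 * en p q {v} + 2 * ∑ σ, q σ *
        (√(dn p q univ (Function.update σ v false)) -
          √(dn p q univ (zr C (Function.update σ v false)))) ^ 2 := by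
      unfold en
      rw [Finset.mul_sum, Finset.mul_sum, ← Finset.sum_add_distrib]
      refine Finset.sum_le_sum fun σ _ => ?_
      rw [zr_single, zr_insert]
      have := h.q0 σ
      set x := √(dn p q univ σ)
      set y := √(dn p q univ (Function.update σ v false))
      set z := √(dn p q univ (zr C (Function.update σ v false)))
      nlinarith [mul_nonneg this (sq_nonneg ((x - y) - (y - z)))]
    change _ ≤ 2 / b * en p q C at h2
    rw [card_insert_of_notMem hv, sum_insert hv, pow_succ]
    have hg := gap_nonneg h {v}
    have hs : 0 ≤ ∑ v ∈ C, gap p q {v} := Finset.sum_nonneg fun v _ => gap_nonneg h {v}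
    have hib : 1 ≤ 1 / b := by rw [le_div_iff₀ hb]; linarith
    have hD : 1 ≤ (12 / b) ^ C.card := one_le_pow₀ (by
      have : 12 / b = 12 * (1 / b) := by ring
      rw [this]; linarith)
    set D := (12 / b) ^ C.card
    have e1 : 2 / b = 2 * (1 / b) := by ring
    have e2 : 6 / b = 6 * (1 / b) := by ring
    have e3 : 12 / b = 12 * (1 / b) := by ring
    rw [e1] at h2; rw [e2] at h1; rw [e3]
    generalize 1 / b = i at *
    generalize (∑ v ∈ C, gap p q {v}) = s at *
    generalize gap p q {v} = w at *
    have hi : 0 ≤ i := by linarith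
    have h4 : i * en p q C ≤ i * (D * s) := mul_le_mul_of_nonneg_left ih hi
    have h5 : i * w ≤ D * (i * w) := le_mul_of_one_le_left (mul_nonneg hi hg) hD
    have h6 : 0 ≤ i * (D * s) := mul_nonneg hi (mul_nonneg (by linarith) hs)
    calc _ ≤ 2 * (6 * i * w) + 2 * (2 * i * en p q C) := by linarith
      _ ≤ 12 * (D * (i * w)) + 4 * (i * (D * s)) := by linarith
      _ ≤ 12 * (D * (i * w)) + 12 * (i * (D * s)) := by linarith
      _ = _ := by ring

/-- Tensorisation of entropy for a block, with a constant exponential in the size of the block. -/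
lemma gap_crude {p q : (V → Bool) → ℝ} (h : AC p q) {b : ℝ} (hb : 0 < b) (hb1 : b ≤ 1)
    (hMB : MB q b) (hz : ZP q) (C : Finset V) :
    gap p q C ≤ (48 / b ^ 2) ^ C.card * ∑ v ∈ C, gap p q {v} := by
  rcases C.eq_empty_or_nonempty with rfl | hC
  · simp [gap_empty]
  refine (gap_le_en h hb hMB hz C).trans ?_
  have hs : 0 ≤ ∑ v ∈ C, gap p q {v} := Finset.sum_nonneg fun v _ => gap_nonneg h {v}
  calc _ ≤ 4 ^ C.card / b ^ C.card * ((12 / b) ^ C.card * ∑ v ∈ C, gap p q {v}) := by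
        refine mul_le_mul ?_ (en_le h hb hb1 hMB hz C) ?_ (by positivity)
        · gcongr; exact le_self_pow₀ (by norm_num) (card_pos.2 hC).ne'
        · exact Finset.sum_nonneg fun σ _ => mul_nonneg (h.q0 σ) (sq_nonneg _)
    _ = _ := by
        rw [← mul_assoc, ← div_pow, ← mul_pow]; congr 2; field_simp; norm_num

end TwoSpin

/-! ### Connected sets and approximate tensorisation of entropy -/

namespace TwoSpin
set_option linter.unusedSectionVars false
variable {V : Type} [Fintype V] [DecidableEq V]

/-- Factorisation over a graph: non-adjacent blocks do not interact, that is, `q` is a product of a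
function that ignores `C₂` and one that ignores `C₁`. -/
def Fac (G : SimpleGraph V) (q : (V → Bool) → ℝ) : Prop :=
  ∀ C₁ C₂ : Finset V, Disjoint C₁ C₂ → (∀ u ∈ C₁, ∀ v ∈ C₂, ¬ G.Adj u v) →
    ∃ a b : (V → Bool) → ℝ, Meas C₂ᶜ a ∧ Meas C₁ᶜ b ∧ ∀ σ, q σ = a σ * b σ

/-- `C` is non-empty and induces a connected subgraph, expressed by cuts: every non-empty proper
subset of `C` has an edge to the rest of `C`. -/
def Conn (G : SimpleGraph V) (C : Finset V) : Prop :=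
  C.Nonempty ∧ ∀ C' ⊂ C, C'.Nonempty → ∃ u ∈ C', ∃ v ∈ C \ C', G.Adj u v

lemma gap_union {p q : (V → Bool) → ℝ} (h : AC p q) {G : SimpleGraph V} (hF : Fac G q)
    {C₁ C₂ : Finset V} (hd : Disjoint C₁ C₂) (hn : ∀ u ∈ C₁, ∀ v ∈ C₂, ¬ G.Adj u v) :
    gap p q (C₁ ∪ C₂) ≤ gap p q C₁ + gap p q C₂ := by
  obtain ⟨a, b, ha, hb, hab⟩ := hF C₁ C₂ hd hn
  have hT : C₂ᶜ ∪ C₁ᶜ = univ := by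
    rw [← compl_inter, inter_comm, disjoint_iff_inter_eq_empty.1 hd, compl_empty]
  have := kl_tensor h hT ha hb hab
  rw [← compl_union, union_comm] at this
  unfold gap; linarith

open Classical in
/-- The connected components of `B` do not interact; bounding by all connected subsets of `B`
avoids speaking of components. -/
lemma gap_le_conn {p q : (V → Bool) → ℝ} (h : AC p q) {G : SimpleGraph V} (hF : Fac G q)
    (B : Finset V) : gap p q B ≤ ∑ C ∈ B.powerset with Conn G C, gap p q C := by
  induction B using Finset.strongInduction with
  | H B ih =>
    have hnn : ∀ B : Finset V, 0 ≤ ∑ C ∈ B.powerset with Conn G C, gap p q C := fun B =>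
      Finset.sum_nonneg fun C _ => gap_nonneg h C
    rcases B.eq_empty_or_nonempty with rfl | hB
    · rw [gap_empty]; exact hnn _
    by_cases hc : Conn G B
    · exact Finset.single_le_sum (f := gap p q) (fun C _ => gap_nonneg h C)
        (mem_filter.2 ⟨mem_powerset_self B, hc⟩)
    · have : ∃ C' ⊂ B, C'.Nonempty ∧ ∀ u ∈ C', ∀ v ∈ B \ C', ¬ G.Adj u v := by
        by_contra! hcon
        exact hc ⟨hB, fun C' h1 h2 => hcon C' h1 h2⟩
      obtain ⟨C', h1, h2, h3⟩ := this
      have h4 : B \ C' ⊂ B := sdiff_ssubset h1.subset h2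
      have h5 := gap_union h hF disjoint_sdiff h3
      rw [union_sdiff_of_subset h1.subset] at h5
      have h6 : Disjoint (C'.powerset.filter (Conn G)) ((B \ C').powerset.filter (Conn G)) := by
        rw [Finset.disjoint_left]
        intro C hC hC'
        rw [mem_filter, mem_powerset] at hC hC'
        obtain ⟨x, hx⟩ := hC.2.1
        exact (mem_sdiff.1 (hC'.1 hx)).2 (hC.1 hx)
      refine h5.trans ((add_le_add (ih _ h1) (ih _ h4)).trans ?_)
      rw [← Finset.sum_union h6]
      refine Finset.sum_le_sum_of_subset_of_nonneg ?_ fun C _ _ => gap_nonneg h C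
      intro C hC
      rw [mem_union, mem_filter, mem_filter, mem_powerset, mem_powerset] at hC
      rw [mem_filter, mem_powerset]
      rcases hC with hC | hC
      · exact ⟨hC.1.trans h1.subset, hC.2⟩
      · exact ⟨hC.1.trans h4.subset, hC.2⟩

/-- Vertices visited by the walk from `v` that follows the instructions `l`. -/
def vis {D : ℕ} (step : V → Fin D → V) : V → List (Fin D) → Finset V
  | v, [] => {v}
  | v, a :: l => insert v (vis step (step v a) l)

lemma mem_vis {D : ℕ} (step : V → Fin D → V) (v : V) (l : List (Fin D)) : v ∈ vis step v l := by
  cases l <;> simp [vis]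

/-- A visited vertex `u` may send the walk on a detour to a neighbour `w` and back. -/
lemma vis_extend {D : ℕ} (step : V → Fin D → V) {u w : V} {a a' : Fin D} (h1 : step u a = w)
    (h2 : step w a' = u) (l : List (Fin D)) (v : V) (hu : u ∈ vis step v l) :
    ∃ l', l'.length = l.length + 2 ∧ vis step v l' = insert w (vis step v l) := by
  by_cases huv : u = v
  · subst huv
    refine ⟨a :: a' :: l, by simp, ?_⟩
    have := mem_vis step u l
    simp only [vis, h1, h2]
    rw [Finset.insert_comm, insert_eq_self.2 this]
  · induction l generalizing v with
    | nil => simp [vis] at hu; exact absurd hu huv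
    | cons c l ih =>
      simp only [vis, mem_insert, huv, false_or] at hu
      by_cases hc : u = step v c
      · refine ⟨c :: a :: a' :: l, by simp, ?_⟩
        have := mem_vis step u l
        simp only [vis, ← hc, h1, h2]
        rw [Finset.insert_comm u w, insert_eq_self.2 this, Finset.insert_comm]
      · obtain ⟨l', hl, he⟩ := ih (step v c) hu hc
        refine ⟨c :: l', by simp [hl], ?_⟩
        simp only [vis, he]
        rw [Finset.insert_comm]

/-- A connected set can be explored from `v` by a walk: each new vertex costs two steps, a detour
from a vertex that has been visited already. -/
lemma conn_vis {D : ℕ} {G : SimpleGraph V} {step : V → Fin D → V}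
    (hs : ∀ u w, G.Adj u w → ∃ a, step u a = w) {C : Finset V} (hC : Conn G C) {v : V}
    (hv : v ∈ C) (j : ℕ) (hj : j + 1 ≤ C.card) :
    ∃ l, l.length = 2 * j ∧ vis step v l ⊆ C ∧ (vis step v l).card = j + 1 := by
  induction j with
  | zero => exact ⟨[], by simp, by simpa [vis] using hv, by simp [vis]⟩
  | succ j ih =>
    obtain ⟨l, h1, h2, h3⟩ := ih (by omega)
    have hss : vis step v l ⊂ C := by
      refine Finset.ssubset_iff_subset_ne.2 ⟨h2, fun h => ?_⟩
      rw [h] at h3; omega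
    obtain ⟨u, hu, w, hw, ha⟩ := hC.2 _ hss ⟨v, mem_vis step v l⟩
    rw [mem_sdiff] at hw
    obtain ⟨a, ha1⟩ := hs u w ha
    obtain ⟨a', ha2⟩ := hs w u ha.symm
    obtain ⟨l', h4, h5⟩ := vis_extend step ha1 ha2 l v hu
    refine ⟨l', by omega, ?_, ?_⟩
    · rw [h5]; exact insert_subset hw.1 h2
    · rw [h5, card_insert_of_notMem hw.2, h3]

/-- A labelling of the neighbours of each vertex by (at most) `D` instructions. -/
lemma exists_step (G : SimpleGraph V) [DecidableRel G.Adj] {D : ℕ} (hD : ∀ v, G.degree v ≤ D) :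
    ∃ step : V → Fin D → V, ∀ u w, G.Adj u w → ∃ a, step u a = w := by
  have : ∀ u, ∃ f : Fin D → V, ∀ w, G.Adj u w → ∃ a, f a = w := by
    intro u
    have h1 : Fintype.card (G.neighborFinset u) ≤ Fintype.card (Fin D) := by
      rw [Fintype.card_coe, Fintype.card_fin]; exact hD u
    obtain ⟨e⟩ := Function.Embedding.nonempty_of_card_le h1
    rcases isEmpty_or_nonempty (G.neighborFinset u) with hE | hE
    · exact ⟨fun _ => u, fun w hw => (hE.false ⟨w, by simpa using hw⟩).elim⟩
    · refine ⟨fun a => (Function.invFun e a).1, fun w hw => ⟨e ⟨w, by simpa using hw⟩, ?_⟩⟩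
      simp only
      rw [Function.leftInverse_invFun e.injective]
  choose f hf using this
  exact ⟨f, hf⟩

open Classical in
/-- A connected set is determined by the instructions of a walk that explores it. -/
lemma conn_count (G : SimpleGraph V) [DecidableRel G.Adj] {D : ℕ} (hD : ∀ v, G.degree v ≤ D)
    (v : V) (k : ℕ) :
    ((univ : Finset (Finset V)).filter fun C => (Conn G C ∧ v ∈ C) ∧ C.card = k + 1).card ≤
      D ^ (2 * k) := by
  obtain ⟨step, hs⟩ := exists_step G hD
  have h1 : ((univ : Finset (Finset V)).filter fun C => (Conn G C ∧ v ∈ C) ∧ C.card = k + 1) ⊆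
      (univ : Finset (List.Vector (Fin D) (2 * k))).image fun l => vis step v l.1 := by
    intro C hC
    simp only [mem_filter, mem_univ, true_and] at hC
    obtain ⟨l, h1, h2, h3⟩ := conn_vis hs hC.1.1 hC.1.2 k hC.2.ge
    rw [mem_image]
    exact ⟨⟨l, h1⟩, mem_univ _, eq_of_subset_of_card_le h2 (by rw [hC.2]; exact h3.ge)⟩
  refine (card_le_card h1).trans (card_image_le.trans ?_)
  simp

open Classical in
lemma conn_sum (G : SimpleGraph V) [DecidableRel G.Adj] {D : ℕ} (hD : ∀ v, G.degree v ≤ D)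
    (hD1 : 1 ≤ D) (v : V) {x : ℝ} (hx : 0 ≤ x) (hx1 : (D : ℝ) ^ 2 * x ≤ 1 / 2) :
    ∑ C : Finset V with Conn G C ∧ v ∈ C, x ^ C.card ≤ 2 := by
  have hmap : ∀ C ∈ (univ : Finset (Finset V)).filter (fun C => Conn G C ∧ v ∈ C),
      C.card ∈ range (Fintype.card V + 1) := fun C _ => by
    rw [mem_range, Nat.lt_succ_iff]; exact card_le_univ C
  rw [← Finset.sum_fiberwise_of_maps_to hmap]
  have h1 : ∀ k ∈ range (Fintype.card V + 1),
      ∑ C ∈ (univ.filter fun C : Finset V => Conn G C ∧ v ∈ C) with C.card = k, x ^ C.card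
        ≤ (1 / 2 : ℝ) ^ k := by
    intro k _
    rw [Finset.sum_congr rfl (g := fun _ => x ^ k) fun C hC => by rw [(mem_filter.1 hC).2],
      Finset.sum_const, nsmul_eq_mul, Finset.filter_filter]
    cases k with
    | zero =>
      rw [Finset.filter_false_of_mem]
      · simp
      · rintro C _ ⟨⟨-, h2⟩, h3⟩
        rw [card_eq_zero.1 h3] at h2; simp at h2
    | succ k =>
      have h2 : ((((univ : Finset (Finset V)).filter fun C =>
          (Conn G C ∧ v ∈ C) ∧ C.card = k + 1).card : ℕ) : ℝ) ≤ ((D : ℝ) ^ 2) ^ (k + 1) := by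
        have h3 : (((univ : Finset (Finset V)).filter fun C =>
          (Conn G C ∧ v ∈ C) ∧ C.card = k + 1).card) ≤ (D ^ 2) ^ (k + 1) :=
          (conn_count G hD v k).trans (by
            rw [← pow_mul]; exact Nat.pow_le_pow_right hD1 (by omega))
        exact_mod_cast h3
      calc _ ≤ ((D : ℝ) ^ 2) ^ (k + 1) * x ^ (k + 1) :=
            mul_le_mul_of_nonneg_right h2 (by positivity)
        _ = ((D : ℝ) ^ 2 * x) ^ (k + 1) := (mul_pow _ _ _).symm
        _ ≤ _ := pow_le_pow_left₀ (by positivity) hx1 _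
  refine (Finset.sum_le_sum h1).trans ?_
  have := geom_sum_eq (x := (1 / 2 : ℝ)) (by norm_num) (Fintype.card V + 1)
  rw [this]
  have h3 : (0 : ℝ) < (1 / 2) ^ (Fintype.card V + 1) := by positivity
  rw [div_le_iff_of_neg (by norm_num)]
  linarith

/-- A random set avoids `C` with probability `(1 - p) ^ |C|`. -/
lemma bw_disjoint (p : ℝ) (C : Finset V) :
    ∑ S : Finset V, (if C ⊆ Sᶜ then bw p S else 0) = (1 - p) ^ C.card := by
  have := Finset.prod_add (fun v : V => if v ∈ C then 0 else p) (fun _ => 1 - p) univ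
  rw [powerset_univ] at this
  have h2 : ∏ v : V, ((if v ∈ C then 0 else p) + (1 - p)) = (1 - p) ^ C.card := by
    rw [← Finset.prod_const, ← Finset.prod_subset (subset_univ C)]
    · exact Finset.prod_congr rfl fun v hv => by simp [hv]
    · intro v _ hv; simp [hv]
  rw [← h2, this]
  refine Finset.sum_congr rfl fun S _ => ?_
  split_ifs with h
  · unfold bw
    rw [Finset.prod_ite]
    congr 1
    · simp only [Finset.filter_mem_eq_inter, univ_inter]
      exact Finset.prod_congr rfl fun v hv => by
        rw [if_neg fun hc => (mem_compl.1 (h hc)) hv]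
    · simp [Finset.filter_notMem_eq_sdiff]
  · obtain ⟨v, hv, hv'⟩ := not_subset.1 h
    rw [mem_compl, not_not] at hv'
    rw [Finset.prod_eq_zero hv' (by simp [hv]), zero_mul]

/-- The entropy lost by forgetting a sparse random set of coordinates is controlled by single
coordinates: the forgotten set contains a given connected set `C` with probability `θ ^ |C|`, which
beats both the number of such sets and the constant `A ^ |C|`. -/
lemma block_to_single {p q : (V → Bool) → ℝ} (h : AC p q) {G : SimpleGraph V}
    [DecidableRel G.Adj] {D : ℕ} (hD : ∀ v, G.degree v ≤ D) (hD1 : 1 ≤ D) (hF : Fac G q)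
    {A : ℝ} (hA : 0 ≤ A) (hcr : ∀ C, gap p q C ≤ A ^ C.card * ∑ v ∈ C, gap p q {v})
    {θ : ℝ} (h0 : 0 < θ) (h1 : θ < 1) (hθ : (D : ℝ) ^ 2 * (A * θ) ≤ 1 / 2) :
    kl p q univ - Eb (1 - θ) (kl p q) ≤ 2 * ∑ v, gap p q {v} := by
  classical
  have e1 : kl p q univ - Eb (1 - θ) (kl p q) = ∑ S, bw (1 - θ) S * gap p q Sᶜ := by
    unfold Eb gap
    simp only [compl_compl, mul_sub]
    rw [Finset.sum_sub_distrib, ← Finset.sum_mul, bw_sum, one_mul]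
  have hb : ∀ S : Finset V, 0 ≤ bw (1 - θ) S := fun S => bw_nonneg (by linarith) (by linarith) S
  rw [e1]
  calc ∑ S, bw (1 - θ) S * gap p q Sᶜ
      ≤ ∑ S, bw (1 - θ) S * ∑ C ∈ Sᶜ.powerset with Conn G C,
          (A ^ C.card * ∑ v ∈ C, gap p q {v}) :=
        Finset.sum_le_sum fun S _ => mul_le_mul_of_nonneg_left
          ((gap_le_conn h hF _).trans (Finset.sum_le_sum fun C _ => hcr C)) (hb S)
    _ = ∑ S, ∑ C : Finset V, if Conn G C then (if C ⊆ Sᶜ then bw (1 - θ) S else 0) *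
          (A ^ C.card * ∑ v ∈ C, gap p q {v}) else 0 := by
        refine Finset.sum_congr rfl fun S _ => ?_
        rw [Finset.mul_sum, Finset.sum_filter]
        rw [← Finset.sum_subset (subset_univ Sᶜ.powerset)]
        · refine Finset.sum_congr rfl fun C hC => ?_
          rw [if_pos (mem_powerset.1 hC)]
        · intro C _ hC
          rw [if_neg (fun hc => hC (mem_powerset.2 hc))]; simp
    _ = ∑ C : Finset V, if Conn G C then (A * θ) ^ C.card * ∑ v ∈ C, gap p q {v} else 0 := by
        rw [Finset.sum_comm]
        refine Finset.sum_congr rfl fun C _ => ?_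
        split_ifs
        · rw [← Finset.sum_mul, bw_disjoint, mul_pow]; ring
        · simp
    _ = ∑ v, gap p q {v} * ∑ C : Finset V with Conn G C ∧ v ∈ C, (A * θ) ^ C.card := by
        simp only [Finset.mul_sum, Finset.sum_filter]
        rw [Finset.sum_comm]
        refine Finset.sum_congr rfl fun C _ => ?_
        split_ifs with hc
        · rw [← Finset.sum_subset (subset_univ C)]
          · exact Finset.sum_congr rfl fun v hv => by simp [hv, hc, mul_comm]
          · intro v _ hv; simp [hv]
        · simp [hc]
    _ ≤ ∑ v, gap p q {v} * 2 := Finset.sum_le_sum fun v _ =>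
        mul_le_mul_of_nonneg_left (conn_sum G hD hD1 v (by positivity) hθ) (gap_nonneg h _)
    _ = _ := by rw [← Finset.sum_mul, mul_comm]

/-- Constant in the approximate tensorisation of entropy: that of `local_to_global` with
`θ = 1 / (2 D² A)`, `A = 48 / b²`, times the `2` of `block_to_single`. -/
noncomputable def atC (D : ℕ) (b η : ℝ) : ℝ :=
  2 * (1 + (2 / (1 / (2 * (D : ℝ) ^ 2 * (48 / b ^ 2)))) ^ (⌈η * (4 / b)⌉₊ + 1))

/-- Approximate tensorisation of entropy. -/
lemma approx_tensor {p q : (V → Bool) → ℝ} (h : AC p q) {G : SimpleGraph V}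
    [DecidableRel G.Adj] {D : ℕ} (hD : ∀ v, G.degree v ≤ D) (hD1 : 1 ≤ D) (hF : Fac G q)
    {b η : ℝ} (hb : 0 < b) (hb1 : b ≤ 1) (hη : 0 ≤ η) (hMB : MB q b) (hSI : SI q η) (hz : ZP q) :
    kl p q univ ≤ atC D b η * ∑ v, gap p q {v} := by
  set A := 48 / b ^ 2 with hA
  have hA1 : 48 ≤ A := by
    rw [hA, le_div_iff₀ (by positivity)]; nlinarith
  have hD1' : (1 : ℝ) ≤ (D : ℝ) ^ 2 := one_le_pow₀ (by exact_mod_cast hD1)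
  set θ := 1 / (2 * (D : ℝ) ^ 2 * A) with hθ
  have hDA : 48 ≤ (D : ℝ) ^ 2 * A := by nlinarith
  have h0 : 0 < θ := by rw [hθ]; positivity
  have h1 : θ < 1 := by
    rw [hθ, div_lt_one (by nlinarith)]; nlinarith
  have h2 := local_to_global (F := kl p q) (fun u S => kl_mono h (subset_insert u S))
    ⌈η * (4 / b)⌉₊ (fun S => by
      rw [dF_dF]
      have h3 := second_diff_sum h hb hb1 hη hMB hSI S
      have h4 : 0 ≤ dF (kl p q) S := Finset.sum_nonneg fun u _ =>
        sub_nonneg.2 (kl_mono h (subset_insert u S))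
      have h5 := Nat.le_ceil (η * (4 / b))
      have h6 := mul_le_mul_of_nonneg_right h5 h4
      change -(η * (4 / b)) * dF (kl p q) S ≤ _ at h3
      linarith) h0 h1
  have h3 := block_to_single (A := A) h hD hD1 hF (by linarith) (gap_crude h hb hb1 hMB hz) h0 h1
    (le_of_eq (by rw [hθ]; clear_value A; field_simp))
  rw [kl_empty h, sub_zero] at h2
  refine h2.trans ((mul_le_mul_of_nonneg_left h3 (by positivity)).trans (le_of_eq ?_))
  unfold atC
  rw [← hA, ← hθ]; ring

end TwoSpin

/-! ### From tensorisation of entropy to mixing -/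

namespace TwoSpin
set_option linter.unusedSectionVars false
variable {V : Type} [Fintype V] [DecidableEq V]

/-- Push-forward of `p` by one step of the Glauber dynamics for `q`. -/
noncomputable def stp (q p : (V → Bool) → ℝ) (τ : V → Bool) : ℝ :=
  ∑ σ, p σ * glauberMatrix q σ τ

lemma mg_compl_single (q : (V → Bool) → ℝ) (σ : V → Bool) (v : V) :
    mg q {v}ᶜ σ = ∑ j, q (Function.update σ v j) := by
  unfold mg
  rw [← Finset.sum_filter]
  symm
  refine Finset.sum_bij' (fun j _ => Function.update σ v j) (fun τ _ => τ v) ?_ ?_ ?_ ?_ ?_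
  · intro j _
    simp only [mem_filter, mem_univ, true_and, mem_compl, mem_singleton]
    intro u hu; simp [hu]
  · intro _ _; exact mem_univ _
  · intro j _; simp
  · intro τ hτ
    simp only [mem_filter, mem_univ, true_and, mem_compl, mem_singleton] at hτ
    ext u; by_cases h : u = v
    · subst h; simp
    · simp [h, hτ u h]
  · intro _ _; rfl

/-- One step replaces the density by the average over `v` of the densities with `v` resampled. -/
lemma stp_eq (q p : (V → Bool) → ℝ) (τ : V → Bool) :
    stp q p τ = (Fintype.card V : ℝ)⁻¹ * ∑ v, q τ * dn p q {v}ᶜ τ := by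
  unfold stp glauberMatrix
  simp only [Matrix.of_apply]
  simp only [mul_left_comm (p _)]
  rw [← Finset.mul_sum]
  congr 1
  simp only [Finset.mul_sum]
  rw [Finset.sum_comm]
  refine Finset.sum_congr rfl fun v _ => ?_
  have : q τ * dn p q {v}ᶜ τ = ∑ σ, (if ∀ u ∈ ({v}ᶜ : Finset V), σ u = τ u then p σ else 0) *
      (q τ / mg q {v}ᶜ τ) := by
    rw [← Finset.sum_mul]; unfold dn
    change _ = mg p {v}ᶜ τ * _
    ring
  rw [this]
  refine Finset.sum_congr rfl fun σ _ => ?_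
  by_cases h : ∀ u, u ≠ v → τ u = σ u
  · have h2 : ∀ u ∈ ({v}ᶜ : Finset V), σ u = τ u := fun u hu => (h u (by simpa using hu)).symm
    rw [if_pos h, if_pos h2, ← mg_meas q _ _ _ h2, mg_compl_single]
  · have h2 : ¬ ∀ u ∈ ({v}ᶜ : Finset V), σ u = τ u := fun h' =>
      h fun u hu => (h' u (by simpa using hu)).symm
    rw [if_neg h, if_neg h2]; simp

lemma stp_ac {p q : (V → Bool) → ℝ} (h : AC p q) (hV : 0 < Fintype.card V) : AC (stp q p) q where
  p0 σ := by
    rw [stp_eq]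
    exact mul_nonneg (by positivity) (Finset.sum_nonneg fun v _ =>
      mul_nonneg (h.q0 σ) (dn_nonneg h.p0 h.q0 _ _))
  q0 := h.q0
  q1 := h.q1
  ac σ hσ := by rw [stp_eq]; simp [hσ]
  p1 := by
    simp only [stp_eq]
    rw [← Finset.mul_sum, Finset.sum_comm]
    simp only [sum_dn h.q0 h.ac, h.p1]
    simp
    field_simp

lemma kl_univ_eq {p q : (V → Bool) → ℝ} (h : AC p q) :
    kl p q univ = ∑ σ, q σ * (dn p q univ σ * Real.log (dn p q univ σ)) :=
  Finset.sum_congr rfl fun σ _ => by rw [← mul_assoc, q_mul_dn h]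

lemma kl_eq {p q : (V → Bool) → ℝ} (h : AC p q) (S : Finset V) :
    kl p q S = ∑ σ, q σ * (dn p q S σ * Real.log (dn p q S σ)) :=
  sum_meas h.q0 h.ac (X := fun σ => Real.log (dn p q S σ)) fun σ τ hs => by
    simp only [dn_meas p q S σ τ hs]

/-- By convexity of `t log t`, one step loses at least the average of the single-site entropy
gaps. -/
lemma kl_stp {p q : (V → Bool) → ℝ} (h : AC p q) (hV : 0 < Fintype.card V) :
    kl (stp q p) q univ ≤ kl p q univ - (Fintype.card V : ℝ)⁻¹ * ∑ v, gap p q {v} := by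
  have hn : (0 : ℝ) < Fintype.card V := by exact_mod_cast hV
  have e1 : kl p q univ - (Fintype.card V : ℝ)⁻¹ * ∑ v, gap p q {v} =
      ∑ v, (Fintype.card V : ℝ)⁻¹ * kl p q {v}ᶜ := by
    unfold gap
    rw [← Finset.mul_sum, Finset.sum_sub_distrib]
    simp; field_simp; ring
  rw [e1, kl_univ_eq (stp_ac h hV)]
  simp only [kl_eq h, Finset.mul_sum]
  rw [Finset.sum_comm]
  refine Finset.sum_le_sum fun σ _ => ?_
  rcases (h.q0 σ).eq_or_lt with h0 | h0
  · simp [← h0]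
  have e2 : dn (stp q p) q univ σ = ∑ v : V, (Fintype.card V : ℝ)⁻¹ • dn p q {v}ᶜ σ := by
    unfold dn; rw [mg_univ, mg_univ, stp_eq, div_eq_iff h0.ne', Finset.mul_sum, Finset.sum_mul]
    refine Finset.sum_congr rfl fun v _ => ?_
    unfold dn; simp only [smul_eq_mul]; ring
  have key := Real.convexOn_mul_log.map_sum_le (t := univ) (w := fun _ : V => (Fintype.card V : ℝ)⁻¹)
    (p := fun v => dn p q {v}ᶜ σ) (fun _ _ => by positivity) (by simp [hn.ne'])
    (fun v _ => dn_nonneg h.p0 h.q0 _ σ)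
  rw [e2]
  refine (mul_le_mul_of_nonneg_left key h0.le).trans (le_of_eq ?_)
  rw [Finset.mul_sum]
  exact Finset.sum_congr rfl fun v _ => by simp only [smul_eq_mul]; ring

/-- A form of Pinsker's inequality, through the Hellinger distance. -/
lemma tv_sq_le {p q : (V → Bool) → ℝ} (h : AC p q) : tvDist p q ^ 2 ≤ kl p q univ := by
  have h1 : ∑ σ, (√(p σ) - √(q σ)) ^ 2 ≤ kl p q univ := by
    have := kl_diff_eq h (empty_subset univ)
    rw [kl_empty h, sub_zero] at this
    rw [this]
    refine Finset.sum_le_sum fun σ _ => ?_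
    have e : dn p q ∅ σ = 1 := by unfold dn; rw [mg_empty, mg_empty, h.p1, h.q1]; simp
    rw [e, Real.log_one, sub_zero]
    have h2 := phi_ge _ (dn_nonneg h.p0 h.q0 univ σ)
    refine le_trans (le_of_eq ?_) (mul_le_mul_of_nonneg_left h2 (h.q0 σ))
    rw [← q_mul_dn h, Real.sqrt_mul (h.q0 σ)]
    nth_rewrite 3 [← Real.mul_self_sqrt (h.q0 σ)]
    ring
  have h2 : ∑ σ, (√(p σ) + √(q σ)) ^ 2 ≤ 4 := by
    calc _ ≤ ∑ σ, (2 * p σ + 2 * q σ) := Finset.sum_le_sum fun σ _ => by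
          nlinarith [Real.mul_self_sqrt (h.p0 σ), Real.mul_self_sqrt (h.q0 σ),
            sq_nonneg (√(p σ) - √(q σ))]
      _ = 4 := by
          rw [Finset.sum_add_distrib, ← Finset.mul_sum, ← Finset.mul_sum, h.p1, h.q1]; norm_num
  have h3 := Finset.sum_mul_sq_le_sq_mul_sq univ (fun σ => |√(p σ) - √(q σ)|)
    (fun σ => √(p σ) + √(q σ))
  have h4 : ∀ σ, |√(p σ) - √(q σ)| * (√(p σ) + √(q σ)) = |p σ - q σ| := by
    intro σ
    have : 0 ≤ √(p σ) + √(q σ) := by positivity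
    rw [← abs_of_nonneg this, ← abs_mul]
    congr 1
    nlinarith [Real.mul_self_sqrt (h.p0 σ), Real.mul_self_sqrt (h.q0 σ)]
  simp only [h4, sq_abs] at h3
  have h5 : 0 ≤ ∑ σ, (√(p σ) - √(q σ)) ^ 2 := Finset.sum_nonneg fun _ _ => sq_nonneg _
  unfold tvDist
  nlinarith [mul_le_mul_of_nonneg_left h2 h5]

lemma dirac_ac {q : (V → Bool) → ℝ} (hq : ∀ σ, 0 ≤ q σ) (hq1 : ∑ σ, q σ = 1) {σ : V → Bool}
    (hσ : 0 < q σ) : AC (fun τ => if σ = τ then (1 : ℝ) else 0) q where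
  p0 τ := by split_ifs <;> norm_num
  q0 := hq
  p1 := by simp
  q1 := hq1
  ac τ hτ := by
    rw [if_neg]
    rintro rfl; exact hσ.ne' hτ

/-- The entropy of a point mass is linear in the number of vertices, because every configuration in
the support has probability at least `b ^ n`. -/
lemma kl_dirac {q : (V → Bool) → ℝ} (hq1 : ∑ σ, q σ = 1)
    {b : ℝ} (hb : 0 < b) (hMB : MB q b) {σ : V → Bool} (hσ : 0 < q σ) :
    kl (fun τ => if σ = τ then (1 : ℝ) else 0) q univ ≤
      Fintype.card V * Real.log (1 / b) := by
  unfold kl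
  simp only [ite_mul, one_mul, zero_mul, Finset.sum_ite_eq, mem_univ, if_true]
  have h2 := mb_iter hb hMB univ hσ
  rw [compl_univ, mg_empty, hq1, mul_one, card_univ] at h2
  unfold dn
  rw [mg_univ, mg_univ, if_pos rfl, ← Real.log_pow]
  refine Real.log_le_log (by positivity) ?_
  rw [div_pow, one_pow]
  exact one_div_le_one_div_of_le (by positivity) h2

/-- Approximate tensorisation of entropy gives an `O(n log n)` mixing time. -/
lemma mixing_of_tensor {q : (V → Bool) → ℝ} (hq : ∀ σ, 0 ≤ q σ) (hq1 : ∑ σ, q σ = 1)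
    {b C : ℝ} (hb : 0 < b) (hb1 : b ≤ 1) (hMB : MB q b) (hC : 1 ≤ C)
    (hat : ∀ p, AC p q → kl p q univ ≤ C * ∑ v, gap p q {v}) (hV : 2 ≤ Fintype.card V) :
    (mixingTime q (glauberMatrix q) (1 / 4) : ℝ) ≤
      (C * (1 + 2 * Real.log (16 * (Real.log (1 / b) + 1))) + 1) *
        (Fintype.card V : ℝ) * Real.log (Fintype.card V) := by
  set n : ℝ := (Fintype.card V : ℝ) with hn
  have hn2 : (2 : ℝ) ≤ n := by rw [hn]; exact_mod_cast hV
  set L := Real.log (1 / b) + 1 with hL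
  have hL0 : 0 ≤ Real.log (1 / b) := Real.log_nonneg (by rw [le_div_iff₀ hb]; linarith)
  have hV0 : 0 < Fintype.card V := by omega
  have hCn : 1 ≤ C * n := by nlinarith
  -- the entropy starts below `n L`, shrinks by `1 - 1 / (C n)` per step and has to reach `(1 / 4)²`
  set t : ℕ := ⌈C * n * Real.log (16 * n * L)⌉₊ with ht
  have hlog2 : 1 / 2 ≤ Real.log n := by
    have h1 := Real.log_two_gt_d9
    have h2 := Real.log_le_log (by norm_num) hn2
    linarith
  have hl16 : 0 ≤ Real.log (16 * L) := Real.log_nonneg (by linarith)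
  have hlog : Real.log (16 * n * L) = Real.log n + Real.log (16 * L) := by
    rw [← Real.log_mul (by linarith) (by linarith)]; congr 1; ring
  have htle : (t : ℝ) ≤ (C * (1 + 2 * Real.log (16 * L)) + 1) * n * Real.log n := by
    have h1 : (t : ℝ) < C * n * Real.log (16 * n * L) + 1 :=
      Nat.ceil_lt_add_one (mul_nonneg (by linarith) (by rw [hlog]; linarith))
    rw [hlog] at h1
    have h2 : Real.log (16 * L) ≤ 2 * Real.log (16 * L) * Real.log n := by nlinarith
    have h3 : 1 ≤ n * Real.log n := by nlinarith
    have h4 : C * n * Real.log (16 * L) ≤ C * n * (2 * Real.log (16 * L) * Real.log n) :=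
      mul_le_mul_of_nonneg_left h2 (by linarith)
    nlinarith
  refine le_trans ?_ htle
  have : mixingTime q (glauberMatrix q) (1 / 4) ≤ t := by
    unfold mixingTime
    refine Finset.sup_le fun σ hσ => Nat.sInf_le ?_
    have hσ : 0 < q σ := by simpa using hσ
    have hstep : ∀ s : ℕ, AC (fun τ => (glauberMatrix q ^ s) σ τ) q ∧
        kl (fun τ => (glauberMatrix q ^ s) σ τ) q univ ≤
          (1 - 1 / (C * n)) ^ s * (n * Real.log (1 / b)) := by
      intro s
      induction s with
      | zero =>
        rw [pow_zero, pow_zero, one_mul]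
        have e : (fun τ => (1 : Matrix (V → Bool) (V → Bool) ℝ) σ τ) =
            fun τ => if σ = τ then (1 : ℝ) else 0 := by
          funext τ; rw [Matrix.one_apply]
        rw [e]
        exact ⟨dirac_ac hq hq1 hσ, kl_dirac hq1 hb hMB hσ⟩
      | succ s ih =>
        have e : (fun τ => (glauberMatrix q ^ (s + 1)) σ τ) =
            stp q (fun τ => (glauberMatrix q ^ s) σ τ) := by
          funext τ; rw [pow_succ, Matrix.mul_apply]; rfl
        rw [e]
        refine ⟨stp_ac ih.1 hV0, (kl_stp ih.1 hV0).trans ?_⟩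
        have h1 := hat _ ih.1
        set K := kl (fun τ => (glauberMatrix q ^ s) σ τ) q univ
        set Γ := ∑ v, gap (fun τ => (glauberMatrix q ^ s) σ τ) q {v}
        have h2 : 1 / (C * n) * K ≤ n⁻¹ * Γ := by
          calc 1 / (C * n) * K ≤ 1 / (C * n) * (C * Γ) :=
                mul_le_mul_of_nonneg_left h1 (by positivity)
            _ = n⁻¹ * Γ := by field_simp
        have h3 : 0 ≤ 1 - 1 / (C * n) := by
          rw [sub_nonneg, div_le_one (by linarith)]; exact hCn
        rw [pow_succ]
        calc _ ≤ (1 - 1 / (C * n)) * K := by linarith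
          _ ≤ (1 - 1 / (C * n)) * ((1 - 1 / (C * n)) ^ s * (n * Real.log (1 / b))) :=
              mul_le_mul_of_nonneg_left ih.2 h3
          _ = _ := by ring
    obtain ⟨hac, hkl⟩ := hstep t
    change tvDist _ q ≤ 1 / 4
    have h1 := tv_sq_le hac
    have h2 : (1 - 1 / (C * n)) ^ t * (n * Real.log (1 / b)) ≤ 1 / 16 := by
      have h3 : 0 ≤ 1 - 1 / (C * n) := by
        rw [sub_nonneg, div_le_one (by linarith)]; exact hCn
      have h4 : 1 - 1 / (C * n) ≤ Real.exp (-(1 / (C * n))) := by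
        have := Real.add_one_le_exp (-(1 / (C * n))); linarith
      have h5 : (1 - 1 / (C * n)) ^ t ≤ Real.exp (-Real.log (16 * n * L)) := by
        refine (pow_le_pow_left₀ h3 h4 t).trans ?_
        rw [← Real.exp_nat_mul, Real.exp_le_exp]
        have h6 : C * n * Real.log (16 * n * L) ≤ t := Nat.le_ceil _
        have h7 : Real.log (16 * n * L) ≤ t * (1 / (C * n)) := by
          rw [mul_one_div, le_div_iff₀ (by linarith)]; linarith
        linarith
      have h8 : 0 < 16 * n * L := by positivity
      rw [Real.exp_neg, Real.exp_log h8] at h5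
      calc _ ≤ (16 * n * L)⁻¹ * (n * Real.log (1 / b)) :=
            mul_le_mul_of_nonneg_right h5 (by positivity)
        _ ≤ (16 * n * L)⁻¹ * (n * L) := by
            refine mul_le_mul_of_nonneg_left ?_ (by positivity)
            exact mul_le_mul_of_nonneg_left (by linarith) (by linarith)
        _ = 1 / 16 := by
            have hLp : L ≠ 0 := by linarith
            field_simp
    have h3 : tvDist (fun τ => (glauberMatrix q ^ t) σ τ) q ^ 2 ≤ (1 / 4) ^ 2 := by linarith
    exact le_of_abs_le (abs_le_of_sq_le_sq h3 (by norm_num))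
  exact_mod_cast this

end TwoSpin

/-! ### Two-spin systems with pinned neighbours -/

namespace TwoSpin
set_option linter.unusedSectionVars false
variable {V : Type} [Fintype V] [DecidableEq V]

/-- Parameters of an antiferromagnetic two-spin system. -/
structure Par (β γ lam : ℝ) : Prop where
  β0 : 0 ≤ β
  βγ : β ≤ γ
  γ0 : 0 < γ
  anti : β * γ < 1
  lam0 : 0 < lam

lemma Par.β1 {β γ lam : ℝ} (h : Par β γ lam) : β ≤ 1 := by
  by_contra! hc
  nlinarith [h.βγ, h.anti]

/-- Edge interaction between two spins (`true` is spin `1`). -/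
noncomputable def ew (β γ : ℝ) : Bool → Bool → ℝ
  | true, true => β
  | false, false => γ
  | _, _ => 1

/-- Vertex weight: external field together with `k` neighbours pinned to `1`
and `l` neighbours pinned to `0`. -/
noncomputable def vw (β γ lam : ℝ) (k l : ℕ) (i : Bool) : ℝ :=
  if i then lam * β ^ k else γ ^ l

open Classical in
/-- Interaction of all edges; every edge occurs as two ordered pairs, hence the square root. -/
noncomputable def ewt (β γ : ℝ) (G : SimpleGraph V) (σ : V → Bool) : ℝ :=
  ∏ p : V × V, if G.Adj p.1 p.2 then √(ew β γ (σ p.1) (σ p.2)) else 1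

/-- Weight of the two-spin system on `G` in which `v` has `k v` additional neighbours
pinned to `1` and `l v` additional neighbours pinned to `0`. -/
noncomputable def wt (β γ lam : ℝ) (G : SimpleGraph V) (k l : V → ℕ) (σ : V → Bool) : ℝ :=
  (∏ v, vw β γ lam (k v) (l v) (σ v)) * ewt β γ G σ

open Classical in
/-- The set of neighbours of `r`. -/
noncomputable def nb (G : SimpleGraph V) (r : V) : Finset V := univ.filter (G.Adj r)

lemma mem_nb {G : SimpleGraph V} {r w : V} : w ∈ nb G r ↔ G.Adj r w := by simp [nb]

/-- `G` with all edges at `r` removed; `r` stays as an isolated vertex, so that the vertex type does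
not change. -/
def del (G : SimpleGraph V) (r : V) : SimpleGraph V := G.deleteIncidenceSet r

lemma del_adj {G : SimpleGraph V} {r u w : V} :
    (del G r).Adj u w ↔ G.Adj u w ∧ u ≠ r ∧ w ≠ r := SimpleGraph.deleteIncidenceSet_adj

/-- Every vertex has at most `D` neighbours, pinned ones included. -/
def Cls (D : ℕ) (G : SimpleGraph V) (k l : V → ℕ) : Prop :=
  ∀ v, (nb G v).card + k v + l v ≤ D

/-- Indicator of `T`, counting pins. -/
def ind (T : Finset V) (u : V) : ℕ := if u ∈ T then 1 else 0

variable {β γ lam : ℝ}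

lemma ew_nonneg (h : Par β γ lam) (i j : Bool) : 0 ≤ ew β γ i j := by
  cases i <;> cases j <;> simp [ew, h.β0, h.γ0.le]

lemma ew_symm (i j : Bool) : ew β γ i j = ew β γ j i := by
  cases i <;> cases j <;> rfl

lemma vw_nonneg (h : Par β γ lam) (k l : ℕ) (i : Bool) : 0 ≤ vw β γ lam k l i := by
  have := h.β0; have := h.γ0; have := h.lam0
  unfold vw; split_ifs <;> positivity

lemma ewt_nonneg (G : SimpleGraph V) (σ : V → Bool) : 0 ≤ ewt β γ G σ :=
  Finset.prod_nonneg fun p _ => by split_ifs <;> positivity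

lemma wt_nonneg (h : Par β γ lam) (G : SimpleGraph V) (k l : V → ℕ) (σ : V → Bool) :
    0 ≤ wt β γ lam G k l σ :=
  mul_nonneg (Finset.prod_nonneg fun _ _ => vw_nonneg h _ _ _) (ewt_nonneg G σ)

lemma wt_add (G : SimpleGraph V) (k l a c : V → ℕ) (σ : V → Bool) :
    wt β γ lam G (k + a) (l + c) σ =
      wt β γ lam G k l σ * ∏ u, if σ u then β ^ (a u) else γ ^ (c u) := by
  unfold wt
  rw [mul_right_comm, ← Finset.prod_mul_distrib]
  congr 1
  refine Finset.prod_congr rfl fun u _ => ?_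
  unfold vw
  simp only [Pi.add_apply, pow_add]
  split_ifs <;> ring

lemma prod_ind (T : Finset V) (f : V → ℝ) : ∏ u, f u ^ ind T u = ∏ u ∈ T, f u := by
  unfold ind
  simp only [pow_ite, pow_one, pow_zero]
  rw [Finset.prod_ite_mem]; simp

lemma wt_tilt1 (G : SimpleGraph V) (k l : V → ℕ) (v : V) (σ : V → Bool) :
    wt β γ lam G (k + ind {v}) l σ = wt β γ lam G k l σ * if σ v then β else 1 := by
  have := wt_add (β := β) (γ := γ) (lam := lam) G k l (ind {v}) 0 σ
  rw [add_zero] at this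
  rw [this]; congr 1
  rw [Finset.prod_eq_single v]
  · simp [ind]
  · intro u _ hu; simp [ind, hu]
  · simp

lemma wt_tilt0 (G : SimpleGraph V) (k l : V → ℕ) (v : V) (σ : V → Bool) :
    wt β γ lam G k (l + ind {v}) σ = wt β γ lam G k l σ * if σ v then 1 else γ := by
  have := wt_add (β := β) (γ := γ) (lam := lam) G k l 0 (ind {v}) σ
  rw [add_zero] at this
  rw [this]; congr 1
  rw [Finset.prod_eq_single v]
  · simp [ind]
  · intro u _ hu; simp [ind, hu]
  · simp

lemma ewt_del (h : Par β γ lam) (G : SimpleGraph V) (r : V) (σ : V → Bool) :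
    ewt β γ G σ = ewt β γ (del G r) σ * ∏ w ∈ nb G r, ew β γ (σ r) (σ w) := by
  classical
  have h1 : ∀ p : V × V, (if G.Adj p.1 p.2 then √(ew β γ (σ p.1) (σ p.2)) else 1) =
      (if (del G r).Adj p.1 p.2 then √(ew β γ (σ p.1) (σ p.2)) else 1) *
      ((if p.1 = r then (if G.Adj r p.2 then √(ew β γ (σ r) (σ p.2)) else 1) else 1) *
       (if p.2 = r then (if G.Adj r p.1 then √(ew β γ (σ r) (σ p.1)) else 1) else 1)) := by
    rintro ⟨u, w⟩
    simp only [del_adj]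
    by_cases hu : u = r
    · subst hu
      by_cases hw : w = u
      · subst hw; simp
      · simp [hw]
    · by_cases hw : w = r
      · subst hw
        simp only [hu, if_false, one_mul, ne_eq, not_true, and_false, if_true, G.adj_comm u w]
        rw [ew_symm]
      · simp [hu, hw]
  have h2 : ∏ p : V × V, (if p.1 = r then (if G.Adj r p.2 then √(ew β γ (σ r) (σ p.2)) else 1)
      else 1) = ∏ w ∈ nb G r, √(ew β γ (σ r) (σ w)) := by
    rw [Fintype.prod_prod_type, Finset.prod_eq_single r]
    · simp only [if_true]; unfold nb; rw [Finset.prod_filter]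
    · intro u _ hu; simp [hu]
    · simp
  have h3 : ∏ p : V × V, (if p.2 = r then (if G.Adj r p.1 then √(ew β γ (σ r) (σ p.1)) else 1)
      else 1) = ∏ w ∈ nb G r, √(ew β γ (σ r) (σ w)) := by
    rw [Fintype.prod_prod_type_right, Finset.prod_eq_single r]
    · simp only [if_true]; unfold nb; rw [Finset.prod_filter]
    · intro u _ hu; simp [hu]
    · simp
  unfold ewt
  rw [Finset.prod_congr rfl fun p _ => h1 p, Finset.prod_mul_distrib, Finset.prod_mul_distrib,
    h2, h3, ← Finset.prod_mul_distrib]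
  congr 1
  exact Finset.prod_congr rfl fun w _ => Real.mul_self_sqrt (ew_nonneg h _ _)

/-- Deleting `r` turns its spin into a pin at each of its neighbours. -/
lemma wt_del (h : Par β γ lam) (G : SimpleGraph V) (k l : V → ℕ) (r : V) {i : Bool}
    {σ : V → Bool} (hσ : σ r = i) :
    wt β γ lam G k l σ = wt β γ lam (del G r) (k + ind (if i then nb G r else ∅))
      (l + ind (if i then ∅ else nb G r)) σ := by
  rw [wt_add]
  unfold wt
  rw [ewt_del h G r σ, mul_assoc, hσ]
  congr 2
  have e : ∀ i j, ew β γ i j = if j then (if i then β else 1) else (if i then 1 else γ) := by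
    intro i j; cases i <;> cases j <;> rfl
  have e0 : ∀ u : V, ind (∅ : Finset V) u = 0 := fun u => by simp [ind]
  rw [← prod_ind]
  refine Finset.prod_congr rfl fun u _ => ?_
  rw [e]
  cases i <;> cases σ u <;> simp [e0]

lemma cls_del {D : ℕ} {G : SimpleGraph V} {k l : V → ℕ} (hc : Cls D G k l) (r : V)
    {T₁ T₀ : Finset V} (hT : T₁ ∪ T₀ ⊆ nb G r) (hd : Disjoint T₁ T₀) :
    Cls D (del G r) (k + ind T₁) (l + ind T₀) := by
  intro v
  have h1 := hc v
  simp only [Pi.add_apply]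
  have h2 : nb (del G r) v ⊆ nb G v := fun w hw => by
    rw [mem_nb, del_adj] at hw; exact mem_nb.2 hw.1
  have h2' := card_le_card h2
  have h3 : ind T₁ v + ind T₀ v ≤ if v ∈ nb G r then 1 else 0 := by
    unfold ind
    by_cases a : v ∈ T₁
    · have : v ∉ T₀ := disjoint_left.1 hd a
      have : v ∈ nb G r := hT (mem_union_left _ a)
      simp [*]
    · by_cases a' : v ∈ T₀
      · have : v ∈ nb G r := hT (mem_union_right _ a')
        simp [*]
      · simp [*]
  by_cases hv : v ∈ nb G r
  · rw [if_pos hv] at h3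
    have h4 : (nb (del G r) v).card < (nb G v).card := by
      refine card_lt_card (Finset.ssubset_iff_subset_ne.2 ⟨h2, fun he => ?_⟩)
      have : r ∈ nb G v := mem_nb.2 (mem_nb.1 hv).symm
      rw [← he, mem_nb, del_adj] at this
      exact this.2.2 rfl
    omega
  · rw [if_neg hv] at h3
    omega

/-- A deleted vertex is independent of everything else. -/
lemma sum_del (G : SimpleGraph V) (k l : V → ℕ) (r : V) {F : (V → Bool) → ℝ}
    (hF : Meas {r}ᶜ F) (i : Bool) :
    (∑ σ, if σ r = i then wt β γ lam (del G r) k l σ * F σ else 0) *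
      (vw β γ lam (k r) (l r) true + vw β γ lam (k r) (l r) false) =
      vw β γ lam (k r) (l r) i * ∑ σ, wt β γ lam (del G r) k l σ * F σ := by
  classical
  set W := wt β γ lam (del G r) k l with hW
  set w := vw β γ lam (k r) (l r) with hw
  set fl : (V → Bool) → (V → Bool) := fun σ => Function.update σ r (!σ r) with hfl
  have hinv : Function.Involutive fl := fun σ => by simp [hfl]
  have h1 : ∀ σ, W (fl σ) * w (σ r) = W σ * w (!σ r) := by
    intro σ
    have e1 : ewt β γ (del G r) (fl σ) = ewt β γ (del G r) σ := by
      unfold ewt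
      refine Finset.prod_congr rfl fun p _ => ?_
      by_cases hp : (del G r).Adj p.1 p.2
      · rw [del_adj] at hp; simp [hfl, hp.2.1, hp.2.2]
      · simp [hp]
    have e2 : ∀ σ : V → Bool, ∏ v, vw β γ lam (k v) (l v) (σ v) =
        w (σ r) * ∏ v ∈ univ.erase r, vw β γ lam (k v) (l v) (σ v) := fun σ =>
      (Finset.mul_prod_erase univ _ (mem_univ r)).symm
    have e3 : ∏ v ∈ univ.erase r, vw β γ lam (k v) (l v) (fl σ v) =
        ∏ v ∈ univ.erase r, vw β γ lam (k v) (l v) (σ v) :=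
      Finset.prod_congr rfl fun v hv => by simp [hfl, (mem_erase.1 hv).1]
    have e4 : fl σ r = !σ r := by simp [hfl]
    simp only [hW]; unfold wt
    rw [e1, e2 σ, e2 (fl σ), e3, e4]; ring
  have hFf : ∀ σ, F (fl σ) = F σ := fun σ => hF _ _ fun u hu => by
    have : u ≠ r := by simpa using hu
    simp [hfl, this]
  set A : Bool → ℝ := fun i => ∑ σ, if σ r = i then W σ * F σ else 0 with hA
  have h2 : A (!i) * w i = A i * w (!i) := by
    simp only [hA, Finset.sum_mul]
    rw [← Equiv.sum_comp (hinv.toPerm fl)]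
    refine Finset.sum_congr rfl fun σ _ => ?_
    have e5 : (hinv.toPerm fl) σ = fl σ := rfl
    have e4 : fl σ r = !σ r := by simp [hfl]
    by_cases hi : σ r = i
    · have e6 : fl σ r = !i := by rw [e4, hi]
      rw [e5, if_pos e6, if_pos hi, hFf, ← hi]
      linear_combination F σ * h1 σ
    · have e6 : ¬ fl σ r = !i := by rw [e4]; simpa using hi
      rw [e5, if_neg e6, if_neg hi, zero_mul, zero_mul]
  have h3 : ∑ σ, W σ * F σ = A i + A (!i) := by
    simp only [hA]; rw [← Finset.sum_add_distrib]
    refine Finset.sum_congr rfl fun σ _ => ?_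
    cases σ r <;> cases i <;> simp
  rw [h3]
  change A i * _ = _
  cases i <;> simp only [Bool.not_true, Bool.not_false] at h2 ⊢ <;> linarith

lemma vw_sum_pos (h : Par β γ lam) (k l : ℕ) :
    0 < vw β γ lam k l true + vw β γ lam k l false := by
  have h1 := vw_nonneg h k l true
  have h2 : 0 < vw β γ lam k l false := by unfold vw; simp; exact pow_pos h.γ0 _
  linarith

/-- Pinning a set of vertices again gives a two-spin system of the same class. -/
lemma pin_reduce (h : Par β γ lam) {D : ℕ} {G : SimpleGraph V} {k l : V → ℕ} (hc : Cls D G k l)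
    (S : Finset V) (σ : V → Bool) : ∃ (G' : SimpleGraph V) (k' l' : V → ℕ) (c : ℝ),
      Cls D G' k' l' ∧ 0 ≤ c ∧ ∀ F, Meas Sᶜ F →
        mg (fun τ => wt β γ lam G k l τ * F τ) S σ = c * ∑ τ, wt β γ lam G' k' l' τ * F τ := by
  induction S using Finset.induction_on with
  | empty =>
    exact ⟨G, k, l, 1, hc, zero_le_one, fun F _ => by rw [mg_empty, one_mul]⟩
  | insert r S hr ih =>
    obtain ⟨G', k', l', c, hc', hc0, hF'⟩ := ih
    set N := nb G' r
    set k₂ := k' + ind (if σ r then N else ∅)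
    set l₂ := l' + ind (if σ r then ∅ else N)
    set s := vw β γ lam (k₂ r) (l₂ r) true + vw β γ lam (k₂ r) (l₂ r) false
    have hs : 0 < s := vw_sum_pos h _ _
    refine ⟨del G' r, k₂, l₂, c * (vw β γ lam (k₂ r) (l₂ r) (σ r) / s), ?_,
      mul_nonneg hc0 (div_nonneg (vw_nonneg h _ _ _) hs.le), ?_⟩
    · refine cls_del hc' r ?_ ?_ <;> cases σ r <;> simp [N]
    · intro F hF
      have h1 := hF' (fun τ => F τ * if τ r = σ r then 1 else 0) (by
        intro τ τ' ht
        have e1 : τ r = τ' r := ht r (by simpa using hr)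
        have e2 : F τ = F τ' := hF τ τ' fun u hu => ht u (by
          simp only [mem_compl, mem_insert, not_or] at hu ⊢; exact hu.2)
        simp only [e1, e2])
      have h2 : mg (fun τ => wt β γ lam G k l τ * F τ) (insert r S) σ =
          mg (fun τ => wt β γ lam G k l τ * (F τ * if τ r = σ r then 1 else 0)) S σ := by
        unfold mg
        refine Finset.sum_congr rfl fun τ _ => ?_
        simp only [mem_insert, forall_eq_or_imp]
        by_cases h3 : τ r = σ r <;> simp [h3]
      have h4 := sum_del (β := β) (γ := γ) (lam := lam) G' k₂ l₂ r (F := F)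
        (fun τ τ' ht => hF τ τ' fun u hu => ht u (by
          simp only [mem_compl, mem_insert, not_or, mem_singleton] at hu ⊢; exact hu.1)) (σ r)
      rw [h2, h1, mul_assoc]
      congr 1
      rw [div_mul_eq_mul_div, eq_div_iff hs.ne', ← h4]
      congr 1
      refine Finset.sum_congr rfl fun τ _ => ?_
      split_ifs with h5
      · rw [wt_del h G' k' l' r h5]; ring
      · ring

end TwoSpin

/-! ### The tree recursion for the total influence of a vertex -/

namespace TwoSpin
set_option linter.unusedSectionVars false
variable {V : Type} [Fintype V] [DecidableEq V]

/-- Total weight of the configurations with spin `i` at `v`. -/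
noncomputable def m1 (w : (V → Bool) → ℝ) (v : V) (i : Bool) : ℝ :=
  ∑ σ, if σ v = i then w σ else 0

/-- Total weight of the configurations with spin `i` at `u` and spin `j` at `v`. -/
noncomputable def m2 (w : (V → Bool) → ℝ) (u : V) (i : Bool) (v : V) (j : Bool) : ℝ :=
  ∑ σ, if σ u = i then (if σ v = j then w σ else 0) else 0

/-- Unnormalised covariance of the spins at `u` and `v`. -/
noncomputable def cov (w : (V → Bool) → ℝ) (u v : V) : ℝ :=
  m2 w u true v true * m2 w u false v false - m2 w u true v false * m2 w u false v true

lemma m1_nonneg {w : (V → Bool) → ℝ} (hw : ∀ σ, 0 ≤ w σ) (v : V) (i : Bool) : 0 ≤ m1 w v i :=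
  Finset.sum_nonneg fun σ _ => by split_ifs; exacts [hw σ, le_rfl]

lemma m2_nonneg {w : (V → Bool) → ℝ} (hw : ∀ σ, 0 ≤ w σ) (u : V) (i : Bool) (v : V) (j : Bool) :
    0 ≤ m2 w u i v j :=
  Finset.sum_nonneg fun σ _ => by split_ifs; exacts [hw σ, le_rfl, le_rfl]

lemma m1_add (w : (V → Bool) → ℝ) (v : V) : m1 w v true + m1 w v false = ∑ σ, w σ := by
  unfold m1; rw [← Finset.sum_add_distrib]
  exact Finset.sum_congr rfl fun σ _ => by cases σ v <;> simp

lemma m2_add (w : (V → Bool) → ℝ) (u : V) (i : Bool) (v : V) :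
    m2 w u i v true + m2 w u i v false = m1 w u i := by
  unfold m1 m2; rw [← Finset.sum_add_distrib]
  exact Finset.sum_congr rfl fun σ _ => by cases σ v <;> simp

lemma m2_symm (w : (V → Bool) → ℝ) (u : V) (i : Bool) (v : V) (j : Bool) :
    m2 w u i v j = m2 w v j u i := by
  unfold m2
  exact Finset.sum_congr rfl fun σ _ => by split_ifs <;> rfl

lemma m2_add' (w : (V → Bool) → ℝ) (u : V) (v : V) (j : Bool) :
    m2 w u true v j + m2 w u false v j = m1 w v j := by
  rw [m2_symm, m2_symm w u false, m2_add]

lemma cov_symm (w : (V → Bool) → ℝ) (u v : V) : cov w u v = cov w v u := by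
  unfold cov
  rw [m2_symm w u, m2_symm w u false, m2_symm w u true v false, m2_symm w u false v true]; ring

lemma cov_self (w : (V → Bool) → ℝ) (v : V) : cov w v v = m1 w v true * m1 w v false := by
  have h1 : m2 w v true v false = 0 :=
    Finset.sum_eq_zero fun σ _ => by cases σ v <;> simp
  have h2 := m2_add w v true v
  have h3 : m2 w v false v true = 0 :=
    Finset.sum_eq_zero fun σ _ => by cases σ v <;> simp
  have h4 := m2_add w v false v
  unfold cov
  rw [← h2, ← h4, h1, h3]; ring

/-- `Σ w·f(σ u)·g(σ v)` expanded. -/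
lemma sum_two (w : (V → Bool) → ℝ) (u v : V) (f g : Bool → ℝ) :
    ∑ σ, w σ * (f (σ u) * g (σ v)) =
      f true * g true * m2 w u true v true + f true * g false * m2 w u true v false +
      f false * g true * m2 w u false v true + f false * g false * m2 w u false v false := by
  unfold m2
  simp only [Finset.mul_sum, ← Finset.sum_add_distrib]
  exact Finset.sum_congr rfl fun σ _ => by cases σ u <;> cases σ v <;> simp <;> ring

lemma sum_one (w : (V → Bool) → ℝ) (u : V) (f : Bool → ℝ) :
    ∑ σ, w σ * f (σ u) = f true * m1 w u true + f false * m1 w u false := by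
  unfold m1
  simp only [Finset.mul_sum, ← Finset.sum_add_distrib]
  exact Finset.sum_congr rfl fun σ _ => by cases σ u <;> simp <;> ring

/-- `h(x) = |d log F / d log x|` for the message `F(x) = (βx+1)/(x+γ)`. -/
noncomputable def hf (β γ x : ℝ) : ℝ := (1 - β * γ) * x / ((β * x + 1) * (x + γ))

/-- The message `F(x)` a child with marginal ratio `x` sends to its parent. -/
noncomputable def Ff (β γ x : ℝ) : ℝ := (β * x + 1) / (x + γ)

/-- `h` as a function of the message `z = F(x)`, so that `H(F(x)) = h(x)`. The value at `z = 0`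
(possible only for `β = 0`) is junk; a message `0` makes the ratio at the parent vanish. -/
noncomputable def Hf (β γ z : ℝ) : ℝ := ((1 + β * γ) - γ * z - β / z) / (1 - β * γ)

variable {β γ lam : ℝ}

lemma Hf_Ff (h : Par β γ lam) {x : ℝ} (hx : 0 ≤ x) : Hf β γ (Ff β γ x) = hf β γ x := by
  have h1 : 0 < β * x + 1 := by have := mul_nonneg h.β0 hx; linarith
  have h2 : 0 < x + γ := by linarith [h.γ0]
  have h3 : 1 - β * γ ≠ 0 := by linarith [h.anti]
  unfold Hf Ff hf
  field_simp
  ring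

lemma hf_nonneg (h : Par β γ lam) {x : ℝ} (hx : 0 ≤ x) : 0 ≤ hf β γ x := by
  have h1 : 0 < β * x + 1 := by have := mul_nonneg h.β0 hx; linarith
  have h2 : 0 < x + γ := by linarith [h.γ0]
  have h3 : 0 ≤ 1 - β * γ := by linarith [h.anti]
  unfold hf; positivity

lemma hf_pos (h : Par β γ lam) {x : ℝ} (hx : 0 < x) : 0 < hf β γ x := by
  have h1 : 0 < β * x + 1 := by have := mul_nonneg h.β0 hx.le; linarith
  have h2 : 0 < x + γ := by linarith [h.γ0]
  have h3 : 0 < 1 - β * γ := by linarith [h.anti]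
  unfold hf; positivity

lemma hf_le_one (h : Par β γ lam) {x : ℝ} (hx : 0 ≤ x) : hf β γ x ≤ 1 := by
  have h1 : 0 < β * x + 1 := by have := mul_nonneg h.β0 hx; linarith
  have h2 : 0 < x + γ := by linarith [h.γ0]
  unfold hf
  rw [div_le_one (by positivity)]
  have h3 := h.β0
  have h4 := h.γ0
  have : 0 ≤ β * γ * x := by positivity
  have : 0 ≤ β * x * x := by positivity
  nlinarith

lemma Ff_bounds (h : Par β γ lam) {x : ℝ} (hx : 0 ≤ x) :
    β ≤ Ff β γ x ∧ Ff β γ x ≤ 1 / γ := by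
  have h2 : 0 < x + γ := by linarith [h.γ0]
  unfold Ff
  constructor
  · rw [le_div_iff₀ h2]; nlinarith [h.anti]
  · rw [div_le_div_iff₀ h2 h.γ0]; nlinarith [h.anti]

lemma Ff_pos (h : Par β γ lam) {x : ℝ} (hx : 0 ≤ x) : 0 < Ff β γ x := by
  have h1 : 0 < β * x + 1 := by have := mul_nonneg h.β0 hx; linarith
  have h2 : 0 < x + γ := by linarith [h.γ0]
  unfold Ff; positivity

/-- Influence bound at a root: the ratio `M₁/M₀` is at most `rmax` and the total covariance is
controlled by `A / √h(M₁/M₀)`. -/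
def Good (β γ A rmax : ℝ) (w : (V → Bool) → ℝ) (v : V) : Prop :=
  m1 w v true ≤ rmax * m1 w v false ∧ (0 < m1 w v true →
    ∑ u, |cov w v u| ≤ A * (m1 w v true * m1 w v false) /
      √(hf β γ (m1 w v true / m1 w v false)))

/-- Flipping one pin at `v` from `0` to `1`: effect on the partition function and on all the
marginals. -/
lemma tilt (h : Par β γ lam) {A rmax : ℝ} {w wa wb : (V → Bool) → ℝ} (hw : ∀ σ, 0 ≤ w σ)
    {v : V} (hg : Good β γ A rmax w v) (hM0 : 0 < m1 w v false)
    (ha : ∀ σ, wa σ = w σ * if σ v then β else 1) (hb : ∀ σ, wb σ = w σ * if σ v then 1 else γ) :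
    ∃ R, 0 ≤ R ∧ R ≤ rmax ∧ ∑ σ, wa σ = Ff β γ R * ∑ σ, wb σ ∧
      ∑ u, |m1 wa u true / ∑ σ, wa σ - m1 wb u true / ∑ σ, wb σ| ≤ A * √(hf β γ R) := by
  have hM1 := m1_nonneg hw v true
  set M1 := m1 w v true
  set M0 := m1 w v false
  have hR0 : 0 ≤ M1 / M0 := by positivity
  have hZa : ∑ σ, wa σ = β * M1 + M0 := by
    rw [Finset.sum_congr rfl fun σ _ => ha σ]
    have := sum_one w v (fun i => if i then β else 1)
    simpa using this
  have hZb : ∑ σ, wb σ = M1 + γ * M0 := by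
    rw [Finset.sum_congr rfl fun σ _ => hb σ]
    have := sum_one w v (fun i => if i then 1 else γ)
    simpa using this
  have hβ := h.β0
  have hγ := h.γ0
  have hZap : 0 < β * M1 + M0 := by positivity
  have hZbp : 0 < M1 + γ * M0 := by positivity
  refine ⟨M1 / M0, hR0, ?_, ?_, ?_⟩
  · rw [div_le_iff₀ hM0]; exact hg.1
  · rw [hZa, hZb]; unfold Ff; field_simp
  · have hma : ∀ u, m1 wa u true = β * m2 w v true u true + m2 w v false u true := by
      intro u
      have := sum_two w v u (fun i => if i then β else 1) (fun i => if i then 1 else 0)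
      simp only [if_true, Bool.false_eq_true, if_false, mul_one, mul_zero, zero_mul, add_zero,
        one_mul] at this
      rw [← this]
      refine Finset.sum_congr rfl fun σ _ => ?_
      rw [ha]; split_ifs <;> simp
    have hmb : ∀ u, m1 wb u true = m2 w v true u true + γ * m2 w v false u true := by
      intro u
      have := sum_two w v u (fun i => if i then 1 else γ) (fun i => if i then 1 else 0)
      simp only [if_true, Bool.false_eq_true, if_false, mul_one, mul_zero, zero_mul, add_zero,
        one_mul] at this
      rw [← this]
      refine Finset.sum_congr rfl fun σ _ => ?_
      rw [hb]; split_ifs <;> simp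
    have hdiff : ∀ u, |m1 wa u true / ∑ σ, wa σ - m1 wb u true / ∑ σ, wb σ| =
        (1 - β * γ) / ((β * M1 + M0) * (M1 + γ * M0)) * |cov w v u| := by
      intro u
      have e1 : m2 w v true u true + m2 w v true u false = M1 := m2_add w v true u
      have e0 : m2 w v false u true + m2 w v false u false = M0 := m2_add w v false u
      rw [hZa, hZb, hma, hmb, div_sub_div _ _ hZap.ne' hZbp.ne', abs_div,
        abs_of_pos (mul_pos hZap hZbp), div_mul_eq_mul_div]
      congr 1
      have : (β * m2 w v true u true + m2 w v false u true) * (M1 + γ * M0) -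
          (β * M1 + M0) * (m2 w v true u true + γ * m2 w v false u true) =
          -((1 - β * γ) * cov w v u) := by
        unfold cov; rw [← e1, ← e0]; ring
      rw [this, abs_neg, abs_mul, abs_of_pos (by linarith [h.anti])]
    rw [Finset.sum_congr rfl fun u _ => hdiff u, ← Finset.mul_sum]
    rcases hM1.eq_or_lt with h0 | h0
    · have hc : ∀ u, cov w v u = 0 := by
        intro u
        have e1 : m2 w v true u true + m2 w v true u false = 0 := by
          rw [m2_add w v true u]; exact h0.symm
        have := m2_nonneg hw v true u true
        have := m2_nonneg hw v true u false
        unfold cov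
        rw [show m2 w v true u true = 0 by linarith, show m2 w v true u false = 0 by linarith]
        ring
      simp [hc, ← h0, hf]
    · have h1 := hg.2 h0
      have hR : 0 < M1 / M0 := by positivity
      have hh : 0 < √(hf β γ (M1 / M0)) := Real.sqrt_pos.2 (hf_pos h hR)
      have h3 : 0 < 1 - β * γ := by linarith [h.anti]
      calc _ ≤ (1 - β * γ) / ((β * M1 + M0) * (M1 + γ * M0)) *
            (A * (M1 * M0) / √(hf β γ (M1 / M0))) := by gcongr
        _ = A * (hf β γ (M1 / M0) / √(hf β γ (M1 / M0))) := by
            have : hf β γ (M1 / M0) =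
                (1 - β * γ) * (M1 * M0) / ((β * M1 + M0) * (M1 + γ * M0)) := by
              unfold hf; field_simp
            rw [show (1 - β * γ) / ((β * M1 + M0) * (M1 + γ * M0)) *
              (A * (M1 * M0) / √(hf β γ (M1 / M0))) = A * ((1 - β * γ) * (M1 * M0) /
              ((β * M1 + M0) * (M1 + γ * M0)) / √(hf β γ (M1 / M0))) by ring, ← this]
        _ = _ := by rw [Real.div_sqrt]

lemma wt_zero_pos (h : Par β γ lam) (G : SimpleGraph V) (k l : V → ℕ) :
    0 < wt β γ lam G k l (fun _ => false) := by
  unfold wt ewt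
  refine mul_pos (Finset.prod_pos fun v _ => ?_) (Finset.prod_pos fun p _ => ?_)
  · simp only [vw]; simpa using pow_pos h.γ0 _
  · split_ifs
    · exact Real.sqrt_pos.2 h.γ0
    · exact one_pos

lemma m1_false_pos (h : Par β γ lam) (G : SimpleGraph V) (k l : V → ℕ) (v : V) :
    0 < m1 (wt β γ lam G k l) v false := by
  refine lt_of_lt_of_le (wt_zero_pos h G k l) ?_
  have := Finset.single_le_sum (f := fun σ : V → Bool => if σ v = false then wt β γ lam G k l σ
    else 0) (s := univ) (fun σ _ => by
      split_ifs
      exacts [wt_nonneg h G k l σ, le_rfl]) (mem_univ fun _ => false)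
  simpa [m1] using this

/-- One step of the tree recursion: if all children are good, the root ratio and the total
covariance at the root are expressed through ratios `rs` at the children. Deleting the root turns
its spin into a pin at each neighbour, and the pins are switched from `0` to `1` one neighbour at a
time. The `rs` are the ratios at the neighbour being switched, in these intermediate systems; they
are the ratios along the self-avoiding walk tree, which is never built. -/
lemma rec_step (h : Par β γ lam) {A rmax : ℝ} {D : ℕ} {G : SimpleGraph V} {k l : V → ℕ}
    (hc : Cls D G k l) (r : V)
    (hgood : ∀ v ∈ nb G r, ∀ k' l', Cls D (del G r) k' l' →
      (nb (del G r) v).card + k' v + l' v < D →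
      Good β γ A rmax (wt β γ lam (del G r) k' l') v) :
    ∃ rs : Multiset ℝ, rs.card = (nb G r).card ∧ (∀ x ∈ rs, 0 ≤ x ∧ x ≤ rmax) ∧
      m1 (wt β γ lam G k l) r true =
        lam * β ^ k r * (1 / γ) ^ l r * (rs.map (Ff β γ)).prod * m1 (wt β γ lam G k l) r false ∧
      ∑ u, |cov (wt β γ lam G k l) r u| ≤
        m1 (wt β γ lam G k l) r true * m1 (wt β γ lam G k l) r false *
          (1 + A * (rs.map fun x => √(hf β γ x)).sum) := by
  set N := nb G r with hN
  have hrN : r ∉ N := by simp [hN, mem_nb]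
  -- the system without `r` in which the neighbours in `T` have a pin `1`, the others a pin `0`
  set J : Finset V → (V → Bool) → ℝ := fun T =>
    wt β γ lam (del G r) (k + ind T) (l + ind (N \ T)) with hJ
  have hJ0 : ∀ T, 0 < ∑ σ, J T σ := fun T => by
    have h1 := m1_false_pos h (del G r) (k + ind T) (l + ind (N \ T)) r
    have h2 := m1_nonneg (wt_nonneg h (del G r) (k + ind T) (l + ind (N \ T))) r true
    rw [← m1_add (J T) r]; linarith
  have key : ∀ T ⊆ N, ∃ rs : Multiset ℝ, rs.card = T.card ∧ (∀ x ∈ rs, 0 ≤ x ∧ x ≤ rmax) ∧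
      ∑ σ, J T σ = (rs.map (Ff β γ)).prod * ∑ σ, J ∅ σ ∧
      ∑ u, |m1 (J T) u true / ∑ σ, J T σ - m1 (J ∅) u true / ∑ σ, J ∅ σ| ≤
        A * (rs.map fun x => √(hf β γ x)).sum := by
    intro T
    induction T using Finset.induction_on with
    | empty => intro _; exact ⟨0, by simp⟩
    | insert v T hv ih =>
      intro hT
      have hvN : v ∈ N := hT (mem_insert_self _ _)
      obtain ⟨rs, h1, h2, h3, h4⟩ := ih fun x hx => hT (mem_insert_of_mem hx)
      have hd : Disjoint T (N \ insert v T) := by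
        rw [disjoint_left]; intro x hx hx'
        exact (mem_sdiff.1 hx').2 (mem_insert_of_mem hx)
      have hcl : Cls D (del G r) (k + ind T) (l + ind (N \ insert v T)) :=
        cls_del hc r (union_subset (fun x hx => hT (mem_insert_of_mem hx)) sdiff_subset) hd
      have hdeg : (nb (del G r) v).card + (k + ind T) v + (l + ind (N \ insert v T)) v < D := by
        have a1 := hc v
        have a2 : nb (del G r) v ⊂ nb G v := by
          refine Finset.ssubset_iff_subset_ne.2 ⟨fun w hw => ?_, fun he => ?_⟩
          · rw [mem_nb, del_adj] at hw; exact mem_nb.2 hw.1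
          · have : r ∈ nb G v := mem_nb.2 (mem_nb.1 hvN).symm
            rw [← he, mem_nb, del_adj] at this
            exact this.2.2 rfl
        have a3 := card_lt_card a2
        simp only [Pi.add_apply, ind, if_neg hv]
        simp
        omega
      obtain ⟨R, b0, b1, b2, b3⟩ := tilt h (wt_nonneg h _ _ _) (hgood v hvN _ _ hcl hdeg)
        (m1_false_pos h _ _ _ _) (wa := J (insert v T)) (wb := J T)
        (fun σ => by
          rw [← wt_tilt1]; simp only [hJ]; congr 1
          funext u; simp only [Pi.add_apply, ind, mem_insert, mem_singleton]
          by_cases hu : u = v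
          · subst hu; simp [hv]
          · simp [hu])
        (fun σ => by
          rw [← wt_tilt0]; simp only [hJ]; congr 1
          funext u; simp only [Pi.add_apply, ind, mem_insert, mem_singleton, mem_sdiff]
          by_cases hu : u = v
          · subst hu; simp [hv, hvN]
          · simp [hu])
      refine ⟨R ::ₘ rs, ?_, ?_, ?_, ?_⟩
      · rw [Multiset.card_cons, card_insert_of_notMem hv, h1]
      · intro x hx
        rcases Multiset.mem_cons.1 hx with rfl | hx
        exacts [⟨b0, b1⟩, h2 x hx]
      · rw [b2, h3, Multiset.map_cons, Multiset.prod_cons, mul_assoc]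
      · rw [Multiset.map_cons, Multiset.sum_cons, mul_add]
        refine le_trans ?_ (add_le_add b3 h4)
        rw [← Finset.sum_add_distrib]
        exact Finset.sum_le_sum fun u _ => abs_sub_le _ _ _
  obtain ⟨rs, h1, h2, h3, h4⟩ := key N subset_rfl
  set w := wt β γ lam G k l with hw
  set s := vw β γ lam (k r) (l r) true + vw β γ lam (k r) (l r) false with hs
  have hs0 : 0 < s := vw_sum_pos h _ _
  -- conditioning on the spin `i` at `r` gives the system with all pins equal to `i`
  have hroot : ∀ F, Meas {r}ᶜ F → ∀ i, (∑ σ, if σ r = i then w σ * F σ else 0) =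
      vw β γ lam (k r) (l r) i / s * ∑ σ, J (if i then N else ∅) σ * F σ := by
    intro F hF i
    have a1 := sum_del (β := β) (γ := γ) (lam := lam) G (k + ind (if i then N else ∅))
      (l + ind (N \ (if i then N else ∅))) r hF i
    have a2 : (k + ind (if i then N else ∅)) r = k r := by
      cases i <;> simp [ind, hrN]
    have a3 : (l + ind (N \ (if i then N else ∅))) r = l r := by
      cases i <;> simp [ind, hrN]
    rw [a2, a3] at a1
    rw [div_mul_eq_mul_div, eq_div_iff hs0.ne', ← a1]
    congr 1
    refine Finset.sum_congr rfl fun σ _ => ?_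
    by_cases hi : σ r = i
    · rw [if_pos hi, if_pos hi, hw, wt_del h G k l r hi]
      cases i <;> simp [hN]
    · rw [if_neg hi, if_neg hi]
  have hM : ∀ i, m1 w r i = vw β γ lam (k r) (l r) i / s * ∑ σ, J (if i then N else ∅) σ := by
    intro i
    have := hroot (fun _ => 1) (fun _ _ _ => rfl) i
    simpa [m1] using this
  have hMM : ∀ i u, u ≠ r → m2 w r i u true =
      vw β γ lam (k r) (l r) i / s * m1 (J (if i then N else ∅)) u true := by
    intro i u hu
    have := hroot (fun σ => if σ u = true then 1 else 0) (fun σ τ hτ => by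
      dsimp only; rw [hτ u (by simpa using hu)]) i
    simpa [m1, m2] using this
  have hM1 := hM true
  have hM0 := hM false
  simp only [if_true, Bool.false_eq_true, if_false] at hM1 hM0
  refine ⟨rs, h1, h2, ?_, ?_⟩
  · rw [hM1, hM0, h3]
    have : γ ≠ 0 := h.γ0.ne'
    simp only [vw, if_true, Bool.false_eq_true, if_false, one_div, inv_pow]
    field_simp
  · have hcov : ∀ u ∈ univ.erase r, |cov w r u| = m1 w r true * m1 w r false *
        |m1 (J N) u true / ∑ σ, J N σ - m1 (J ∅) u true / ∑ σ, J ∅ σ| := by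
      intro u hu
      have hu' := (mem_erase.1 hu).1
      have c1 := hMM true u hu'
      have c0 := hMM false u hu'
      simp only [if_true, Bool.false_eq_true, if_false] at c1 c0
      have d1 := m2_add w r true u
      have d0 := m2_add w r false u
      have e : cov w r u = m2 w r true u true * m1 w r false - m1 w r true * m2 w r false u true := by
        unfold cov; rw [← d1, ← d0]; ring
      have hp : 0 ≤ m1 w r true * m1 w r false :=
        mul_nonneg (m1_nonneg (wt_nonneg h G k l) _ _) (m1_nonneg (wt_nonneg h G k l) _ _)
      nth_rw 1 [← abs_of_nonneg hp]
      rw [← abs_mul, e, c1, c0, hM1, hM0]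
      congr 1
      have := (hJ0 N).ne'
      have := (hJ0 ∅).ne'
      field_simp
    have hp : 0 ≤ m1 w r true * m1 w r false :=
        mul_nonneg (m1_nonneg (wt_nonneg h G k l) _ _) (m1_nonneg (wt_nonneg h G k l) _ _)
    rw [← Finset.add_sum_erase univ _ (mem_univ r), cov_self, abs_of_nonneg hp,
      Finset.sum_congr rfl hcov, ← Finset.mul_sum, mul_add, mul_one]
    gcongr
    refine le_trans (Finset.sum_le_sum_of_subset_of_nonneg (erase_subset _ _)
      fun _ _ _ => abs_nonneg _) h4

end TwoSpin

/-! ### Spectral independence from contraction of the tree recursion -/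

namespace TwoSpin
set_option linter.unusedSectionVars false
variable {V : Type} [Fintype V] [DecidableEq V]
variable {β γ lam : ℝ}

/-- Contraction of the tree recursion with fewer than `Δ` children, in the potential for which the
derivative of one coordinate is `√(h(root) h(child))`; `z` ranges over the edge messages. -/
def Contr (β γ lam : ℝ) (Δ : ℕ) (κ : ℝ) : Prop :=
  ∀ m : Multiset ℝ, m.card < Δ → (∀ z ∈ m, β ≤ z ∧ z ≤ 1 / γ) →
    hf β γ (lam * m.prod) * ((m.map fun z => √(Hf β γ z)).sum) ^ 2 ≤ κ

/-- Upper bound for the marginal ratios `μ(σ_v = 1) / μ(σ_v = 0)`. -/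
noncomputable def rmax (γ lam : ℝ) (Δ : ℕ) : ℝ := lam * (max 1 (1 / γ)) ^ Δ

open Classical in
/-- The non-isolated vertices. -/
noncomputable def nis (G : SimpleGraph V) : Finset V := univ.filter fun v => (nb G v).Nonempty

/-- Deleting a non-isolated vertex decreases the number of non-isolated vertices: the measure for
the induction along the tree recursion. -/
lemma nis_del {G : SimpleGraph V} {r v : V} (hv : v ∈ nb G r) :
    (nis (del G r)).card < (nis G).card := by
  refine card_lt_card (Finset.ssubset_iff_subset_ne.2 ⟨fun w hw => ?_, fun he => ?_⟩)
  · simp only [nis, mem_filter, mem_univ, true_and] at hw ⊢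
    obtain ⟨x, hx⟩ := hw
    rw [mem_nb, del_adj] at hx
    exact ⟨x, mem_nb.2 hx.1⟩
  · have : r ∈ nis G := by simp only [nis, mem_filter, mem_univ, true_and]; exact ⟨v, hv⟩
    rw [← he] at this
    simp only [nis, mem_filter, mem_univ, true_and] at this
    obtain ⟨x, hx⟩ := this
    rw [mem_nb, del_adj] at hx
    exact hx.2.1 rfl

lemma prod_le_pow_card {B : ℝ} (hB : 1 ≤ B) (m : Multiset ℝ) (h0 : ∀ z ∈ m, 0 ≤ z)
    (h1 : ∀ z ∈ m, z ≤ B) {D : ℕ} (hD : m.card ≤ D) : m.prod ≤ B ^ D := by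
  refine le_trans ?_ (pow_le_pow_right₀ hB hD)
  clear hD
  induction m using Multiset.induction_on with
  | empty => simp
  | cons a s ih =>
    rw [Multiset.prod_cons, Multiset.card_cons, pow_succ']
    refine mul_le_mul (h1 a (Multiset.mem_cons_self _ _)) (ih (fun z hz => h0 z ?_)
      fun z hz => h1 z ?_) (Multiset.prod_nonneg fun z hz => h0 z ?_) (by linarith)
    all_goals exact Multiset.mem_cons_of_mem hz

lemma le_prod_pow_card {c : ℝ} (hc : 0 ≤ c) (hc1 : c ≤ 1) (m : Multiset ℝ)
    (h1 : ∀ z ∈ m, c ≤ z) {D : ℕ} (hD : m.card ≤ D) : c ^ D ≤ m.prod := by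
  refine le_trans (pow_le_pow_of_le_one hc hc1 hD) ?_
  clear hD
  induction m using Multiset.induction_on with
  | empty => simp
  | cons a s ih =>
    rw [Multiset.prod_cons, Multiset.card_cons, pow_succ']
    exact mul_le_mul (h1 a (Multiset.mem_cons_self _ _)) (ih fun z hz => h1 z
      (Multiset.mem_cons_of_mem hz)) (pow_nonneg hc _) (hc.trans (h1 a (Multiset.mem_cons_self _ _)))

lemma rmax_pos (h : Par β γ lam) (Δ : ℕ) : 0 < rmax γ lam Δ := by
  have := h.lam0
  unfold rmax; positivity

/-- All edge messages at a vertex: those of the children and those of the pinned neighbours. -/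
noncomputable def msgs (β γ : ℝ) (rs : Multiset ℝ) (k l : ℕ) : Multiset ℝ :=
  rs.map (Ff β γ) + Multiset.replicate k β + Multiset.replicate l (1 / γ)

lemma msgs_card (rs : Multiset ℝ) (k l : ℕ) : (msgs β γ rs k l).card = rs.card + k + l := by
  simp [msgs]

lemma msgs_prod (rs : Multiset ℝ) (k l : ℕ) : lam * (msgs β γ rs k l).prod =
    lam * β ^ k * (1 / γ) ^ l * (rs.map (Ff β γ)).prod := by
  simp only [msgs, Multiset.prod_add, Multiset.prod_replicate]; ring

lemma msgs_bd (h : Par β γ lam) {rs : Multiset ℝ} (hrs : ∀ x ∈ rs, 0 ≤ x) {k l : ℕ} :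
    ∀ z ∈ msgs β γ rs k l, β ≤ z ∧ z ≤ 1 / γ := by
  have hb : β ≤ 1 / γ := by rw [le_div_iff₀ h.γ0]; exact h.anti.le
  intro z hz
  simp only [msgs, Multiset.mem_add, Multiset.mem_map] at hz
  rcases hz with (⟨x, hx, rfl⟩ | hz) | hz
  · exact Ff_bounds h (hrs x hx)
  · rw [Multiset.eq_of_mem_replicate hz]; exact ⟨le_rfl, hb⟩
  · rw [Multiset.eq_of_mem_replicate hz]; exact ⟨hb, le_rfl⟩

/-- Pinned neighbours only enlarge the sum of the `√H`. -/
lemma msgs_sum (h : Par β γ lam) {rs : Multiset ℝ} (hrs : ∀ x ∈ rs, 0 ≤ x) (k l : ℕ) :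
    (rs.map fun x => √(hf β γ x)).sum ≤ ((msgs β γ rs k l).map fun z => √(Hf β γ z)).sum := by
  simp only [msgs, Multiset.map_add, Multiset.sum_add, Multiset.map_map]
  have e : (rs.map fun x => √(hf β γ x)) = rs.map ((fun z => √(Hf β γ z)) ∘ Ff β γ) :=
    Multiset.map_congr rfl fun x hx => by simp [Hf_Ff h (hrs x hx)]
  rw [e, add_assoc]
  refine le_add_of_nonneg_right (add_nonneg ?_ ?_) <;>
  · refine Multiset.sum_nonneg fun y hy => ?_
    obtain ⟨z, -, rfl⟩ := Multiset.mem_map.1 hy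
    exact Real.sqrt_nonneg _

lemma msgs_rmax (h : Par β γ lam) {rs : Multiset ℝ} (hrs : ∀ x ∈ rs, 0 ≤ x) {k l Δ : ℕ}
    (hc : rs.card + k + l ≤ Δ) : lam * (msgs β γ rs k l).prod ≤ rmax γ lam Δ := by
  unfold rmax
  refine mul_le_mul_of_nonneg_left ?_ h.lam0.le
  refine prod_le_pow_card (le_max_left _ _) _ (fun z hz => ?_) (fun z hz => ?_) ?_
  · exact h.β0.trans (msgs_bd h hrs z hz).1
  · exact (msgs_bd h hrs z hz).2.trans (le_max_right _ _)
  · rw [msgs_card]; exact hc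

/-- The influence bound holds at every vertex with fewer than `Δ` neighbours, by strong induction
on the number of non-isolated vertices. The constant `A = 1 / (1 - √κ)` solves
`1 + √κ A = A`. -/
lemma good_all (h : Par β γ lam) {Δ : ℕ} {κ : ℝ} (hκ0 : 0 ≤ κ) (hκ1 : κ < 1)
    (hA : Contr β γ lam Δ κ) (n : ℕ) : ∀ (G : SimpleGraph V), (nis G).card = n →
    ∀ r k l, Cls Δ G k l → (nb G r).card + k r + l r < Δ →
      Good β γ (1 / (1 - √κ)) (rmax γ lam Δ) (wt β γ lam G k l) r := by
  have hsκ : √κ < 1 := by rw [Real.sqrt_lt' one_pos]; simpa using hκ1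
  have hs0 := Real.sqrt_nonneg κ
  induction n using Nat.strong_induction_on with
  | _ n ih =>
    intro G hG r k l hc hr
    obtain ⟨rs, h1, h2, h3, h4⟩ := rec_step (A := 1 / (1 - √κ)) (rmax := rmax γ lam Δ) h hc r
      fun v hv k' l' hc' hd' => ih _ (by rw [← hG]; exact nis_del hv) _ rfl v k' l' hc' hd'
    have hrs : ∀ x ∈ rs, 0 ≤ x := fun x hx => (h2 x hx).1
    rw [← msgs_prod] at h3
    set M1 := m1 (wt β γ lam G k l) r true
    set M0 := m1 (wt β γ lam G k l) r false
    have hM0 : 0 < M0 := m1_false_pos h G k l r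
    set m := msgs β γ rs (k r) (l r)
    have hR : M1 / M0 = lam * m.prod := by rw [h3]; field_simp
    have hmc : m.card < Δ := by rw [msgs_card, h1]; exact hr
    refine ⟨?_, fun hM1 => h4.trans ?_⟩
    · change M1 ≤ _ * M0
      rw [h3]
      exact mul_le_mul_of_nonneg_right (msgs_rmax h hrs (by rw [h1]; omega)) hM0.le
    · have hRp : 0 < M1 / M0 := by positivity
      have a1 := hA m hmc (msgs_bd h hrs)
      rw [← hR] at a1
      set s := (rs.map fun x => √(hf β γ x)).sum
      set s' := (m.map fun z => √(Hf β γ z)).sum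
      have a2 : s ≤ s' := msgs_sum h hrs _ _
      have a3 : 0 < √(hf β γ (M1 / M0)) := Real.sqrt_pos.2 (hf_pos h hRp)
      have a4 : √(hf β γ (M1 / M0)) * s' ≤ √κ := by
        refine Real.le_sqrt_of_sq_le ?_
        rw [mul_pow, Real.sq_sqrt (hf_nonneg h hRp.le)]; exact a1
      have a5 : √(hf β γ (M1 / M0)) ≤ 1 := Real.sqrt_le_one.2 (hf_le_one h hRp.le)
      have a6 : √(hf β γ (M1 / M0)) * s ≤ √κ := le_trans (by gcongr) a4
      rw [mul_comm (1 / (1 - √κ)) (M1 * M0), mul_div_assoc]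
      refine mul_le_mul_of_nonneg_left ?_ (by positivity)
      rw [le_div_iff₀ a3]
      have a7 : 0 < 1 - √κ := by linarith
      have a8 : (1 + 1 / (1 - √κ) * s) = (1 - √κ + s) / (1 - √κ) := by field_simp
      rw [a8, div_mul_eq_mul_div]
      gcongr
      nlinarith

/-- Lower bound for non-zero edge messages. -/
noncomputable def mlow (β γ lam : ℝ) (Δ : ℕ) : ℝ :=
  min (min 1 (1 / γ)) (min (1 / (rmax γ lam Δ + γ)) (if β = 0 then 1 else β))

lemma mlow_pos (h : Par β γ lam) (Δ : ℕ) : 0 < mlow β γ lam Δ := by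
  have h1 := rmax_pos h Δ
  have h2 := h.γ0
  unfold mlow
  refine lt_min (lt_min one_pos (by positivity)) (lt_min (by positivity) ?_)
  split_ifs with h3
  · exact one_pos
  · exact lt_of_le_of_ne h.β0 (Ne.symm h3)

/-- Total influence and marginal bounds at an arbitrary vertex. A vertex with `Δ` neighbours may
fail to contract, but it occurs only as the root, since every other vertex of the recursion has lost
a neighbour; one step with `h ≤ 1` is affordable. -/
lemma full_root (h : Par β γ lam) {Δ : ℕ} {κ : ℝ} (hκ0 : 0 ≤ κ) (hκ1 : κ < 1)
    (hA : Contr β γ lam Δ κ) {G : SimpleGraph V} {k l : V → ℕ} (hc : Cls Δ G k l) (r : V) :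
    (∑ u, |cov (wt β γ lam G k l) r u| ≤ (1 + 1 / (1 - √κ) * Δ) *
      (m1 (wt β γ lam G k l) r true * m1 (wt β γ lam G k l) r false)) ∧
    m1 (wt β γ lam G k l) r true ≤ rmax γ lam Δ * m1 (wt β γ lam G k l) r false ∧
    (0 < m1 (wt β γ lam G k l) r true → lam * mlow β γ lam Δ ^ Δ *
      m1 (wt β γ lam G k l) r false ≤ m1 (wt β γ lam G k l) r true) := by
  have hsκ : √κ < 1 := by rw [Real.sqrt_lt' one_pos]; simpa using hκ1
  obtain ⟨rs, h1, h2, h3, h4⟩ := rec_step (A := 1 / (1 - √κ)) (rmax := rmax γ lam Δ) h hc r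
    fun v hv k' l' hc' hd' => good_all h hκ0 hκ1 hA _ _ rfl v k' l' hc' hd'
  have hrs : ∀ x ∈ rs, 0 ≤ x := fun x hx => (h2 x hx).1
  rw [← msgs_prod] at h3
  set M1 := m1 (wt β γ lam G k l) r true
  set M0 := m1 (wt β γ lam G k l) r false
  have hM0 : 0 < M0 := m1_false_pos h G k l r
  have hM1 : 0 ≤ M1 := m1_nonneg (wt_nonneg h G k l) r true
  have hcr := hc r
  refine ⟨h4.trans ?_, ?_, fun hp => ?_⟩
  · rw [mul_comm]
    refine mul_le_mul_of_nonneg_right ?_ (by positivity)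
    have a7 : 0 < 1 - √κ := by linarith
    have a1 : (rs.map fun x => √(hf β γ x)).sum ≤ (rs.map fun _ => (1 : ℝ)).sum :=
      Multiset.sum_map_le_sum_map _ _ fun x hx => Real.sqrt_le_one.2 (hf_le_one h (hrs x hx))
    have a2 : (rs.map fun _ => (1 : ℝ)).sum ≤ Δ := by
      simp only [Multiset.map_const', Multiset.sum_replicate, nsmul_eq_mul, mul_one]
      rw [h1]; exact_mod_cast (by omega)
    have := a1.trans a2
    gcongr
  · rw [h3]
    exact mul_le_mul_of_nonneg_right (msgs_rmax h hrs (by rw [h1]; omega)) hM0.le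
  · rw [h3]
    refine mul_le_mul_of_nonneg_right (mul_le_mul_of_nonneg_left ?_ h.lam0.le) hM0.le
    refine le_prod_pow_card (mlow_pos h Δ).le ((min_le_left _ _).trans (min_le_left _ _)) _ ?_
      (by rw [msgs_card, h1]; omega)
    intro z hz
    have hz' := hz
    simp only [msgs, Multiset.mem_add, Multiset.mem_map] at hz
    rcases hz with (⟨x, hx, rfl⟩ | hz) | hz
    · refine (min_le_right _ _).trans ((min_le_left _ _).trans ?_)
      have a1 := h2 x hx
      have a2 := h.γ0
      have a3 := mul_nonneg h.β0 a1.1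
      unfold Ff
      exact div_le_div₀ (by linarith) (by linarith) (by linarith) (by linarith)
    · rw [Multiset.eq_of_mem_replicate hz] at hz' ⊢
      by_cases hb : β = 0
      · exfalso
        rw [hb] at hz' h3
        have : (msgs 0 γ rs (k r) (l r)).prod = 0 := Multiset.prod_eq_zero hz'
        rw [this] at h3
        linarith
      · refine (min_le_right _ _).trans ((min_le_right _ _).trans ?_)
        rw [if_neg hb]
    · rw [Multiset.eq_of_mem_replicate hz]
      exact (min_le_left _ _).trans (min_le_right _ _)

/-- A bound on the total covariance of each vertex bounds the quadratic form of the
covariances. -/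
lemma si_of_cov {w : (V → Bool) → ℝ} (hw : ∀ σ, 0 ≤ w σ) (hM0 : ∀ v, 0 < m1 w v false) {η : ℝ}
    (hη : ∀ v, ∑ u, |cov w v u| ≤ η * (m1 w v true * m1 w v false)) (U : Finset V)
    (x : V → Bool → ℝ) (hx : ∀ u ∈ U, ∑ τ, w τ * x u (τ u) = 0) :
    ∑ u ∈ U, ∑ v ∈ U.erase u, ∑ τ, w τ * (x u (τ u) * x v (τ v)) ≤
      η * ∑ u ∈ U, ∑ τ, w τ * (x u (τ u)) ^ 2 := by
  set Z := ∑ σ, w σ with hZ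
  have hZ0 : 0 ≤ Z := Finset.sum_nonneg fun σ _ => hw σ
  -- a centred function of one spin is a multiple `c u` of the centred indicator
  set c : V → ℝ := fun u => if m1 w u true = 0 then 0 else x u true / m1 w u false with hc
  have hx1 : ∀ u ∈ U, x u true * m1 w u true + x u false * m1 w u false = 0 := fun u hu => by
    rw [← hx u hu, sum_one]
  have hm2 : ∀ u v j, m1 w u true = 0 → m2 w u true v j = 0 := by
    intro u v j hu
    have e := m2_add w u true v
    have := m2_nonneg hw u true v true
    have := m2_nonneg hw u true v false
    cases j <;> linarith
  have hxf : ∀ u ∈ U, x u false = - c u * m1 w u true := by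
    intro u hu
    have := hx1 u hu
    have h0 := (hM0 u).ne'
    by_cases h1 : m1 w u true = 0
    · rw [h1] at this
      simp only [mul_zero, zero_add, mul_eq_zero, h0, or_false] at this
      simp [this, h1]
    · simp only [hc, if_neg h1]; field_simp; linarith
  have hxt : ∀ u ∈ U, m1 w u true ≠ 0 → x u true = c u * m1 w u false := by
    intro u hu h1
    have h0 := (hM0 u).ne'
    simp only [hc, if_neg h1]; field_simp
  have h2 : ∀ u ∈ U, ∀ v ∈ U, ∑ τ, w τ * (x u (τ u) * x v (τ v)) = c u * c v * (Z * cov w u v) := by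
    intro u hu v hv
    rw [sum_two]
    by_cases h1 : m1 w u true = 0
    · have hc0 : c u = 0 := by simp [hc, h1]
      rw [hm2 u v true h1, hm2 u v false h1, hxf u hu, hc0]; ring
    by_cases h1' : m1 w v true = 0
    · have hc0 : c v = 0 := by simp [hc, h1']
      have e1 := hm2 v u true h1'
      have e2 := hm2 v u false h1'
      rw [m2_symm] at e1 e2
      rw [e1, e2, hxf v hv, hc0]; ring
    rw [hxf u hu, hxf v hv, hxt u hu h1, hxt v hv h1', hZ, ← m1_add w u]
    unfold cov
    rw [← m2_add w u true v, ← m2_add w u false v, ← m2_add' w u v true, ← m2_add' w u v false]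
    ring
  have h3 : ∀ u ∈ U, ∑ τ, w τ * (x u (τ u)) ^ 2 =
      c u ^ 2 * (Z * (m1 w u true * m1 w u false)) := by
    intro u hu
    rw [sum_one w u fun i => x u i ^ 2]
    by_cases h1 : m1 w u true = 0
    · have hc0 : c u = 0 := by simp [hc, h1]
      rw [hxf u hu, h1, hc0]; ring
    · rw [hxf u hu, hxt u hu h1, hZ, ← m1_add w u]; ring
  set f : V → V → ℝ := fun u v => Z * |cov w u v| * c u ^ 2 with hf
  calc _ = ∑ u ∈ U, ∑ v ∈ U.erase u, c u * c v * (Z * cov w u v) :=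
        Finset.sum_congr rfl fun u hu => Finset.sum_congr rfl fun v hv =>
          h2 u hu v (mem_of_mem_erase hv)
    _ ≤ ∑ u ∈ U, ∑ v ∈ U, (f u v + f v u) / 2 := by
        refine Finset.sum_le_sum fun u _ => ?_
        refine le_trans (Finset.sum_le_sum fun v _ => ?_) (Finset.sum_le_sum_of_subset_of_nonneg
          (erase_subset u U) fun v _ _ => by simp only [hf]; positivity)
        simp only [hf]
        rw [cov_symm w v u]
        have e1 : c u * c v * cov w u v ≤ |c u * c v| * |cov w u v| := by
          rw [← abs_mul]; exact le_abs_self _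
        have e2 : |c u * c v| ≤ (c u ^ 2 + c v ^ 2) / 2 := by
          rw [abs_le]; constructor <;> nlinarith [sq_nonneg (c u + c v), sq_nonneg (c u - c v)]
        have e3 : c u * c v * cov w u v ≤ (c u ^ 2 + c v ^ 2) / 2 * |cov w u v| :=
          e1.trans (mul_le_mul_of_nonneg_right e2 (abs_nonneg _))
        nlinarith
    _ = ∑ u ∈ U, ∑ v ∈ U, f u v := by
        simp only [add_div, Finset.sum_add_distrib]
        rw [Finset.sum_comm (f := fun u v => f v u / 2), ← Finset.sum_add_distrib]
        refine Finset.sum_congr rfl fun u _ => ?_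
        rw [← Finset.sum_add_distrib]
        exact Finset.sum_congr rfl fun v _ => by ring
    _ ≤ ∑ u ∈ U, Z * c u ^ 2 * (η * (m1 w u true * m1 w u false)) := by
        refine Finset.sum_le_sum fun u _ => ?_
        refine le_trans (Finset.sum_le_sum_of_subset_of_nonneg (subset_univ U)
          fun v _ _ => by simp only [hf]; positivity) ?_
        calc ∑ v, f u v = Z * c u ^ 2 * ∑ v, |cov w u v| := by
              simp only [hf, Finset.mul_sum]
              exact Finset.sum_congr rfl fun v _ => by ring
          _ ≤ _ := by have := hη u; gcongr
    _ = _ := by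
        rw [Finset.mul_sum]
        refine Finset.sum_congr rfl fun u hu => ?_
        rw [h3 u hu]; ring

end TwoSpin

/-! ### The Gibbs distribution: spectral independence, marginal bounds, factorisation -/

namespace TwoSpin
set_option linter.unusedSectionVars false
variable {V : Type} [Fintype V] [DecidableEq V]
variable {β γ lam : ℝ}

/-- Lower bound for non-zero conditional marginals. -/
noncomputable def mbc (β γ lam : ℝ) (Δ : ℕ) : ℝ :=
  min (lam * mlow β γ lam Δ ^ Δ / (1 + lam * mlow β γ lam Δ ^ Δ)) (1 / (1 + rmax γ lam Δ))

lemma mbc_pos (h : Par β γ lam) (Δ : ℕ) : 0 < mbc β γ lam Δ := by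
  have h1 := mlow_pos h Δ
  have h2 := rmax_pos h Δ
  have h3 := h.lam0
  unfold mbc
  exact lt_min (by positivity) (by positivity)

lemma mbc_le_one (h : Par β γ lam) (Δ : ℕ) : mbc β γ lam Δ ≤ 1 := by
  have h2 := rmax_pos h Δ
  refine (min_le_right _ _).trans ?_
  rw [div_le_one (by linarith)]; linarith

lemma mg_const_mul (a : ℝ) (p : (V → Bool) → ℝ) (S : Finset V) (σ : V → Bool) :
    mg (fun τ => a * p τ) S σ = a * mg p S σ := by
  unfold mg; rw [Finset.mul_sum]
  exact Finset.sum_congr rfl fun τ _ => by rw [mul_ite, mul_zero]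

/-- Spectral independence of the two-spin system. -/
lemma gibbs_SI (h : Par β γ lam) {Δ : ℕ} {κ : ℝ} (hκ0 : 0 ≤ κ) (hκ1 : κ < 1)
    (hA : Contr β γ lam Δ κ) {G : SimpleGraph V} {k l : V → ℕ} (hc : Cls Δ G k l) {a : ℝ}
    (ha : 0 < a) :
    SI (fun σ => a * wt β γ lam G k l σ) (1 + 1 / (1 - √κ) * Δ) := by
  intro S σ x hx
  obtain ⟨G', k', l', c, hc', hc0, hF⟩ := pin_reduce h hc S σ
  have hF' : ∀ F, Meas Sᶜ F → mg (fun τ => a * wt β γ lam G k l τ * F τ) S σ =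
      a * c * ∑ τ, wt β γ lam G' k' l' τ * F τ := by
    intro F hm
    have := hF F hm
    simp only [mul_assoc]
    rw [mg_const_mul, this]
  have hm1 : ∀ u ∉ S, ∀ f : Bool → ℝ, Meas Sᶜ fun τ => f (τ u) := fun u hu f τ τ' ht => by
    simp only [ht u (mem_compl.2 hu)]
  rcases hc0.eq_or_lt with h0 | h0
  · have e : ∀ F, Meas Sᶜ F → mg (fun τ => a * wt β γ lam G k l τ * F τ) S σ = 0 := by
      intro F hm; rw [hF' F hm, ← h0]; ring
    rw [Finset.sum_eq_zero fun u hu => Finset.sum_eq_zero fun v hv => e _ ?_,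
      Finset.sum_eq_zero fun u hu => e _ ?_, mul_zero]
    · exact hm1 u (mem_compl.1 hu) fun i => x u i ^ 2
    · exact (hm1 u (mem_compl.1 hu) (x u)).mul (hm1 v (mem_compl.1 (mem_of_mem_erase hv)) (x v))
  · have hac : 0 < a * c := mul_pos ha h0
    have h1 := si_of_cov (wt_nonneg h G' k' l') (m1_false_pos h G' k' l')
      (fun v => (full_root h hκ0 hκ1 hA hc' v).1) Sᶜ x (fun u hu => by
        have := hx u (mem_compl.1 hu)
        rw [hF' _ (hm1 u (mem_compl.1 hu) (x u))] at this
        exact (mul_eq_zero.1 this).resolve_left hac.ne')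
    have e1 : ∑ u ∈ Sᶜ, ∑ v ∈ Sᶜ.erase u,
        mg (fun τ => a * wt β γ lam G k l τ * (x u (τ u) * x v (τ v))) S σ =
        a * c * ∑ u ∈ Sᶜ, ∑ v ∈ Sᶜ.erase u,
          ∑ τ, wt β γ lam G' k' l' τ * (x u (τ u) * x v (τ v)) := by
      rw [Finset.mul_sum]
      refine Finset.sum_congr rfl fun u hu => ?_
      rw [Finset.mul_sum]
      refine Finset.sum_congr rfl fun v hv => ?_
      exact hF' _ ((hm1 u (mem_compl.1 hu) (x u)).mul
        (hm1 v (mem_compl.1 (mem_of_mem_erase hv)) (x v)))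
    have e2 : ∑ u ∈ Sᶜ, mg (fun τ => a * wt β γ lam G k l τ * (x u (τ u)) ^ 2) S σ =
        a * c * ∑ u ∈ Sᶜ, ∑ τ, wt β γ lam G' k' l' τ * (x u (τ u)) ^ 2 := by
      rw [Finset.mul_sum]
      refine Finset.sum_congr rfl fun u hu => ?_
      exact hF' _ (hm1 u (mem_compl.1 hu) fun i => x u i ^ 2)
    rw [e1, e2, mul_left_comm]
    exact mul_le_mul_of_nonneg_left h1 hac.le

/-- Marginal boundedness of the two-spin system. -/
lemma gibbs_MB (h : Par β γ lam) {Δ : ℕ} {κ : ℝ} (hκ0 : 0 ≤ κ) (hκ1 : κ < 1)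
    (hA : Contr β γ lam Δ κ) {G : SimpleGraph V} {k l : V → ℕ} (hc : Cls Δ G k l) {a : ℝ}
    (ha : 0 < a) :
    MB (fun σ => a * wt β γ lam G k l σ) (mbc β γ lam Δ) := by
  intro S v σ hσ
  have hq : ∀ τ, 0 ≤ a * wt β γ lam G k l τ := fun τ => mul_nonneg ha.le (wt_nonneg h G k l τ)
  by_cases hv : v ∈ S
  · rw [insert_eq_of_mem hv]
    exact mul_le_of_le_one_left (mg_nonneg hq S σ) (mbc_le_one h Δ)
  obtain ⟨G', k', l', c, hc', hc0, hF⟩ := pin_reduce h hc S σ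
  have e1 : mg (fun τ => a * wt β γ lam G k l τ) S σ =
      a * c * (m1 (wt β γ lam G' k' l') v true + m1 (wt β γ lam G' k' l') v false) := by
    have := hF (fun _ => 1) (fun _ _ _ => rfl)
    simp only [mul_one] at this
    rw [mg_const_mul, this, m1_add]; ring
  have e2 : mg (fun τ => a * wt β γ lam G k l τ) (insert v S) σ =
      a * c * m1 (wt β γ lam G' k' l') v (σ v) := by
    have := hF (fun τ => if τ v = σ v then 1 else 0) (fun τ τ' ht => by
      dsimp only; rw [ht v (mem_compl.2 hv)])
    simp only [mul_ite, mul_one, mul_zero] at this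
    rw [mg_const_mul, mul_assoc]
    congr 1
    unfold m1
    rw [← this]
    unfold mg
    refine Finset.sum_congr rfl fun τ _ => ?_
    simp only [mem_insert, forall_eq_or_imp]
    by_cases h3 : τ v = σ v <;> simp [h3]
  have h1 : 0 < mg (fun τ => a * wt β γ lam G k l τ) (insert v S) σ :=
    lt_of_lt_of_le hσ (le_mg hq _ _)
  obtain ⟨-, h2, h3⟩ := full_root h hκ0 hκ1 hA hc' v
  rw [e2] at h1
  have hac : 0 ≤ a * c := mul_nonneg ha.le hc0
  have hM : 0 < m1 (wt β γ lam G' k' l') v (σ v) := by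
    by_contra! hn
    nlinarith [mul_nonneg hac (neg_nonneg.2 hn)]
  rw [e1, e2, mul_left_comm]
  refine mul_le_mul_of_nonneg_left ?_ hac
  have hM0 := m1_false_pos h G' k' l' v
  have hM1 := m1_nonneg (wt_nonneg h G' k' l') v true
  set M1 := m1 (wt β γ lam G' k' l') v true
  set M0 := m1 (wt β γ lam G' k' l') v false
  have hr := rmax_pos h Δ
  have hl := h.lam0
  have hm := mlow_pos h Δ
  cases hi : σ v with
  | true =>
    rw [hi] at hM
    have h4 := h3 hM
    set ρ := lam * mlow β γ lam Δ ^ Δ with hρ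
    have hρ0 : 0 < ρ := by positivity
    calc mbc β γ lam Δ * (M1 + M0) ≤ ρ / (1 + ρ) * (M1 + M0) :=
          mul_le_mul_of_nonneg_right (min_le_left _ _) (by linarith)
      _ ≤ M1 := by
          rw [div_mul_eq_mul_div, div_le_iff₀ (by linarith)]; nlinarith
  | false =>
    calc mbc β γ lam Δ * (M1 + M0) ≤ 1 / (1 + rmax γ lam Δ) * (M1 + M0) :=
          mul_le_mul_of_nonneg_right (min_le_right _ _) (by linarith)
      _ ≤ M0 := by
          rw [div_mul_eq_mul_div, div_le_iff₀ (by linarith)]; nlinarith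

/-- Since `γ > 0`, the spin `0` is always allowed. -/
lemma gibbs_ZP (h : Par β γ lam) (G : SimpleGraph V) {a : ℝ} (ha : 0 < a) :
    ZP (fun σ => a * wt β γ lam G 0 0 σ) := by
  intro σ v hσ
  have h1 : 0 < wt β γ lam G 0 0 σ := (mul_pos_iff_of_pos_left ha).1 hσ
  refine mul_pos ha ?_
  unfold wt ewt at h1 ⊢
  refine mul_pos (Finset.prod_pos fun u _ => ?_) (Finset.prod_pos fun p _ => ?_)
  · have := h.lam0; unfold vw; split_ifs <;> simp [this]
  · have h2 := right_ne_zero_of_mul h1.ne'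
    rw [Finset.prod_ne_zero_iff] at h2
    have h3 := h2 p (mem_univ p)
    split_ifs with hp
    · rw [if_pos hp] at h3
      refine Real.sqrt_pos.2 (lt_of_le_of_ne (ew_nonneg h _ _) (Ne.symm ?_))
      have h4 : ew β γ (σ p.1) (σ p.2) ≠ 0 := fun h0 => h3 (by rw [h0, Real.sqrt_zero])
      have hγ := h.γ0.ne'
      by_cases e1 : p.1 = v
      · rw [e1, Function.update_self]
        cases Function.update σ v false p.2 <;> simp [ew, hγ]
      · by_cases e2 : p.2 = v
        · rw [e2, Function.update_self]
          cases Function.update σ v false p.1 <;> simp [ew, hγ]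
        · rwa [Function.update_of_ne e1, Function.update_of_ne e2]
    · exact one_pos

/-- The vertex and edge factors not touching `C₂` are collected in one function and the remaining ones
in the other; an edge touching `C₂` does not touch `C₁`, as the blocks are not adjacent. -/
lemma gibbs_Fac (G : SimpleGraph V) (a : ℝ) : Fac G (fun σ => a * wt β γ lam G 0 0 σ) := by
  classical
  intro C₁ C₂ hd hn
  set fv : (V → Bool) → V → ℝ := fun σ v => vw β γ lam 0 0 (σ v) with hfv
  set fe : (V → Bool) → V × V → ℝ := fun σ p =>
    if G.Adj p.1 p.2 then √(ew β γ (σ p.1) (σ p.2)) else 1 with hfe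
  refine ⟨fun σ => a * ((∏ v, if v ∈ C₂ then 1 else fv σ v) *
      ∏ p, if p.1 ∈ C₂ ∨ p.2 ∈ C₂ then 1 else fe σ p),
    fun σ => (∏ v, if v ∈ C₂ then fv σ v else 1) *
      ∏ p, if p.1 ∈ C₂ ∨ p.2 ∈ C₂ then fe σ p else 1, ?_, ?_, ?_⟩
  · intro σ τ hs
    dsimp only
    congr 2
    · refine Finset.prod_congr rfl fun v _ => ?_
      split_ifs with hv
      · rfl
      · simp only [hfv]; rw [hs v (mem_compl.2 hv)]
    · refine Finset.prod_congr rfl fun p _ => ?_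
      split_ifs with hv
      · rfl
      · push Not at hv
        simp only [hfe]; rw [hs _ (mem_compl.2 hv.1), hs _ (mem_compl.2 hv.2)]
  · intro σ τ hs
    dsimp only
    congr 1
    · refine Finset.prod_congr rfl fun v _ => ?_
      split_ifs with hv
      · simp only [hfv]; rw [hs v (mem_compl.2 fun hv' => disjoint_left.1 hd hv' hv)]
      · rfl
    · refine Finset.prod_congr rfl fun p _ => ?_
      split_ifs with hv
      · simp only [hfe]
        by_cases hp : G.Adj p.1 p.2
        · rw [if_pos hp, if_pos hp]
          have h1 : p.1 ∉ C₁ := fun h1 => by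
            rcases hv with h2 | h2
            · exact disjoint_left.1 hd h1 h2
            · exact hn _ h1 _ h2 hp
          have h2 : p.2 ∉ C₁ := fun h1 => by
            rcases hv with h2 | h2
            · exact hn _ h1 _ h2 hp.symm
            · exact disjoint_left.1 hd h1 h2
          rw [hs _ (mem_compl.2 h1), hs _ (mem_compl.2 h2)]
        · rw [if_neg hp, if_neg hp]
      · rfl
  · intro σ
    have e1 : ∏ v, vw β γ lam ((0 : V → ℕ) v) ((0 : V → ℕ) v) (σ v) =
        (∏ v, if v ∈ C₂ then 1 else fv σ v) * ∏ v, if v ∈ C₂ then fv σ v else 1 := by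
      rw [← Finset.prod_mul_distrib]
      exact Finset.prod_congr rfl fun v _ => by split_ifs <;> simp [hfv]
    have e2 : ewt β γ G σ = (∏ p, if p.1 ∈ C₂ ∨ p.2 ∈ C₂ then 1 else fe σ p) *
        ∏ p, if p.1 ∈ C₂ ∨ p.2 ∈ C₂ then fe σ p else 1 := by
      rw [← Finset.prod_mul_distrib]
      unfold ewt
      exact Finset.prod_congr rfl fun p _ => by
        by_cases hp : p.1 ∈ C₂ ∨ p.2 ∈ C₂
        · rw [if_pos hp, if_pos hp, one_mul]
        · rw [if_neg hp, if_neg hp, mul_one]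
    unfold wt
    dsimp only
    rw [e1, e2]; ring

/-- The ordered adjacent pairs with equal spins come in pairs, so their number is even. -/
lemma mono_even (G : SimpleGraph V) [DecidableRel G.Adj] (σ : V → Bool) (s : Bool) :
    Even (univ.filter fun p : V × V => G.Adj p.1 p.2 ∧ σ p.1 = s ∧ σ p.2 = s).card := by
  have h1 : ∏ _p ∈ univ.filter fun p : V × V => G.Adj p.1 p.2 ∧ σ p.1 = s ∧ σ p.2 = s,
      (-1 : ℤ) = 1 := by
    refine Finset.prod_involution (fun p _ => p.swap) (fun _ _ => by norm_num) ?_ ?_ ?_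
    · intro p hp _ he
      simp only [mem_filter, mem_univ, true_and] at hp
      have : p.2 = p.1 := congrArg Prod.fst he
      exact hp.1.ne this.symm
    · intro p hp
      simp only [mem_filter, mem_univ, true_and, Prod.fst_swap, Prod.snd_swap] at hp ⊢
      exact ⟨hp.1.symm, hp.2.2, hp.2.1⟩
    · intro p _; exact Prod.swap_swap p
  rw [Finset.prod_const] at h1
  exact (neg_one_pow_eq_one_iff_even (by norm_num)).1 h1

/-- The weight given by edge counts is the product of vertex and edge factors, without pins. -/
lemma weight_eq (h : Par β γ lam) (G : SimpleGraph V) [DecidableRel G.Adj] (σ : V → Bool) :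
    twoSpinWeight G β γ lam σ = wt β γ lam G 0 0 σ := by
  have key : ∀ (s : Bool) (x : ℝ), 0 ≤ x → x ^ monoEdges G σ s =
      ∏ p : V × V, if G.Adj p.1 p.2 ∧ σ p.1 = s ∧ σ p.2 = s then √x else 1 := by
    intro s x hx
    rw [Finset.prod_ite, Finset.prod_const, Finset.prod_const_one, mul_one]
    unfold monoEdges
    obtain ⟨m, hm⟩ := mono_even G σ s
    rw [hm, ← two_mul, Nat.mul_div_cancel_left _ two_pos, pow_mul, Real.sq_sqrt hx]
  have h1 : lam ^ numOnes σ = ∏ v, vw β γ lam ((0 : V → ℕ) v) ((0 : V → ℕ) v) (σ v) := by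
    unfold numOnes vw
    simp only [Pi.zero_apply, pow_zero, mul_one]
    rw [Finset.prod_ite, Finset.prod_const, Finset.prod_const_one, mul_one]
  unfold twoSpinWeight wt
  rw [key _ _ h.β0, key _ _ h.γ0.le, h1, ← Finset.prod_mul_distrib, mul_comm]
  congr 1
  unfold ewt
  refine Finset.prod_congr rfl fun p _ => ?_
  by_cases hp : G.Adj p.1 p.2
  · simp only [hp, true_and, if_true]
    cases σ p.1 <;> cases σ p.2 <;> simp [ew]
  · simp [hp]

end TwoSpin

/-! ### Uniqueness bounds the one-variable contraction rate -/

namespace TwoSpin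
set_option linter.unusedSectionVars false
variable {β γ lam : ℝ}

/-- `h` increases as long as `βx² ≤ γ`; the product `s t` replaces the square. -/
lemma hf_mono (h : Par β γ lam) {s t : ℝ} (hs : 0 ≤ s) (hst : s ≤ t) (hb : β * s * t ≤ γ) :
    hf β γ s ≤ hf β γ t := by
  have hβ := h.β0
  have hγ := h.γ0
  have hc : 0 < 1 - β * γ := by linarith [h.anti]
  have ht := hs.trans hst
  unfold hf
  rw [div_le_div_iff₀ (by positivity) (by positivity)]
  have : s * ((β * t + 1) * (t + γ)) ≤ t * ((β * s + 1) * (s + γ)) := by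
    nlinarith [mul_nonneg (sub_nonneg.2 hst) (sub_nonneg.2 hb)]
  nlinarith

/-- `h` decreases once `βx² ≥ γ`. -/
lemma hf_anti (h : Par β γ lam) {s t : ℝ} (hs : 0 ≤ s) (hst : s ≤ t) (hb : γ ≤ β * s * t) :
    hf β γ t ≤ hf β γ s := by
  have hβ := h.β0
  have hγ := h.γ0
  have hc : 0 < 1 - β * γ := by linarith [h.anti]
  have ht := hs.trans hst
  unfold hf
  rw [div_le_div_iff₀ (by positivity) (by positivity)]
  have : t * ((β * s + 1) * (s + γ)) ≤ s * ((β * t + 1) * (t + γ)) := by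
    nlinarith [mul_nonneg (sub_nonneg.2 hst) (sub_nonneg.2 hb)]
  nlinarith

/-- Logarithmic derivative of `h` (times the variable). -/
noncomputable def ell (β γ x : ℝ) : ℝ := (γ - β * x ^ 2) / ((β * x + 1) * (x + γ))

lemma ell_anti (h : Par β γ lam) {s t : ℝ} (hs : 0 ≤ s) (hst : s ≤ t) :
    ell β γ t ≤ ell β γ s := by
  have hβ := h.β0
  have hγ := h.γ0
  have ht := hs.trans hst
  have e : ∀ x, 0 ≤ x → ell β γ x = 1 / (β * x + 1) - x / (x + γ) := by
    intro x hx
    have : 0 < β * x + 1 := by positivity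
    have : 0 < x + γ := by positivity
    unfold ell; field_simp; ring
  rw [e s hs, e t ht]
  have h1 : 1 / (β * t + 1) ≤ 1 / (β * s + 1) := by gcongr
  have h2 : s / (s + γ) ≤ t / (t + γ) := by
    rw [div_le_div_iff₀ (by positivity) (by positivity)]; nlinarith
  linarith

/-- The value of `d² h(f) h(x)` at a critical point, compared with the fixed point `x̂` that
separates `x` from `f`. -/
lemma crit_lt (h : Par β γ lam) {d x f xh : ℝ} (hd : 0 < d) (hx : 0 < x) (hf0 : 0 < f)
    (hxh : 0 < xh) (h1 : x ≤ xh → xh ≤ f) (h2 : xh ≤ x → f ≤ xh) (hfix : d * hf β γ xh < 1)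
    (hcrit : d * (1 - β * γ) * x * (γ - β * f ^ 2) =
      (γ - β * x ^ 2) * ((β * f + 1) * (f + γ))) :
    d ^ 2 * (hf β γ f * hf β γ x) < 1 := by
  have hβ := h.β0
  have hγ := h.γ0
  have hDf : 0 < (β * f + 1) * (f + γ) := by positivity
  have hDx : 0 < (β * x + 1) * (x + γ) := by positivity
  have hc : 0 < 1 - β * γ := by linarith [h.anti]
  have hE : d * hf β γ x * ell β γ f = ell β γ x := by
    have : d * hf β γ x * ell β γ f = d * (1 - β * γ) * x * (γ - β * f ^ 2) /
        (((β * x + 1) * (x + γ)) * ((β * f + 1) * (f + γ))) := by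
      unfold hf ell; field_simp
    rw [this, hcrit]; unfold ell; field_simp
  have hhx := hf_nonneg h hx.le
  have hhf := hf_nonneg h hf0.le
  -- `hE` reads `d h(x) ℓ(f) = ℓ(x)` with `ℓ` decreasing, so the order of `x` and `f` decides whether
  -- `d h(x) ≤ 1`, and monotonicity of `h` up to its peak compares with `d h(x̂) < 1`
  rcases lt_trichotomy 0 (γ - β * f ^ 2) with hs | hs | hs
  · have hlf : 0 < ell β γ f := by unfold ell; positivity
    have hsx : 0 < γ - β * x ^ 2 := by
      have : 0 < d * (1 - β * γ) * x * (γ - β * f ^ 2) := by positivity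
      rw [hcrit] at this
      exact (mul_pos_iff_of_pos_right hDf).1 this
    have hxx : xh ≤ x := by
      by_contra! hlt
      have h3 := h1 hlt.le
      have h4 := ell_anti h hx.le (hlt.le.trans h3)
      have h5 : hf β γ x ≤ hf β γ xh := by
        refine hf_mono h hx.le hlt.le ?_
        have : β * x * xh ≤ β * f ^ 2 := by
          rw [mul_assoc, sq]; gcongr; linarith
        linarith
      have h6 : d * hf β γ x < 1 := lt_of_le_of_lt (by gcongr) hfix
      nlinarith
    have h3 := h2 hxx
    have h4 := ell_anti h hf0.le (h3.trans hxx)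
    have h5 : hf β γ f ≤ hf β γ xh := by
      refine hf_mono h hf0.le h3 ?_
      have : β * f * xh ≤ β * x ^ 2 := by
        rw [mul_assoc, sq]; gcongr; linarith
      linarith
    have h6 : d * hf β γ x ≤ 1 := by
      by_contra! hn
      nlinarith
    have h7 : d * hf β γ f < 1 := lt_of_le_of_lt (by gcongr) hfix
    have h8 : 0 ≤ d * hf β γ f := by positivity
    nlinarith
  · rw [← hs, mul_zero] at hcrit
    have hsx : γ - β * x ^ 2 = 0 := (mul_eq_zero.1 hcrit.symm).resolve_right hDf.ne'
    have hβp : β ≠ 0 := by rintro rfl; linarith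
    have h3 : x ^ 2 = f ^ 2 := mul_left_cancel₀ hβp (by linarith)
    have h4 : x = f := (pow_left_inj₀ hx.le hf0.le two_ne_zero).1 h3
    have h5 : x = xh := by
      rcases le_total x xh with h6 | h6
      · have := h1 h6; linarith
      · have := h2 h6; linarith
    rw [← h4, h5]
    have := hf_nonneg h hxh.le
    have h8 : 0 ≤ d * hf β γ xh := by positivity
    nlinarith
  · have hlf : ell β γ f < 0 := by unfold ell; exact div_neg_of_neg_of_pos hs hDf
    have hsx : γ - β * x ^ 2 < 0 := by
      have : d * (1 - β * γ) * x * (γ - β * f ^ 2) < 0 :=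
        mul_neg_of_pos_of_neg (by positivity) hs
      rw [hcrit] at this
      by_contra! hn
      have := mul_nonneg hn hDf.le
      linarith
    have hxx : x ≤ xh := by
      by_contra! hlt
      have h3 := h2 hlt.le
      have h4 := ell_anti h hf0.le (h3.trans hlt.le)
      have h5 : hf β γ x ≤ hf β γ xh := by
        refine hf_anti h hxh.le hlt.le ?_
        have : β * f ^ 2 ≤ β * xh * x := by
          rw [mul_assoc, sq]; gcongr; linarith
        linarith
      have h6 : d * hf β γ x < 1 := lt_of_le_of_lt (by gcongr) hfix
      nlinarith
    have h3 := h1 hxx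
    have h4 := ell_anti h hx.le (hxx.trans h3)
    have h5 : hf β γ f ≤ hf β γ xh := by
      refine hf_anti h hxh.le h3 ?_
      have : β * x ^ 2 ≤ β * xh * f := by
        rw [mul_assoc, sq]; gcongr; linarith
      linarith
    have h6 : d * hf β γ x ≤ 1 := by
      by_contra! hn
      nlinarith
    have h7 : d * hf β γ f < 1 := lt_of_le_of_lt (by gcongr) hfix
    have h8 : 0 ≤ d * hf β γ f := by positivity
    nlinarith

lemma Ff_anti (h : Par β γ lam) {s t : ℝ} (hs : 0 ≤ s) (hst : s ≤ t) :
    Ff β γ t ≤ Ff β γ s := by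
  have hγ := h.γ0
  have ht := hs.trans hst
  unfold Ff
  rw [div_le_div_iff₀ (by positivity) (by positivity)]
  nlinarith [mul_nonneg (sub_nonneg.2 hst) (sub_nonneg.2 h.anti.le)]

/-- Existence of a positive fixed point, by the intermediate value theorem. -/
lemma exists_fix (h : Par β γ lam) (d : ℕ) : ∃ x, 0 < x ∧ lam * Ff β γ x ^ d = x := by
  have hγ := h.γ0
  have hl := h.lam0
  have hβ := h.β0
  set T := lam * (1 / γ) ^ d with hT
  have hT0 : 0 < T := by positivity
  have hcont : ContinuousOn (fun x => lam * Ff β γ x ^ d - x) (Set.Icc 0 T) := by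
    have : ContinuousOn (fun x => Ff β γ x) (Set.Icc 0 T) := by
      unfold Ff
      refine ContinuousOn.div (by fun_prop) (by fun_prop) fun x hx => ?_
      have := hx.1; positivity
    fun_prop
  have h0 : lam * Ff β γ T ^ d - T ≤ 0 := by
    have h1 := (Ff_bounds h hT0.le).2
    have h2 := (Ff_pos h hT0.le).le
    have : lam * Ff β γ T ^ d ≤ lam * (1 / γ) ^ d := by gcongr
    linarith
  have h1 : 0 ≤ lam * Ff β γ 0 ^ d - 0 := by
    have := (Ff_pos h le_rfl).le
    have : 0 ≤ lam * Ff β γ 0 ^ d := by positivity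
    linarith
  obtain ⟨x, hx, hx'⟩ := intermediate_value_Icc' hT0.le hcont ⟨h0, h1⟩
  have hx'' : lam * Ff β γ x ^ d = x := by simpa [sub_eq_zero] using hx'
  refine ⟨x, ?_, hx''⟩
  rw [← hx'']
  have := Ff_pos h hx.1
  positivity

/-- At a fixed point the derivative of `f_d` and the logarithmic derivative `d h` coincide up to
sign. -/
lemma deriv_fix (h : Par β γ lam) {d : ℕ} (hd : 1 ≤ d) {R : ℝ} (hR : 0 < R)
    (hfix : lam * Ff β γ R ^ d = R) :
    |deriv (fun R : ℝ => lam * ((β * R + 1) / (R + γ)) ^ d) R| = d * hf β γ R := by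
  have hβ := h.β0
  have hγ := h.γ0
  have h1 : HasDerivAt (fun R : ℝ => (β * R + 1) / (R + γ))
      ((β * (R + γ) - (β * R + 1) * 1) / (R + γ) ^ 2) R := by
    refine HasDerivAt.div ?_ ?_ (by positivity)
    · simpa using ((hasDerivAt_id R).const_mul β).add_const 1
    · simpa using (hasDerivAt_id R).add_const γ
  have h2 := (h1.pow d).const_mul lam
  have h3 : deriv (fun R : ℝ => lam * ((β * R + 1) / (R + γ)) ^ d) R = _ := h2.deriv
  rw [h3]
  obtain ⟨e, rfl⟩ : ∃ e, d = e + 1 := ⟨d - 1, by omega⟩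
  have hF := Ff_pos h hR.le
  have e1 : lam * Ff β γ R ^ e = R / Ff β γ R := by
    rw [eq_div_iff hF.ne', mul_assoc, ← pow_succ]; exact hfix
  change |lam * (((e + 1 : ℕ) : ℝ) * Ff β γ R ^ (e + 1 - 1) * _)| = _
  rw [Nat.add_sub_cancel]
  have e2 : lam * (((e + 1 : ℕ) : ℝ) * Ff β γ R ^ e * ((β * (R + γ) - (β * R + 1) * 1) /
      (R + γ) ^ 2)) = -(((e + 1 : ℕ) : ℝ) * hf β γ R) := by
    calc _ = (lam * Ff β γ R ^ e) * (((e + 1 : ℕ) : ℝ) * ((β * (R + γ) - (β * R + 1) * 1) /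
      (R + γ) ^ 2)) := by ring
      _ = _ := by
        rw [e1]; unfold Ff hf
        field_simp; ring
  rw [e2, abs_neg, abs_of_nonneg (mul_nonneg (Nat.cast_nonneg _) (hf_nonneg h hR.le))]

/-- `d² h(λ z^d) H(z)` with `d = e + 1`, written without division by `z`. -/
noncomputable def alph (β γ lam : ℝ) (e : ℕ) (z : ℝ) : ℝ :=
  (e + 1) ^ 2 * lam * ((1 - γ * z) * (z - β) * z ^ e) /
    ((β * (lam * z ^ (e + 1)) + 1) * (lam * z ^ (e + 1) + γ))

lemma alph_eq (h : Par β γ lam) (e : ℕ) {z : ℝ} (hz : 0 < z) :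
    alph β γ lam e z = (e + 1) ^ 2 * (hf β γ (lam * z ^ (e + 1)) * Hf β γ z) := by
  have hβ := h.β0
  have hγ := h.γ0
  have hl := h.lam0
  have hc : 1 - β * γ ≠ 0 := by linarith [h.anti]
  have hH : Hf β γ z * ((1 - β * γ) * z) = (1 - γ * z) * (z - β) := by
    unfold Hf
    rw [div_mul_eq_mul_div, div_eq_iff hc]
    field_simp
    ring
  unfold alph hf
  have h1 : 0 < β * (lam * z ^ (e + 1)) + 1 := by positivity
  have h2 : 0 < lam * z ^ (e + 1) + γ := by positivity
  rw [← hH, div_mul_eq_mul_div, ← mul_div_assoc]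
  congr 1
  ring

/-- On the compact interval of messages the rate attains its maximum; it vanishes at the end points,
and at an interior maximiser the first-order condition turns into the hypothesis of `crit_lt`. -/
lemma alph_lt (h : Par β γ lam) {e : ℕ} {xh : ℝ} (hxh : 0 < xh)
    (hfix : lam * Ff β γ xh ^ (e + 1) = xh) (hlt : ((e + 1 : ℕ) : ℝ) * hf β γ xh < 1) :
    ∃ κ, 0 ≤ κ ∧ κ < 1 ∧ ∀ z ∈ Set.Icc β (1 / γ), alph β γ lam e z ≤ κ := by
  have hβ := h.β0
  have hγ := h.γ0
  have hl := h.lam0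
  have hc : 0 < 1 - β * γ := by linarith [h.anti]
  have hb : β ≤ 1 / γ := by rw [le_div_iff₀ h.γ0]; exact h.anti.le
  have hden : ∀ z, 0 ≤ z →
      0 < (β * (lam * z ^ (e + 1)) + 1) * (lam * z ^ (e + 1) + γ) := fun z hz => by positivity
  have hcont : ContinuousOn (alph β γ lam e) (Set.Icc β (1 / γ)) := by
    unfold alph
    refine ContinuousOn.div (by fun_prop) (by fun_prop) fun z hz => (hden z (hβ.trans hz.1)).ne'
  obtain ⟨z, hz, hmax⟩ := isCompact_Icc.exists_isMaxOn (Set.nonempty_Icc.2 hb) hcont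
  have hz0 : 0 ≤ z := hβ.trans hz.1
  refine ⟨alph β γ lam e z, ?_, ?_, fun y hy => hmax hy⟩
  · unfold alph
    have h1 : 0 ≤ z - β := by linarith [hz.1]
    have h2 : 0 ≤ 1 - γ * z := by
      have := (le_div_iff₀ hγ).1 hz.2; linarith
    have := hden z hz0
    positivity
  rcases hz.1.eq_or_lt with h1 | h1
  · unfold alph; rw [← h1]; simp
  rcases hz.2.eq_or_lt with h2 | h2
  · have : 1 - γ * z = 0 := by rw [h2]; field_simp; ring
    unfold alph; rw [this]; simp
  have hzp : 0 < z := lt_of_le_of_lt hβ h1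
  have h2' : 0 < 1 - γ * z := by
    have := (lt_div_iff₀ hγ).1 h2; linarith
  have h1' : 0 < z - β := by linarith
  -- the preimage of `z` under `F`
  set x := (1 - γ * z) / (z - β) with hx
  have hxp : 0 < x := by positivity
  have hxg : x + γ = (1 - β * γ) / (z - β) := by rw [hx]; field_simp; ring
  have hFx : Ff β γ x = z := by
    unfold Ff
    rw [hxg, hx]; field_simp; ring
  set f := lam * z ^ (e + 1) with hf'
  have hfp : 0 < f := by positivity
  have hloc : IsLocalMax (alph β γ lam e) z := hmax.isLocalMax (Icc_mem_nhds h1 h2)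
  -- the first-order condition at the maximiser
  have hD : HasDerivAt (alph β γ lam e)
      (((e + 1) ^ 2 * lam * ((-γ * (z - β) + (1 - γ * z) * 1) * z ^ e +
          (1 - γ * z) * (z - β) * (e * z ^ (e - 1))) *
        ((β * f + 1) * (f + γ)) -
        (e + 1) ^ 2 * lam * ((1 - γ * z) * (z - β) * z ^ e) *
          (β * (lam * ((e + 1 : ℕ) * z ^ e)) * (f + γ) +
            (β * f + 1) * (lam * ((e + 1 : ℕ) * z ^ e)))) /
        ((β * f + 1) * (f + γ)) ^ 2) z := by
    unfold alph
    have a1 : HasDerivAt (fun z : ℝ => 1 - γ * z) (-γ) z := by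
      simpa using ((hasDerivAt_id z).const_mul γ).const_sub 1
    have a2 : HasDerivAt (fun z : ℝ => z - β) 1 z := (hasDerivAt_id z).sub_const β
    have a3 : HasDerivAt (fun z : ℝ => z ^ e) (e * z ^ (e - 1)) z := hasDerivAt_pow e z
    have a4 : HasDerivAt (fun z : ℝ => lam * z ^ (e + 1)) (lam * ((e + 1 : ℕ) * z ^ e)) z := by
      have := (hasDerivAt_pow (e + 1) z).const_mul lam
      rwa [Nat.add_sub_cancel] at this
    exact (((a1.mul a2).mul a3).const_mul _).div
      (((a4.const_mul β).add_const 1).mul (a4.add_const γ)) (hden z hz0).ne'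
  have h0 := hloc.hasDerivAt_eq_zero hD
  have hDf : 0 < (β * f + 1) * (f + γ) := hden z hz0
  rw [div_eq_zero_iff, or_iff_left (by positivity)] at h0
  have hze : (e : ℝ) * z ^ (e - 1) * z = e * z ^ e := by
    rcases Nat.eq_zero_or_pos e with rfl | he
    · simp
    · rw [mul_assoc, ← pow_succ, Nat.sub_add_cancel he]
  have hfe : lam * z ^ e * z = f := by rw [hf', pow_succ]; ring
  have hmain : ((e : ℝ) + 1) * ((1 - γ * z) * (z - β)) * (γ - β * f ^ 2) =
      (γ * z ^ 2 - β) * ((β * f + 1) * (f + γ)) := by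
    have hk : 0 < ((e : ℝ) + 1) ^ 2 * lam * z ^ e := by positivity
    have h5 : ((e : ℝ) + 1) ^ 2 * lam * z ^ e *
        (((-γ * (z - β) + (1 - γ * z)) * z + e * ((1 - γ * z) * (z - β))) *
          ((β * f + 1) * (f + γ)) - (1 - γ * z) * (z - β) * ((e + 1) * f) *
          (β * (f + γ) + (β * f + 1))) = 0 := by
      push_cast at h0
      linear_combination z * h0 - (((e : ℝ) + 1) ^ 2 * lam * ((1 - γ * z) * (z - β)) *
        ((β * f + 1) * (f + γ))) * hze + (((e : ℝ) + 1) ^ 2 * lam * ((1 - γ * z) * (z - β)) * z ^ e *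
        (e + 1) * (β * (f + γ) + (β * f + 1))) * hfe
    have h6 := (mul_eq_zero.1 h5).resolve_left hk.ne'
    linear_combination h6
  have hcrit : ((e + 1 : ℕ) : ℝ) * (1 - β * γ) * x * (γ - β * f ^ 2) =
      (γ - β * x ^ 2) * ((β * f + 1) * (f + γ)) := by
    have e1 : (1 - γ * z) * (z - β) = x * (z - β) ^ 2 := by rw [hx]; field_simp
    have e2 : (γ * z ^ 2 - β) * (1 - β * γ) = (γ - β * x ^ 2) * (z - β) ^ 2 := by
      rw [hx]; field_simp; ring
    have h7 : (z - β) ^ 2 * (((e + 1 : ℕ) : ℝ) * (1 - β * γ) * x * (γ - β * f ^ 2)) =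
        (z - β) ^ 2 * ((γ - β * x ^ 2) * ((β * f + 1) * (f + γ))) := by
      push_cast
      rw [e1] at hmain
      linear_combination (1 - β * γ) * hmain + ((β * f + 1) * (f + γ)) * e2
    exact mul_left_cancel₀ (by positivity) h7
  have hH : Hf β γ z = hf β γ x := by rw [← hFx]; exact Hf_Ff h hxp.le
  rw [alph_eq h e hzp, hH]
  have := crit_lt h (d := ((e + 1 : ℕ) : ℝ)) (by positivity) hxp hfp hxh ?_ ?_ hlt hcrit
  · push_cast at this; exact this
  · intro hle
    have h8 := Ff_anti h hxp.le hle
    have h9 := (Ff_pos h hxh.le).le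
    calc xh = lam * Ff β γ xh ^ (e + 1) := hfix.symm
      _ ≤ lam * Ff β γ x ^ (e + 1) := by gcongr
      _ = f := by rw [hFx]
  · intro hle
    have h8 := Ff_anti h hxh.le hle
    have h9 := (Ff_pos h hxp.le).le
    calc f = lam * Ff β γ x ^ (e + 1) := by rw [hFx]
      _ ≤ lam * Ff β γ xh ^ (e + 1) := by gcongr
      _ = xh := hfix

end TwoSpin

/-! ### Contraction from uniqueness, and the mixing time -/

namespace TwoSpin
set_option linter.unusedSectionVars false
variable {β γ lam : ℝ}

lemma Hf_nonneg (h : Par β γ lam) {z : ℝ} (hz : 0 < z) (h1 : β ≤ z) (h2 : z ≤ 1 / γ) :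
    0 ≤ Hf β γ z := by
  have hγ := h.γ0
  have hc : 0 < 1 - β * γ := by linarith [h.anti]
  have h3 := (le_div_iff₀ hγ).1 h2
  have e1 : Hf β γ z = (1 - γ * z) * (z - β) / z / (1 - β * γ) := by
    unfold Hf
    congr 1
    field_simp
    ring
  rw [e1]
  have : 0 ≤ (1 - γ * z) * (z - β) := mul_nonneg (by linarith) (by linarith)
  positivity

/-- `H` is concave as a function of `log z`; this is its tangent line at `w`. -/
lemma Hf_tangent (h : Par β γ lam) {z w : ℝ} (hz : 0 < z) (hw : 0 < w) :
    Hf β γ z ≤ Hf β γ w +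
      (-γ * w + β / w) / (1 - β * γ) * (Real.log z - Real.log w) := by
  have hγ := h.γ0
  have hβ := h.β0
  have hc : 0 < 1 - β * γ := by linarith [h.anti]
  have a1 := Real.log_le_sub_one_of_pos (div_pos hz hw)
  have a2 := Real.log_le_sub_one_of_pos (div_pos hw hz)
  rw [Real.log_div hz.ne' hw.ne'] at a1
  rw [Real.log_div hw.ne' hz.ne'] at a2
  set L := Real.log z - Real.log w with hL
  have b1 : γ * w * (1 + L) ≤ γ * z := by
    have : γ * w * (1 + L) ≤ γ * w * (z / w) := by gcongr; linarith
    rwa [mul_assoc γ w (z / w), mul_div_cancel₀ z hw.ne'] at this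
  have b2 : β / w * (1 - L) ≤ β / z := by
    have : β / w * (1 - L) ≤ β / w * (w / z) := by gcongr; linarith
    rwa [div_mul_div_cancel₀ hw.ne'] at this
  unfold Hf
  rw [div_mul_eq_mul_div, ← add_div]
  gcongr
  nlinarith

/-- `√H ≤ (H / s + s) / 2` and the tangent line of `H` in `log z` bound the sum by a function of the
product of the messages; `w` and `s` are chosen later as their geometric mean and `√H(w)`. -/
lemma sum_sqrt_le (h : Par β γ lam) {w s : ℝ} (hw : 0 < w) (hs : 0 < s) (m : Multiset ℝ)
    (hm : ∀ z ∈ m, 0 < z ∧ β ≤ z ∧ z ≤ 1 / γ) :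
    0 < m.prod ∧ (m.map fun z => √(Hf β γ z)).sum ≤
      ((m.card * Hf β γ w + (-γ * w + β / w) / (1 - β * γ) *
        (Real.log m.prod - m.card * Real.log w)) / s + m.card * s) / 2 := by
  induction m using Multiset.induction_on with
  | empty => simp
  | cons z m ih =>
    obtain ⟨ih0, ih⟩ := ih fun y hy => hm y (Multiset.mem_cons_of_mem hy)
    obtain ⟨hz, hz1, hz2⟩ := hm z (Multiset.mem_cons_self z m)
    rw [Multiset.prod_cons, Multiset.map_cons, Multiset.sum_cons, Multiset.card_cons,
      Real.log_mul hz.ne' ih0.ne']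
    refine ⟨by positivity, ?_⟩
    have h1 := Hf_tangent h hz hw
    have h2 := Hf_nonneg h hz hz1 hz2
    set c := (-γ * w + β / w) / (1 - β * γ)
    have h3 : √(Hf β γ z) ≤ (Hf β γ z / s + s) / 2 := by
      have e := Real.sq_sqrt h2
      set r := √(Hf β γ z)
      rw [← e, le_div_iff₀ two_pos, ← sub_nonneg]
      have : r ^ 2 / s + s - r * 2 = (r - s) ^ 2 / s := by field_simp; ring
      rw [this]; positivity
    have h4 : Hf β γ z / s ≤ (Hf β γ w + c * (Real.log z - Real.log w)) / s := by gcongr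
    push_cast
    calc _ ≤ ((Hf β γ w + c * (Real.log z - Real.log w)) / s + s) / 2 +
          ((m.card * Hf β γ w + c * (Real.log m.prod - m.card * Real.log w)) / s +
            m.card * s) / 2 := by linarith
      _ = _ := by ring

/-- Replacing all messages by their geometric mean keeps the product and does not decrease the
sum of the `√H`, so the one-variable bound suffices. -/
lemma contr_step (h : Par β γ lam) {e : ℕ} {κ : ℝ} (hκ : 0 ≤ κ)
    (hα : ∀ z ∈ Set.Icc β (1 / γ), alph β γ lam e z ≤ κ) (m : Multiset ℝ)
    (hcard : m.card = e + 1) (hm : ∀ z ∈ m, β ≤ z ∧ z ≤ 1 / γ) :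
    hf β γ (lam * m.prod) * ((m.map fun z => √(Hf β γ z)).sum) ^ 2 ≤ κ := by
  have hγ := h.γ0
  have hβ := h.β0
  have hl := h.lam0
  by_cases h0 : (0 : ℝ) ∈ m
  · rw [Multiset.prod_eq_zero h0]; simpa [hf] using hκ
  have hm' : ∀ z ∈ m, 0 < z ∧ β ≤ z ∧ z ≤ 1 / γ := fun z hz =>
    ⟨lt_of_le_of_ne (hβ.trans (hm z hz).1) fun h1 => h0 (h1 ▸ hz), hm z hz⟩
  have hp := (sum_sqrt_le h one_pos one_pos m hm').1
  -- the geometric mean of the entries of `m`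
  obtain ⟨w, hw, hwp⟩ : ∃ w : ℝ, 0 < w ∧ w ^ (e + 1) = m.prod :=
    ⟨m.prod ^ (((e + 1 : ℕ) : ℝ)⁻¹), by positivity,
      Real.rpow_inv_natCast_pow hp.le (by omega)⟩
  have hlow : ∀ m : Multiset ℝ, (∀ z ∈ m, 0 < z ∧ β ≤ z ∧ z ≤ 1 / γ) →
      β ^ m.card ≤ m.prod ∧ m.prod ≤ (1 / γ) ^ m.card := by
    intro m
    induction m using Multiset.induction_on with
    | empty => simp
    | cons z m ih =>
      intro hm
      obtain ⟨i1, i2⟩ := ih fun y hy => hm y (Multiset.mem_cons_of_mem hy)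
      obtain ⟨z0, z1, z2⟩ := hm z (Multiset.mem_cons_self z m)
      have := (sum_sqrt_le h one_pos one_pos m fun y hy => hm y (Multiset.mem_cons_of_mem hy)).1
      rw [Multiset.prod_cons, Multiset.card_cons, pow_succ', pow_succ']
      constructor <;> gcongr
  obtain ⟨l1, l2⟩ := hlow m hm'
  rw [hcard, ← hwp] at l1 l2
  have w1 : β ≤ w := le_of_pow_le_pow_left₀ (by omega) hw.le l1
  have w2 : w ≤ 1 / γ := le_of_pow_le_pow_left₀ (by omega) (by positivity) l2
  have hH := Hf_nonneg h hw w1 w2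
  have hS : ((m.map fun z => √(Hf β γ z)).sum) ^ 2 ≤ ((e : ℝ) + 1) ^ 2 * Hf β γ w := by
    have hnn : 0 ≤ (m.map fun z => √(Hf β γ z)).sum :=
      Multiset.sum_nonneg fun x hx => by
        obtain ⟨z, _, rfl⟩ := Multiset.mem_map.1 hx
        positivity
    rw [← div_le_iff₀' (by positivity)]
    refine le_of_forall_gt_imp_ge_of_dense fun t ht => ?_
    have ht0 : 0 < t := lt_of_le_of_lt hH ht
    have hs : 0 < √t := Real.sqrt_pos.2 ht0
    have hst := Real.sq_sqrt ht0.le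
    have h1 := (sum_sqrt_le h hw hs m hm').2
    have h2 : Real.log m.prod = m.card * Real.log w := by rw [← hwp, Real.log_pow, hcard]
    rw [h2, sub_self, mul_zero, add_zero, hcard] at h1
    have h3 : ((e + 1 : ℕ) : ℝ) * Hf β γ w / √t ≤ ((e + 1 : ℕ) : ℝ) * √t := by
      rw [div_le_iff₀ hs, mul_assoc]
      gcongr
      rw [← sq, hst]; exact ht.le
    have h4 : (m.map fun z => √(Hf β γ z)).sum ≤ ((e : ℝ) + 1) * √t := by
      push_cast at h1 h3; linarith
    rw [div_le_iff₀' (by positivity)]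
    calc _ ≤ (((e : ℝ) + 1) * √t) ^ 2 := by gcongr
      _ = _ := by rw [mul_pow, hst]
  calc _ ≤ hf β γ (lam * m.prod) * (((e : ℝ) + 1) ^ 2 * Hf β γ w) := by
        gcongr
        exact hf_nonneg h (by positivity)
    _ = alph β γ lam e w := by rw [alph_eq h e hw, hwp]; ring
    _ ≤ κ := hα w ⟨w1, w2⟩

/-- Uniqueness gives a contraction rate for each number `d` of children separately; there are only
finitely many `d < Δ`. -/
lemma contr_exists (h : Par β γ lam) {δ : ℝ} (hδ : 0 < δ) (Δ : ℕ)
    (huniq : ∀ d : ℕ, 1 ≤ d → d < Δ → ∀ R : ℝ, 0 < R →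
      lam * ((β * R + 1) / (R + γ)) ^ d = R →
      |deriv (fun R : ℝ => lam * ((β * R + 1) / (R + γ)) ^ d) R| < 1 - δ) :
    ∃ κ, 0 ≤ κ ∧ κ < 1 ∧ Contr β γ lam Δ κ := by
  induction Δ with
  | zero => exact ⟨0, le_rfl, one_pos, fun m hm => absurd hm (by omega)⟩
  | succ n ih =>
    obtain ⟨κ, k0, k1, hκ⟩ := ih fun d h1 h2 => huniq d h1 (by omega)
    rcases n with _ | e
    · refine ⟨0, le_rfl, one_pos, fun m hm _ => ?_⟩
      have : m = 0 := Multiset.card_eq_zero.1 (by omega)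
      simp [this]
    obtain ⟨x, hx, hfix⟩ := exists_fix h (e + 1)
    have hd := huniq (e + 1) (by omega) (by omega) x hx hfix
    rw [deriv_fix h (by omega) hx hfix] at hd
    obtain ⟨κ', k0', k1', hκ'⟩ := alph_lt h hx hfix (by linarith)
    refine ⟨max κ κ', le_max_of_le_left k0, max_lt k1 k1', fun m hm hz => ?_⟩
    rcases Nat.lt_succ_iff_lt_or_eq.1 hm with h1 | h1
    · exact (hκ m h1 hz).trans (le_max_left _ _)
    · exact (contr_step h k0' hκ' m h1 hz).trans (le_max_right _ _)

/-- Neither the spectral independence constant nor the marginal bound depends on the graph, so one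
constant serves all graphs. -/
theorem mixing (h : Par β γ lam) {δ : ℝ} (hδ : 0 < δ) (Δ : ℕ) (hΔ : 3 ≤ Δ)
    (huniq : ∀ d : ℕ, 1 ≤ d → d < Δ → ∀ R : ℝ, 0 < R →
      lam * ((β * R + 1) / (R + γ)) ^ d = R →
      |deriv (fun R : ℝ => lam * ((β * R + 1) / (R + γ)) ^ d) R| < 1 - δ) :
    ∃ C : ℝ, ∀ (V : Type) [Fintype V] [DecidableEq V]
      (G : SimpleGraph V) [DecidableRel G.Adj],
      2 ≤ Fintype.card V → (∀ v : V, G.degree v ≤ Δ) →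
      (mixingTime (twoSpinGibbs G β γ lam)
          (glauberMatrix (twoSpinGibbs G β γ lam)) (1 / 4) : ℝ) ≤
        C * (Fintype.card V : ℝ) * Real.log (Fintype.card V) := by
  obtain ⟨κ, k0, k1, hκ⟩ := contr_exists h hδ Δ huniq
  have hs : √κ < 1 := by rw [Real.sqrt_lt' one_pos]; simpa using k1
  have hη : 0 ≤ 1 + 1 / (1 - √κ) * (Δ : ℝ) := by
    have : 0 < 1 - √κ := by linarith
    positivity
  have hb := mbc_pos h Δ
  have hb1 := mbc_le_one h Δ
  set b := mbc β γ lam Δ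
  set η := 1 + 1 / (1 - √κ) * (Δ : ℝ)
  refine ⟨atC Δ b η * (1 + 2 * Real.log (16 * (Real.log (1 / b) + 1))) + 1,
    fun V _ _ G _ hV hdeg => ?_⟩
  have hZ : 0 < ∑ σ : V → Bool, wt β γ lam G 0 0 σ := by
    refine lt_of_lt_of_le (wt_zero_pos h G 0 0) (Finset.single_le_sum (f := wt β γ lam G 0 0)
      (fun σ _ => wt_nonneg h G 0 0 σ) (Finset.mem_univ _))
  set Z := ∑ σ : V → Bool, wt β γ lam G 0 0 σ with hZd
  have ha : 0 < Z⁻¹ := by positivity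
  have hq : twoSpinGibbs G β γ lam = fun σ => Z⁻¹ * wt β γ lam G 0 0 σ := by
    funext σ
    unfold twoSpinGibbs
    simp only [weight_eq h]
    rw [← hZd, div_eq_inv_mul]
  have hc : Cls Δ G 0 0 := by
    intro v
    have : nb G v = G.neighborFinset v := by ext u; simp [mem_nb]
    rw [this]
    simpa using hdeg v
  rw [hq]
  refine mixing_of_tensor (fun σ => mul_nonneg ha.le (wt_nonneg h G 0 0 σ)) ?_ hb hb1
    (gibbs_MB h k0 k1 hκ hc ha) ?_ (fun p hp => approx_tensor hp hdeg (by omega)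
      (gibbs_Fac G _) hb hb1 hη (gibbs_MB h k0 k1 hκ hc ha) (gibbs_SI h k0 k1 hκ hc ha)
      (gibbs_ZP h G ha)) hV
  · rw [← Finset.mul_sum, inv_mul_cancel₀ hZ.ne']
  · unfold atC
    have : 0 ≤ (2 / (1 / (2 * (Δ : ℝ) ^ 2 * (48 / b ^ 2)))) ^ (⌈η * (4 / b)⌉₊ + 1) := by
      positivity
    linarith

end TwoSpin

/-- **Optimal mixing for antiferromagnetic two-spin systems in the tree uniqueness region.**
If the parameters `(β,γ,λ)` of an antiferromagnetic two-spin system are up-to-`Δ` unique with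
gap `δ`, then there is a constant `C = C(Δ,δ,β,γ,λ)` such that on every `n`-vertex graph of
maximum degree at most `Δ` the Glauber dynamics for the associated Gibbs distribution mixes
(to total variation distance `1/4`) within `C·n·log n` steps. -/
theorem two_spin_antiferro_optimal_mixing
    (Δ : ℕ) (hΔ : 3 ≤ Δ) (δ : ℝ) (hδ0 : 0 < δ) (hδ1 : δ < 1)
    (β γ lam : ℝ) (hβ0 : 0 ≤ β) (hβγ : β ≤ γ) (hγ : 0 < γ)
    (hanti : β * γ < 1) (hlam : 0 < lam)
    (huniq : ∀ d : ℕ, 1 ≤ d → d < Δ → ∀ R : ℝ, 0 < R →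
      lam * ((β * R + 1) / (R + γ)) ^ d = R →
      |deriv (fun R : ℝ => lam * ((β * R + 1) / (R + γ)) ^ d) R| < 1 - δ) :
    ∃ C : ℝ, ∀ (V : Type) [Fintype V] [DecidableEq V]
      (G : SimpleGraph V) [DecidableRel G.Adj],
      2 ≤ Fintype.card V → (∀ v : V, G.degree v ≤ Δ) →
      (mixingTime (twoSpinGibbs G β γ lam)
          (glauberMatrix (twoSpinGibbs G β γ lam)) (1 / 4) : ℝ) ≤
        C * (Fintype.card V : ℝ) * Real.log (Fintype.card V) := by
  exact TwoSpin.mixing ⟨hβ0, hβγ, hγ, hanti, hlam⟩ hδ0 Δ hΔ huniq
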